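/- arXiv:1207.1232 — 2 statements merged into one kernel-verified Lean document; each statement's English description precedes it below -/
import Mathlib

section
/- There exists a Schur function φ with φ(0) = 0 such that C_φ is a compact operator on 𝒟_* but C_φ does not belong to the Schatten class S_p(𝒟_*) for any p > 0. -/
/-!
The symbol is `φ(z) = 1 - exp (-g(-log (1 - z)))` with `g(L) = L / log (B + L)` and `B` a large
constant. On the half-strip `stripS`, which contains `-log (1 - z)` for `z` in the disk, `g'` has
positive real part, so `g` is injective (`injOn_gL`), and `g` has small imaginary part, so `φ` is
an injective self-map of the disk fixing `0`.

*Compactness.* `|Im g(L)| ≤ 4 / log (B + Re L)` tends to `0` as `Re L → ∞`, so near its only contact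
point `1` the region `φ(D)` is contained in arbitrarily thin angles (`psi_arg_small`). Changing
variables, the moments `∫_D |φ|^k |φ'|² dA = ∫_{φ(D)} |w|^k dA` are `o(1/k²)` (`moments_small`).
Expanding `f'` in its Taylor series, a Schur test for the kernel `1/(n+m+2)²` turns this into an
operator norm bound for `C_φ` minus its finite-rank truncations (`compact_of_moments`).

*No Schatten class.* Choose real points `z_j = 1 - exp (-L_j)` with `L_j` of polynomial growth in
`j`. The points `φ(z_j)` approach `1` so fast that the functions `f_j(w) = x_j w / (1 - φ(z_j) w)`,
`x_j = 1 - φ(z_j)`, have a nearly diagonal Gram matrix `M` (`gramM_off`). For `f = ∑ c_j f_j` this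
gives `‖f‖² ≤ 2 ‖c‖²`, and since `x_i f'(φ(z_i)) = (M c)_i` and
`(1 - z_i) φ'(z_i) = x_i g'(L_i)`, the sub-mean value property on the disjoint disks of radius
`(1 - z_i)/2` about `z_i` gives `‖f ∘ φ‖ ≥ κ ‖c‖ min g'(L_i)` (`eDNormSq_comp_ge`). As
`g'(L_i) ≥ 1 / (2 log (B + L_i))`, counting dimensions yields `a_n(C_φ) ≥ κ' / log n`
(`approxNum_ge'`), whose `p`-th powers are not summable for any `p`.
-/

open Complex MeasureTheory Metric Set Filter Topology
open scoped ENNReal NNReal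

noncomputable section

/-- Normalized area measure `dA = dx dy / π` on `ℂ`. -/
def nA : Measure ℂ := (ENNReal.ofReal Real.pi)⁻¹ • volume

/-- The open unit disk `D ⊆ ℂ`. -/
def uD : Set ℂ := Metric.ball (0 : ℂ) 1

/-- A Schur function: an analytic self-map of the open unit disk. -/
def IsSchur (φ : ℂ → ℂ) : Prop :=
  DifferentiableOn ℂ φ uD ∧ Set.MapsTo φ uD uD

/-- Squared norm of `f` in the weighted Dirichlet space `𝒟_α`, with value in `[0,∞]`:
`‖f‖_α² = |f(0)|² + (α+1) ∫_D |f′(z)|² (1−|z|²)^α dA(z)`. -/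
def eDNormSqW (α : ℝ) (f : ℂ → ℂ) : ℝ≥0∞ :=
  ENNReal.ofReal (‖f 0‖ ^ 2) +
    ∫⁻ z in uD, ENNReal.ofReal ((α + 1) * ‖deriv f z‖ ^ 2 * (1 - ‖z‖ ^ 2) ^ α) ∂nA

/-- Squared Dirichlet norm: `‖f‖² = |f(0)|² + ∫_D |f′(z)|² dA(z)`. -/
def eDNormSq (f : ℂ → ℂ) : ℝ≥0∞ := eDNormSqW 0 f

/-- Membership in the weighted Dirichlet space `𝒟_α`. -/
def MemDW (α : ℝ) (f : ℂ → ℂ) : Prop :=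
  DifferentiableOn ℂ f uD ∧ eDNormSqW α f < ⊤

/-- Membership in `𝒟_{α,*}`. -/
def MemDWStar (α : ℝ) (f : ℂ → ℂ) : Prop := MemDW α f ∧ f 0 = 0

/-- Membership in the Dirichlet space `𝒟`. -/
def MemD (f : ℂ → ℂ) : Prop := MemDW 0 f

/-- Membership in `𝒟_*`. -/
def MemDStar (f : ℂ → ℂ) : Prop := MemDWStar 0 f

/-- The composition operator `C_φ f = f ∘ φ`. -/
def compOp (φ : ℂ → ℂ) : (ℂ → ℂ) → ℂ → ℂ := fun f z => f (φ z)

/-- Operator norm of `T` with respect to the space `{f | Mem f}` with squared norm `NSq`: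
the least `C` such that `‖T f‖² ≤ C² ‖f‖²` for all `f` in the space (`⊤` if none). -/
def eOpNorm (Mem : (ℂ → ℂ) → Prop) (NSq : (ℂ → ℂ) → ℝ≥0∞)
    (T : (ℂ → ℂ) → ℂ → ℂ) : ℝ≥0∞ :=
  sInf {C : ℝ≥0∞ | ∀ f, Mem f → NSq (T f) ≤ C ^ 2 * NSq f}

/-- The `n`-th approximation number `a_n(T) = inf {‖T − R‖ : rank R < n}`. -/
def eApproxNum (Mem : (ℂ → ℂ) → Prop) (NSq : (ℂ → ℂ) → ℝ≥0∞)
    (T : (ℂ → ℂ) → ℂ → ℂ) (n : ℕ) : ℝ≥0∞ :=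
  sInf {c : ℝ≥0∞ | ∃ R : (ℂ → ℂ) →ₗ[ℂ] (ℂ → ℂ),
    Module.rank ℂ (LinearMap.range R) < (n : Cardinal) ∧
    c = eOpNorm Mem NSq (fun f z => T f z - R f z)}

/-- `T` is a bounded operator on the space `{f | Mem f}` with squared norm `NSq`. -/
def IsBoundedOpOn (Mem : (ℂ → ℂ) → Prop) (NSq : (ℂ → ℂ) → ℝ≥0∞)
    (T : (ℂ → ℂ) → ℂ → ℂ) : Prop :=
  (∀ f, Mem f → Mem (T f)) ∧ eOpNorm Mem NSq T ≠ ⊤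

/-- `T` is a compact operator on the space `{f | Mem f}`: it is bounded and its
approximation numbers tend to `0` (the standard characterization of compactness
for operators on a Hilbert space). -/
def IsCompactOpOn (Mem : (ℂ → ℂ) → Prop) (NSq : (ℂ → ℂ) → ℝ≥0∞)
    (T : (ℂ → ℂ) → ℂ → ℂ) : Prop :=
  IsBoundedOpOn Mem NSq T ∧
    Filter.Tendsto (fun n => eApproxNum Mem NSq T n) Filter.atTop (𝓝 0)

/-- `T` belongs to the Schatten class `S_p` of the space `{f | Mem f}`:
`Σ_{n≥1} a_n(T)^p < ∞`. -/
def MemSchattenOn (Mem : (ℂ → ℂ) → Prop) (NSq : (ℂ → ℂ) → ℝ≥0∞)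
    (T : (ℂ → ℂ) → ℂ → ℂ) (p : ℝ) : Prop :=
  IsBoundedOpOn Mem NSq T ∧
    ∑' n : ℕ, (eApproxNum Mem NSq T (n + 1)) ^ p ≠ ⊤

/-- `C_φ` belongs to the Schatten class `S_p(𝒟_*)`. -/
def MemSchattenD (p : ℝ) (φ : ℂ → ℂ) : Prop :=
  MemSchattenOn MemDStar eDNormSq (compOp φ) p

/-- `C_φ` is a Hilbert–Schmidt operator on `𝒟_*`: it is bounded and
`Σ_n ‖C_φ e_n‖² < ∞` for the orthonormal basis `e_n(z) = zⁿ/√n`, `n ≥ 1`, of `𝒟_*`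
(equivalently, for every orthonormal basis). -/
def HilbertSchmidtOnDStar (φ : ℂ → ℂ) : Prop :=
  IsBoundedOpOn MemDStar eDNormSq (compOp φ) ∧
    ∑' n : ℕ, eDNormSq (fun z => φ z ^ (n + 1) / (Real.sqrt (n + 1) : ℂ)) ≠ ⊤

/-- Squared Hardy norm `‖f‖² = sup_{0≤r<1} (1/2π) ∫_0^{2π} |f(r e^{it})|² dt`. -/
def eHardyNormSq (f : ℂ → ℂ) : ℝ≥0∞ :=
  ⨆ r : Set.Ico (0 : ℝ) 1,
    (∫⁻ t in Set.Ioc 0 (2 * Real.pi),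
      ENNReal.ofReal (‖f ((r : ℝ) * Complex.exp (t * Complex.I))‖ ^ 2)) /
        ENNReal.ofReal (2 * Real.pi)

/-- Membership in the Hardy space `H²`. -/
def MemHardy (f : ℂ → ℂ) : Prop := DifferentiableOn ℂ f uD ∧ eHardyNormSq f < ⊤

/-- Squared Bergman norm `‖f‖² = ∫_D |f|² dA`. -/
def eBergNormSq (f : ℂ → ℂ) : ℝ≥0∞ := ∫⁻ z in uD, ENNReal.ofReal (‖f z‖ ^ 2) ∂nA

/-- Membership in the Bergman space `𝔅²`. -/
def MemBerg (f : ℂ → ℂ) : Prop := DifferentiableOn ℂ f uD ∧ eBergNormSq f < ⊤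

/-- The logarithmic energy `I_μ = ∬ log(e/|z−w|) dμ(z) dμ(w)` of a measure on the circle. -/
def eEnergy (μ : Measure ℂ) : ℝ≥0∞ :=
  ∫⁻ z, ∫⁻ w, ENNReal.ofReal (Real.log (Real.exp 1 / dist z w)) ∂μ ∂μ

/-- A Borel set `E` (contained in the unit circle) has logarithmic capacity zero iff
`I_μ = ∞` for every Borel probability measure `μ` with compact support contained in `E`. -/
def HasLogCapacityZero (E : Set ℂ) : Prop :=
  ∀ μ : Measure ℂ, IsProbabilityMeasure μ →
    (∃ K, IsCompact K ∧ K ⊆ E ∧ μ Kᶜ = 0) → eEnergy μ = ⊤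

/-- The weighted Nevanlinna counting function `N_{φ,α}(w) = Σ_{z∈D, φ(z)=w} (1−|z|²)^α`. -/
def nevanlinnaE (φ : ℂ → ℂ) (α : ℝ) (w : ℂ) : ℝ≥0∞ :=
  ∑' z : {z : ℂ // z ∈ uD ∧ φ z = w}, ENNReal.ofReal ((1 - ‖(z : ℂ)‖ ^ 2) ^ α)

/-- The Carleson window `W(ξ,h)`. -/
def carlesonW (ξ : ℂ) (h : ℝ) : Set ℂ :=
  {w ∈ uD | 1 - ‖w‖ ≤ h ∧ |Complex.arg (w * (starRingEnd ℂ) ξ)| ≤ Real.pi * h}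

/-- Argument normalized to lie in `[0, 2π)`. -/
def argNN (z : ℂ) : ℝ :=
  if 0 ≤ Complex.arg z then Complex.arg z else Complex.arg z + 2 * Real.pi

/-- The Hastings–Luecking window `R_{n,j}`. -/
def HLwindow (n j : ℕ) : Set ℂ :=
  {z ∈ uD | 1 - ((2 : ℝ) ^ n)⁻¹ ≤ ‖z‖ ∧ ‖z‖ < 1 - ((2 : ℝ) ^ (n + 1))⁻¹ ∧
    2 * j * Real.pi / 2 ^ n ≤ argNN z ∧ argNN z < 2 * (j + 1) * Real.pi / 2 ^ n}

/-- `g` is an a.e. radial limit function of `φ`: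
for a.e. `t`, `φ(r e^{it}) → g(t)` as `r → 1⁻`. -/
def IsRadialLimit (φ : ℂ → ℂ) (g : ℝ → ℂ) : Prop :=
  ∀ᵐ t : ℝ, Filter.Tendsto (fun r : ℝ => φ ((r : ℂ) * Complex.exp (t * Complex.I)))
    (𝓝[<] (1 : ℝ)) (𝓝 (g t))

/-! ### Change of variables and Parseval identities -/

/-- Change of variables for an injective holomorphic map: its real Jacobian is `|ψ'|²`. -/
lemma lintegral_image_holo {ψ : ℂ → ℂ} {U : Set ℂ} (hU : IsOpen U)
    (hψ : DifferentiableOn ℂ ψ U) (hinj : InjOn ψ U) (h : ℂ → ℝ≥0∞) :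
    ∫⁻ w in ψ '' U, h w ∂nA
      = ∫⁻ z in U, ENNReal.ofReal (‖deriv ψ z‖ ^ 2) * h (ψ z) ∂nA := by
  have key : ∫⁻ w in ψ '' U, h w
      = ∫⁻ z in U, ENNReal.ofReal (‖deriv ψ z‖ ^ 2) * h (ψ z) := by
    rw [lintegral_image_eq_lintegral_abs_det_fderiv_mul volume hU.measurableSet
      (f' := fun z => (fderiv ℂ ψ z).restrictScalars ℝ) _ hinj]
    · refine setLIntegral_congr_fun hU.measurableSet (fun z hz => ?_)
      have : |((fderiv ℂ ψ z).restrictScalars ℝ).det| = ‖deriv ψ z‖ ^ 2 := by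
        simp [ContinuousLinearMap.det, LinearMap.det_restrictScalars,
          Algebra.norm_complex_apply, Complex.normSq_eq_norm_sq]
      simp only [this]
    · intro z hz
      exact ((hψ.differentiableAt (hU.mem_nhds hz)).hasFDerivAt.restrictScalars
        ℝ).hasFDerivWithinAt
  simp only [nA, Measure.restrict_smul, lintegral_smul_measure, key]

lemma summable_norm_coeff {b : ℕ → ℂ} {g : ℂ → ℂ}
    (hg : ∀ z ∈ uD, HasSum (fun n => b n * z ^ n) (g z)) {r : ℝ} (hr0 : 0 ≤ r) (hr : r < 1) :
    Summable (fun n => ‖b n‖ * r ^ n) := by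
  have h1 : (r : ℂ) ∈ uD := by simp [uD, abs_of_nonneg hr0, hr]
  have h2 := (hg r h1).summable.norm
  simpa [abs_of_nonneg hr0] using h2

lemma integral_exp_int (k : ℤ) :
    ∫ t in (-Real.pi)..Real.pi, Complex.exp (k * t * I) = if k = 0 then 2 * (Real.pi : ℂ) else 0 := by
  split_ifs with hk
  · subst hk
    simp; ring
  · have : ∀ t : ℝ, Complex.exp (k * t * I) = Complex.exp ((k * I) * t) := by
      intro t; congr 1; ring
    simp only [this]
    rw [integral_exp_mul_complex (by simp [hk])]
    have e : Complex.exp (k * I * (Real.pi : ℝ)) = Complex.exp (k * I * ((-Real.pi : ℝ) : ℂ)) := by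
      rw [Complex.exp_eq_exp_iff_exists_int]
      exact ⟨k, by push_cast; ring⟩
    rw [e]; simp

/-- Parseval's identity on a circle for an absolutely convergent power series. -/
lemma circle_parseval {c : ℕ → ℂ} (hc : Summable fun n => ‖c n‖) :
    HasSum (fun n => 2 * Real.pi * ‖c n‖ ^ 2)
      (∫ t in (-Real.pi)..Real.pi, ‖∑' n, c n * Complex.exp (t * I) ^ n‖ ^ 2) := by
  have hS : ∀ t : ℝ, Summable fun n => ‖c n * Complex.exp (t * I) ^ n‖ := by
    intro t; simpa [Complex.norm_exp_ofReal_mul_I] using hc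
  have hprod : Summable fun p : ℕ × ℕ => ‖c p.1‖ * ‖c p.2‖ :=
    hc.mul_of_nonneg hc (fun _ => norm_nonneg _) (fun _ => norm_nonneg _)
  have hE : ∀ (t : ℝ) (p : ℕ × ℕ), c p.1 * (starRingEnd ℂ) (c p.2) * Complex.exp (((p.1 : ℤ) - (p.2 : ℤ) : ℤ) * t * I)
      = (c p.1 * Complex.exp (t * I) ^ p.1) * (starRingEnd ℂ) (c p.2 * Complex.exp (t * I) ^ p.2) := by
    intro t p
    simp only [map_mul, map_natCast, ← Complex.exp_conj, conj_ofReal, conj_I, ← Complex.exp_nat_mul]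
    have : Complex.exp (((p.1 : ℤ) - (p.2 : ℤ) : ℤ) * t * I)
      = Complex.exp (p.1 * (t * I)) * Complex.exp (p.2 * (t * -I)) := by
      rw [← Complex.exp_add]; congr 1; push_cast; ring
    rw [this]; ring
  have hsum : ∀ t : ℝ, HasSum (fun p : ℕ × ℕ => c p.1 * (starRingEnd ℂ) (c p.2) *
      Complex.exp (((p.1 : ℤ) - (p.2 : ℤ) : ℤ) * t * I))
      (((‖∑' n, c n * Complex.exp (t * I) ^ n‖ ^ 2 : ℝ)) : ℂ) := by
    intro t
    have h1 := (hS t).of_norm.hasSum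
    have h2 := h1.map (starRingEnd ℂ) Complex.continuous_conj
    have h3 : Summable fun p : ℕ × ℕ => (c p.1 * Complex.exp (t * I) ^ p.1) * (starRingEnd ℂ) (c p.2 * Complex.exp (t * I) ^ p.2) := by
      refine Summable.of_norm ?_
      simpa [Complex.norm_exp_ofReal_mul_I] using hprod
    have h4 := h1.mul h2 h3
    rw [Complex.mul_conj, Complex.normSq_eq_norm_sq] at h4
    simpa only [hE, Function.comp_apply] using h4
  have hint : HasSum (fun p : ℕ × ℕ => ∫ t in (-Real.pi)..Real.pi, c p.1 * (starRingEnd ℂ) (c p.2) *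
      Complex.exp (((p.1 : ℤ) - (p.2 : ℤ) : ℤ) * t * I))
      (∫ t in (-Real.pi)..Real.pi, (((‖∑' n, c n * Complex.exp (t * I) ^ n‖ ^ 2 : ℝ)) : ℂ)) := by
    refine intervalIntegral.hasSum_integral_of_dominated_convergence
      (fun p _ => ‖c p.1‖ * ‖c p.2‖) ?_ ?_ ?_ ?_ ?_
    · intro p; exact (by fun_prop : Continuous _).aestronglyMeasurable
    · intro p
      refine Eventually.of_forall fun t _ => ?_
      rw [hE]; simp [Complex.norm_exp_ofReal_mul_I]
    · exact Eventually.of_forall fun t _ => hprod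
    · simp
    · exact Eventually.of_forall fun t _ => hsum t
  have hval : ∀ p : ℕ × ℕ, ∫ t in (-Real.pi)..Real.pi, c p.1 * (starRingEnd ℂ) (c p.2) *
      Complex.exp (((p.1 : ℤ) - (p.2 : ℤ) : ℤ) * t * I)
      = if p.1 = p.2 then ((2 * Real.pi * ‖c p.1‖ ^ 2 : ℝ) : ℂ) else 0 := by
    intro p
    rw [intervalIntegral.integral_const_mul, integral_exp_int]
    by_cases h : p.1 = p.2
    · simp only [h, sub_self, if_true, Complex.mul_conj, Complex.normSq_eq_norm_sq]
      push_cast; ring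
    · have : ((p.1 : ℤ) - (p.2 : ℤ)) ≠ 0 := by omega
      simp [h, this]
  simp only [hval] at hint
  rw [intervalIntegral.integral_ofReal] at hint
  have hinj : Function.Injective (fun n : ℕ => (n, n)) := fun a b h => (Prod.mk.inj h).1
  rw [← hinj.hasSum_iff] at hint
  · simpa [Function.comp_def, Complex.hasSum_ofReal] using (Complex.hasSum_ofReal.mp (by simpa [Function.comp_def] using hint))
  · rintro ⟨a, b⟩ hab
    have : a ≠ b := by rintro rfl; exact hab ⟨a, rfl⟩
    simp [this]

lemma lintegral_polar {F : ℂ → ℝ≥0∞} (hF : Measurable F) :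
    ∫⁻ z, F z ∂nA = (ENNReal.ofReal Real.pi)⁻¹ * ∫⁻ r in Ioi (0 : ℝ), ENNReal.ofReal r *
      ∫⁻ t in Ioo (-Real.pi) Real.pi, F (r * Complex.exp (t * I)) := by
  rw [nA, lintegral_smul_measure, ← Complex.lintegral_comp_polarCoord_symm, smul_eq_mul,
    polarCoord_target, Measure.volume_eq_prod, ← Measure.prod_restrict]
  congr 1
  have hG : Measurable fun p : ℝ × ℝ => F (p.1 * Complex.exp (p.2 * I)) :=
    hF.comp (by fun_prop)
  have hpt : ∀ p : ℝ × ℝ, Complex.polarCoord.symm p = p.1 * Complex.exp (p.2 * I) := by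
    intro p
    rw [Complex.polarCoord_symm_apply, Complex.exp_mul_I]; simp
  simp only [hpt, smul_eq_mul]
  rw [lintegral_prod _ (by fun_prop)]
  refine lintegral_congr fun r => ?_
  have hGr : Measurable fun t : ℝ => F (r * Complex.exp (t * I)) :=
    hG.comp (by fun_prop : Measurable fun t : ℝ => (r, t))
  simp only []
  rw [lintegral_const_mul _ hGr]

lemma measurable_indicator_sq {g : ℂ → ℂ} (hc : ContinuousOn g uD) :
    Measurable (uD.indicator fun z => ENNReal.ofReal (‖g z‖ ^ 2)) := by
  have ho : MeasurableSet uD := measurableSet_ball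
  classical
  rw [← piecewise_eq_indicator]
  exact ContinuousOn.measurable_piecewise
    (ENNReal.continuous_ofReal.comp_continuousOn (hc.norm.pow 2)) continuousOn_const ho

/-- Parseval's identity for the Bergman space: the monomials are orthogonal on the disk and
`‖zⁿ‖² = 1 / (n + 1)`. -/
lemma disk_parseval {b : ℕ → ℂ} {g : ℂ → ℂ} (hc : ContinuousOn g uD)
    (hg : ∀ z ∈ uD, HasSum (fun n => b n * z ^ n) (g z)) :
    ∫⁻ z in uD, ENNReal.ofReal (‖g z‖ ^ 2) ∂nA = ∑' n : ℕ, ENNReal.ofReal (‖b n‖ ^ 2 / (n + 1)) := by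
  have ho : MeasurableSet uD := measurableSet_ball
  rw [← lintegral_indicator ho, lintegral_polar (measurable_indicator_sq hc)]
  have hmem : ∀ (r t : ℝ), 0 < r → (((r : ℂ) * Complex.exp (t * I)) ∈ uD ↔ r < 1) := by
    intro r t hr
    simp [uD, Complex.norm_exp_ofReal_mul_I, abs_of_pos hr]
  have inner : ∀ r ∈ Ioi (0 : ℝ), ENNReal.ofReal r * ∫⁻ t in Ioo (-Real.pi) Real.pi,
      uD.indicator (fun z => ENNReal.ofReal (‖g z‖ ^ 2)) (r * Complex.exp (t * I))
      = (Ioo (0:ℝ) 1).indicator (fun r => ∑' n : ℕ, ENNReal.ofReal (2 * Real.pi * ‖b n‖ ^ 2 * r ^ (2 * n + 1))) r := by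
    intro r hr
    have hr' : (0 : ℝ) < r := hr
    by_cases h1 : r < 1
    · have hs := summable_norm_coeff hg hr'.le h1
      have hs' : Summable fun n => ‖b n * (r : ℂ) ^ n‖ := by
        simpa [abs_of_pos hr'] using hs
      have hP := circle_parseval hs'
      have hgt : ∀ t : ℝ, g (r * Complex.exp (t * I)) = ∑' n, b n * (r : ℂ) ^ n * Complex.exp (t * I) ^ n := by
        intro t
        rw [← (hg _ ((hmem r t hr').2 h1)).tsum_eq]
        congr 1; ext n; rw [mul_pow]; ring
      simp only [← hgt] at hP
      have hcont : Continuous fun t : ℝ => g (r * Complex.exp (t * I)) :=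
        hc.comp_continuous (by fun_prop) fun t => (hmem r t hr').2 h1
      have e1 : ∫⁻ t in Ioo (-Real.pi) Real.pi,
          uD.indicator (fun z => ENNReal.ofReal (‖g z‖ ^ 2)) (r * Complex.exp (t * I))
          = ENNReal.ofReal (∫ t in (-Real.pi)..Real.pi, ‖g (r * Complex.exp (t * I))‖ ^ 2) := by
        rw [intervalIntegral.integral_of_le (by linarith [Real.pi_pos]),
          integral_Ioc_eq_integral_Ioo, ofReal_integral_eq_lintegral_ofReal]
        · refine lintegral_congr fun t => ?_
          rw [indicator_of_mem ((hmem r t hr').2 h1)]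
        · exact ((hcont.norm.pow 2).integrableOn_Icc (a := -Real.pi) (b := Real.pi)).mono_set
            Ioo_subset_Icc_self
        · exact Eventually.of_forall fun t => by positivity
      rw [e1, ← hP.tsum_eq, indicator_of_mem (show r ∈ Ioo (0:ℝ) 1 from ⟨hr', h1⟩),
        ENNReal.ofReal_tsum_of_nonneg (fun n => by positivity) hP.summable, ← ENNReal.tsum_mul_left]
      refine tsum_congr fun n => ?_
      rw [← ENNReal.ofReal_mul hr'.le]
      congr 1
      rw [norm_mul, norm_pow, Complex.norm_real, Real.norm_eq_abs, abs_of_pos hr']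
      ring
    · rw [indicator_of_notMem (fun h => h1 h.2)]
      have : ∀ t : ℝ, uD.indicator (fun z => ENNReal.ofReal (‖g z‖ ^ 2)) (r * Complex.exp (t * I)) = 0 :=
        fun t => indicator_of_notMem (fun h => h1 ((hmem r t hr').1 h)) _
      simp only [this, lintegral_zero, mul_zero]
  rw [setLIntegral_congr_fun measurableSet_Ioi inner, lintegral_indicator measurableSet_Ioo,
    Measure.restrict_restrict measurableSet_Ioo, inter_eq_left.2 Ioo_subset_Ioi_self,
    lintegral_tsum (fun n => by fun_prop), ← ENNReal.tsum_mul_left]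
  refine tsum_congr fun n => ?_
  have hI : ∫⁻ r in Ioo (0:ℝ) 1, ENNReal.ofReal (2 * Real.pi * ‖b n‖ ^ 2 * r ^ (2 * n + 1))
      = ENNReal.ofReal (Real.pi * (‖b n‖ ^ 2 / (n + 1))) := by
    rw [← ofReal_integral_eq_lintegral_ofReal]
    · rw [← integral_Ioc_eq_integral_Ioo, ← intervalIntegral.integral_of_le zero_le_one,
        intervalIntegral.integral_const_mul, integral_pow]
      congr 1
      push_cast
      have : ((n:ℝ) + 1) ≠ 0 := by positivity
      field_simp
      simp
      ring
    · exact ((by fun_prop : Continuous fun r : ℝ => 2 * Real.pi * ‖b n‖ ^ 2 * r ^ (2 * n + 1)).integrableOn_Icc (a := 0) (b := 1)).mono_set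
            Ioo_subset_Icc_self
    · refine (ae_restrict_iff' measurableSet_Ioo).2 (Eventually.of_forall fun r hr => ?_)
      have := hr.1
      simp only [Pi.zero_apply]
      positivity
  rw [hI, ENNReal.ofReal_mul Real.pi_pos.le, ← mul_assoc, ENNReal.inv_mul_cancel, one_mul]
  · simp [Real.pi_pos]
  · exact ENNReal.ofReal_ne_top

/-! ### The Dirichlet norm in terms of Taylor coefficients -/

/-- The `n`-th Taylor coefficient of `f'` at the origin. -/
def dcoef (f : ℂ → ℂ) (n : ℕ) : ℂ := (n.factorial : ℂ)⁻¹ * iteratedDeriv n (deriv f) 0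

lemma isOpen_uD : IsOpen uD := isOpen_ball

lemma zero_mem_uD : (0 : ℂ) ∈ uD := by simp [uD]

lemma hasSum_dcoef {f : ℂ → ℂ} (hf : DifferentiableOn ℂ f uD) :
    ∀ z ∈ uD, HasSum (fun n => dcoef f n * z ^ n) (deriv f z) := by
  intro z hz
  have h := Complex.hasSum_taylorSeries_on_ball (c := 0) (r := 1) (f := deriv f)
    (hf.deriv isOpen_uD) hz
  refine (congrArg (fun u => HasSum u _) (funext fun n => ?_)).mpr h
  simp only [sub_zero, smul_eq_mul, dcoef]; ring

lemma eDNormSq_eq (f : ℂ → ℂ) : eDNormSq f = ENNReal.ofReal (‖f 0‖ ^ 2) +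
    ∫⁻ z in uD, ENNReal.ofReal (‖deriv f z‖ ^ 2) ∂nA := by
  simp [eDNormSq, eDNormSqW]

lemma lintegral_deriv_eq {f : ℂ → ℂ} (hf : DifferentiableOn ℂ f uD) :
    ∫⁻ z in uD, ENNReal.ofReal (‖deriv f z‖ ^ 2) ∂nA
      = ∑' n : ℕ, ENNReal.ofReal (‖dcoef f n‖ ^ 2 / (n + 1)) :=
  disk_parseval (hf.deriv isOpen_uD).continuousOn (hasSum_dcoef hf)

/-- Sub-mean value property of `|F|²` over a disk: keep only the constant term in Parseval's
identity. -/
lemma area_mean {F : ℂ → ℂ} {z₀ : ℂ} {r : ℝ} (hr : 0 < r) (hF : DifferentiableOn ℂ F (ball z₀ r)) :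
    ENNReal.ofReal (r ^ 2 * ‖F z₀‖ ^ 2) ≤ ∫⁻ z in ball z₀ r, ENNReal.ofReal (‖F z‖ ^ 2) ∂nA := by
  have hr' : (r : ℂ) ≠ 0 := by exact_mod_cast hr.ne'
  set ψ : ℂ → ℂ := fun ζ => z₀ + r * ζ with hψ
  have hmaps : MapsTo ψ uD (ball z₀ r) := by
    intro ζ hζ
    have : ‖ζ‖ < 1 := by simpa [uD] using hζ
    simp only [hψ, mem_ball, dist_eq_norm, add_sub_cancel_left, norm_mul, Complex.norm_real,
      Real.norm_eq_abs, abs_of_pos hr]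
    nlinarith
  have himg : ψ '' uD = ball z₀ r := by
    refine subset_antisymm hmaps.image_subset fun z hz => ?_
    refine ⟨(z - z₀) / r, ?_, ?_⟩
    · simp only [uD, mem_ball, dist_zero_right, norm_div, Complex.norm_real, Real.norm_eq_abs,
        abs_of_pos hr, div_lt_one hr]
      simpa [dist_eq_norm] using hz
    · simp only [hψ]; field_simp; ring
  have hd : ∀ ζ, HasDerivAt ψ r ζ := fun ζ => by
    simpa only [mul_one] using ((hasDerivAt_id' ζ).const_mul (r : ℂ)).const_add z₀
  have hdiff : DifferentiableOn ℂ ψ uD := fun ζ _ => (hd ζ).differentiableAt.differentiableWithinAt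
  have hinj : InjOn ψ uD := by
    intro a _ b _ hab
    simpa [hψ, hr'] using hab
  rw [← himg, lintegral_image_holo isOpen_uD hdiff hinj]
  simp only [(hd _).deriv]
  have hFψ : DifferentiableOn ℂ (fun ζ => r * F (ψ ζ)) uD := (hF.comp hdiff hmaps).const_mul _
  have hS : ∀ z ∈ uD, HasSum (fun n => ((n.factorial : ℂ)⁻¹ * iteratedDeriv n (fun ζ => r * F (ψ ζ)) 0) * z ^ n)
      (r * F (ψ z)) := by
    intro z hz
    have h := Complex.hasSum_taylorSeries_on_ball (c := 0) (r := 1) hFψ hz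
    refine (congrArg (fun u => HasSum u _) (funext fun n => ?_)).mpr h
    simp only [sub_zero, smul_eq_mul]; ring
  have hP := disk_parseval hFψ.continuousOn hS
  have e : ∀ z, ENNReal.ofReal (‖(r : ℂ)‖ ^ 2) * ENNReal.ofReal (‖F (ψ z)‖ ^ 2)
      = ENNReal.ofReal (‖r * F (ψ z)‖ ^ 2) := by
    intro z; rw [← ENNReal.ofReal_mul (by positivity), norm_mul, mul_pow]
  simp only [e, hP]
  refine le_trans (le_of_eq ?_) (ENNReal.le_tsum 0)
  simp [hψ, abs_of_pos hr, mul_pow]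

lemma ennreal_two_mul_le (a b : ℝ≥0∞) : 2 * a * b ≤ a ^ 2 + b ^ 2 := by
  rcases le_total a b with h | h
  · obtain ⟨d, rfl⟩ := exists_add_of_le h
    calc 2 * a * (a + d) ≤ 2 * a * (a + d) + d ^ 2 := le_self_add
      _ = a ^ 2 + (a + d) ^ 2 := by ring
  · obtain ⟨d, rfl⟩ := exists_add_of_le h
    calc 2 * (b + d) * b ≤ 2 * (b + d) * b + d ^ 2 := le_self_add
      _ = (b + d) ^ 2 + b ^ 2 := by ring

/-- Schur test for the kernel `1 / (n + m + 2)²`; the row sums telescope. -/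
lemma schur_test (A : ℕ → ℝ≥0∞) :
    ∑' n : ℕ, ∑' m : ℕ, A n * A m * ENNReal.ofReal (1 / ((n : ℝ) + m + 2) ^ 2)
      ≤ ∑' n : ℕ, A n ^ 2 * ENNReal.ofReal (1 / ((n : ℝ) + 1)) := by
  set κ : ℕ → ℕ → ℝ≥0∞ := fun n m => ENNReal.ofReal (1 / ((n : ℝ) + m + 2) ^ 2) with hκ
  have hsymm : ∀ n m, κ n m = κ m n := fun n m => by simp only [hκ]; congr 3; ring
  have hrow : ∀ n : ℕ, ∑' m : ℕ, κ n m ≤ ENNReal.ofReal (1 / ((n : ℝ) + 1)) := by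
    intro n
    refine ENNReal.tsum_le_of_sum_range_le fun M => ?_
    rw [← ENNReal.ofReal_sum_of_nonneg (fun _ _ => by positivity)]
    refine ENNReal.ofReal_le_ofReal ?_
    have : ∑ m ∈ Finset.range M, 1 / ((n : ℝ) + m + 2) ^ 2 ≤ 1 / ((n : ℝ) + 1) - 1 / ((n : ℝ) + M + 1) := by
      induction M with
      | zero => simp
      | succ M ih =>
        rw [Finset.sum_range_succ]
        have h0 : (0 : ℝ) < (n : ℝ) + M + 1 := by positivity
        have : 1 / ((n : ℝ) + M + 2) ^ 2 ≤ 1 / ((n : ℝ) + M + 1) - 1 / ((n : ℝ) + M + 2) := by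
          rw [div_sub_div _ _ h0.ne' (by positivity), div_le_div_iff₀ (by positivity) (by positivity)]
          nlinarith
        push_cast
        have e : (n : ℝ) + (M + 1) + 1 = n + M + 2 := by ring
        rw [e]; linarith
    refine this.trans ?_
    have : (0 : ℝ) ≤ 1 / ((n : ℝ) + M + 1) := by positivity
    linarith
  have hpt : ∀ n m, 2 * (A n * A m * κ n m) ≤ A n ^ 2 * κ n m + A m ^ 2 * κ n m := by
    intro n m
    rw [← add_mul, ← mul_assoc]
    gcongr
    rw [← mul_assoc]
    exact ennreal_two_mul_le (A n) (A m)
  have h2 : 2 * ∑' n, ∑' m, A n * A m * κ n m ≤ 2 * ∑' n, A n ^ 2 * ∑' m, κ n m := by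
    calc 2 * ∑' n, ∑' m, A n * A m * κ n m = ∑' n, ∑' m, 2 * (A n * A m * κ n m) := by
          simp only [ENNReal.tsum_mul_left]
      _ ≤ ∑' n, ∑' m, (A n ^ 2 * κ n m + A m ^ 2 * κ n m) :=
          ENNReal.tsum_le_tsum fun n => ENNReal.tsum_le_tsum fun m => hpt n m
      _ = ∑' n, ∑' m, A n ^ 2 * κ n m + ∑' n, ∑' m, A m ^ 2 * κ n m := by
          simp only [ENNReal.tsum_add]
      _ = 2 * ∑' n, A n ^ 2 * ∑' m, κ n m := by
          rw [ENNReal.tsum_comm (f := fun n m => A m ^ 2 * κ n m), two_mul]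
          simp only [ENNReal.tsum_mul_left, hsymm]
  have h3 := (ENNReal.mul_le_mul_iff_right two_ne_zero ENNReal.ofNat_ne_top).1 h2
  refine h3.trans (ENNReal.tsum_le_tsum fun n => ?_)
  gcongr
  exact hrow n

/-! ### A compactness criterion -/

/-- The Taylor coefficients are linear on functions holomorphic on the disk, so they extend
(algebraically) to linear functionals on all functions. -/
lemma exists_dcoef_ext (n : ℕ) : ∃ l : (ℂ → ℂ) →ₗ[ℂ] ℂ,
    ∀ f, DifferentiableOn ℂ f uD → l f = dcoef f n := by
  have hnhds : uD ∈ 𝓝 (0 : ℂ) := isOpen_uD.mem_nhds zero_mem_uD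
  have hcd : ∀ f : ℂ → ℂ, DifferentiableOn ℂ f uD → ContDiffAt ℂ n (deriv f) 0 := fun f hf =>
    ((hf.deriv isOpen_uD).analyticAt hnhds).contDiffAt
  let S : Submodule ℂ (ℂ → ℂ) :=
    { carrier := {f | DifferentiableOn ℂ f uD}
      add_mem' := fun {a b} ha hb => DifferentiableOn.add ha hb
      zero_mem' := differentiableOn_const (0 : ℂ)
      smul_mem' := fun c f hf => DifferentiableOn.const_smul hf c }
  let l₀ : S →ₗ[ℂ] ℂ :=
    { toFun := fun f => dcoef f.1 n
      map_add' := by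
        rintro ⟨f, hf⟩ ⟨g, hg⟩
        have hf' : DifferentiableOn ℂ f uD := hf
        have hg' : DifferentiableOn ℂ g uD := hg
        have he : deriv (f + g) =ᶠ[𝓝 0] deriv f + deriv g := by
          filter_upwards [hnhds] with z hz
          exact deriv_add (hf'.differentiableAt (isOpen_uD.mem_nhds hz))
            (hg'.differentiableAt (isOpen_uD.mem_nhds hz))
        simp only [dcoef, AddMemClass.mk_add_mk]
        rw [he.iteratedDeriv_eq, iteratedDeriv_add (hcd f hf) (hcd g hg), mul_add]
      map_smul' := by
        rintro c ⟨f, hf⟩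
        have hf' : DifferentiableOn ℂ f uD := hf
        have he : deriv (c • f) =ᶠ[𝓝 0] c • deriv f := by
          filter_upwards [hnhds] with z hz
          exact deriv_const_smul c (hf'.differentiableAt (isOpen_uD.mem_nhds hz))
        simp only [dcoef, SetLike.mk_smul_mk, RingHom.id_apply, smul_eq_mul]
        rw [he.iteratedDeriv_eq, iteratedDeriv_const_smul (hcd f hf) c]
        simp only [smul_eq_mul]; ring }
  obtain ⟨l, hl⟩ := LinearMap.exists_extend l₀
  exact ⟨l, fun f hf => by
    have := LinearMap.congr_fun hl (⟨f, hf⟩ : S)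
    exact this⟩

/-- The finite-rank operator `f ↦ (P_N f) ∘ φ`, where `P_N` truncates the Taylor series. -/
lemma exists_finite_rank (φ : ℂ → ℂ) (N : ℕ) : ∃ R : (ℂ → ℂ) →ₗ[ℂ] (ℂ → ℂ),
    Module.rank ℂ (LinearMap.range R) ≤ (N : Cardinal) ∧
    ∀ f, DifferentiableOn ℂ f uD →
      R f = fun z => ∑ n ∈ Finset.range N, dcoef f n * (φ z ^ (n + 1) / (n + 1)) := by
  choose l hl using exists_dcoef_ext
  let B : (ℂ → ℂ) →ₗ[ℂ] (Fin N → ℂ) := LinearMap.pi fun i => l i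
  let A : (Fin N → ℂ) →ₗ[ℂ] (ℂ → ℂ) :=
    Fintype.linearCombination ℂ (fun i : Fin N => fun z => φ z ^ ((i : ℕ) + 1) / ((i : ℕ) + 1))
  refine ⟨A ∘ₗ B, ?_, fun f hf => ?_⟩
  · refine (Submodule.rank_mono (LinearMap.range_comp_le_range B A)).trans ?_
    refine (rank_range_le A).trans ?_
    simp
  · funext z
    simp only [A, B, LinearMap.comp_apply, Fintype.linearCombination_apply, LinearMap.pi_apply,
      Finset.sum_apply, Pi.smul_apply, smul_eq_mul, hl _ f hf]
    exact Fin.sum_univ_eq_sum_range (fun n => dcoef f n * (φ z ^ (n + 1) / ((n : ℂ) + 1))) N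

/-- If the moments `∫_D |φ|^k |φ'|² dA` are at most `ε / (k + 2)²` for `k ≥ N`, then the
difference between `C_φ` and its truncation `f ↦ (P_N f) ∘ φ` has norm at most `√ε`. -/
lemma truncation_bound {φ : ℂ → ℂ} (hφ : IsSchur φ) (hφ0 : φ 0 = 0) {ε : ℝ≥0∞} {N : ℕ}
    (hK : ∀ k ≥ N, ∫⁻ z in uD, ‖φ z‖ₑ ^ k * ‖deriv φ z‖ₑ ^ 2 ∂nA
      ≤ ε * ENNReal.ofReal (1 / ((k : ℝ) + 2) ^ 2))
    {f : ℂ → ℂ} (hf : MemDStar f) :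
    eDNormSq (fun z => f (φ z) - ∑ n ∈ Finset.range N, dcoef f n * (φ z ^ (n + 1) / (n + 1)))
      ≤ ε * eDNormSq f := by
  have hfd : DifferentiableOn ℂ f uD := hf.1.1
  set A : ℕ → ℝ≥0∞ := fun n => if n < N then 0 else ‖dcoef f n‖ₑ with hA
  have hderiv : ∀ z ∈ uD, deriv (fun z => f (φ z) -
      ∑ n ∈ Finset.range N, dcoef f n * (φ z ^ (n + 1) / (n + 1))) z
      = (deriv f (φ z) - ∑ n ∈ Finset.range N, dcoef f n * φ z ^ n) * deriv φ z := by
    intro z hz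
    have h1 := (hφ.1.differentiableAt (isOpen_uD.mem_nhds hz)).hasDerivAt
    have h2 := (hfd.differentiableAt (isOpen_uD.mem_nhds (hφ.2 hz))).hasDerivAt
    have h3 : ∀ n ∈ Finset.range N, HasDerivAt (fun z => dcoef f n * (φ z ^ (n + 1) / (n + 1)))
        (dcoef f n * φ z ^ n * deriv φ z) z := by
      intro n _
      have := ((h1.pow (n + 1)).div_const ((n : ℂ) + 1)).const_mul (dcoef f n)
      have h0 : (n : ℂ) + 1 ≠ 0 := Nat.cast_add_one_ne_zero n
      refine HasDerivAt.congr_deriv this ?_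
      rw [Nat.add_sub_cancel, Nat.cast_succ]
      field_simp
    have h4 := (h2.comp z h1).sub (HasDerivAt.fun_sum h3)
    rw [sub_mul, Finset.sum_mul]
    exact h4.deriv
  have hbound : ∀ z ∈ uD, ‖deriv f (φ z) - ∑ n ∈ Finset.range N, dcoef f n * φ z ^ n‖ₑ
      ≤ ∑' n, A n * ‖φ z‖ₑ ^ n := by
    intro z hz
    have hs := hasSum_dcoef hfd (φ z) (hφ.2 hz)
    have e : deriv f (φ z) - ∑ n ∈ Finset.range N, dcoef f n * φ z ^ n
        = ∑' n, dcoef f (n + N) * φ z ^ (n + N) := by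
      rw [← hs.tsum_eq, ← hs.summable.sum_add_tsum_nat_add N]; ring
    rw [e]
    refine enorm_tsum_le_tsum_enorm.trans ?_
    have h5 : ∀ n, ‖dcoef f (n + N) * φ z ^ (n + N)‖ₑ = A (n + N) * ‖φ z‖ₑ ^ (n + N) := by
      intro n; simp [hA, enorm_mul, enorm_pow]
    simp only [h5]
    exact ENNReal.tsum_comp_le_tsum_of_injective (add_left_injective N) (fun n => A n * ‖φ z‖ₑ ^ n)
  have hm : AEMeasurable (fun z => ‖φ z‖ₑ) (nA.restrict uD) :=
    (hφ.1.continuousOn.aemeasurable isOpen_uD.measurableSet).enorm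
  have hm' : AEMeasurable (fun z => ‖deriv φ z‖ₑ) (nA.restrict uD) :=
    ((hφ.1.deriv isOpen_uD).continuousOn.aemeasurable isOpen_uD.measurableSet).enorm
  have hzero : f (φ 0) - ∑ n ∈ Finset.range N, dcoef f n * (φ 0 ^ (n + 1) / (n + 1)) = 0 := by
    simp [hφ0, hf.2]
  rw [eDNormSq_eq, eDNormSq_eq]
  simp only [hzero, hf.2, norm_zero, ne_eq, OfNat.ofNat_ne_zero, not_false_eq_true, zero_pow,
    ENNReal.ofReal_zero, zero_add]
  rw [lintegral_deriv_eq hfd]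
  calc ∫⁻ z in uD, ENNReal.ofReal (‖deriv (fun z => f (φ z) -
        ∑ n ∈ Finset.range N, dcoef f n * (φ z ^ (n + 1) / (n + 1))) z‖ ^ 2) ∂nA
      ≤ ∫⁻ z in uD, ∑' n, ∑' m, A n * A m * (‖φ z‖ₑ ^ (n + m) * ‖deriv φ z‖ₑ ^ 2) ∂nA := by
        refine setLIntegral_mono' isOpen_uD.measurableSet fun z hz => ?_
        rw [hderiv z hz, ENNReal.ofReal_pow (norm_nonneg _), ofReal_norm, enorm_mul, mul_pow]
        calc _ ≤ (∑' n, A n * ‖φ z‖ₑ ^ n) ^ 2 * ‖deriv φ z‖ₑ ^ 2 := by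
              gcongr; exact hbound z hz
          _ = _ := by
              rw [sq (∑' n, _), ← ENNReal.tsum_mul_right, ← ENNReal.tsum_mul_right]
              refine tsum_congr fun n => ?_
              rw [← ENNReal.tsum_mul_left, ← ENNReal.tsum_mul_right]
              refine tsum_congr fun m => ?_
              rw [pow_add]; ring
    _ = ∑' n, ∑' m, A n * A m * ∫⁻ z in uD, ‖φ z‖ₑ ^ (n + m) * ‖deriv φ z‖ₑ ^ 2 ∂nA := by
        rw [lintegral_tsum fun n => AEMeasurable.tsum fun m => by fun_prop]
        refine tsum_congr fun n => ?_
        rw [lintegral_tsum fun m => by fun_prop]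
        refine tsum_congr fun m => ?_
        rw [lintegral_const_mul'' _ (by fun_prop)]
    _ ≤ ∑' n : ℕ, ∑' m : ℕ, ε * (A n * A m * ENNReal.ofReal (1 / ((n : ℝ) + m + 2) ^ 2)) := by
        refine ENNReal.tsum_le_tsum fun n => ENNReal.tsum_le_tsum fun m => ?_
        by_cases hn : n < N
        · simp [hA, hn]
        · have := hK (n + m) (by omega)
          push_cast at this
          calc _ ≤ A n * A m * (ε * ENNReal.ofReal (1 / ((n : ℝ) + m + 2) ^ 2)) := by gcongr
            _ = _ := by ring
    _ = ε * ∑' n : ℕ, ∑' m : ℕ, A n * A m * ENNReal.ofReal (1 / ((n : ℝ) + m + 2) ^ 2) := by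
        simp only [ENNReal.tsum_mul_left]
    _ ≤ ε * ∑' n : ℕ, A n ^ 2 * ENNReal.ofReal (1 / ((n : ℝ) + 1)) := by
        exact mul_le_mul' le_rfl (schur_test A)
    _ ≤ ε * ∑' n : ℕ, ENNReal.ofReal (‖dcoef f n‖ ^ 2 / (n + 1)) := by
        refine mul_le_mul' le_rfl (ENNReal.tsum_le_tsum fun n => ?_)
        rw [div_eq_mul_one_div (‖dcoef f n‖ ^ 2), ENNReal.ofReal_mul (by positivity),
          ENNReal.ofReal_pow (norm_nonneg _), ofReal_norm]
        gcongr
        simp only [hA]; split_ifs <;> simp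

/-- An injective Schur function whose moments `∫_D |φ|^k |φ'|² dA` are `o(1/k²)` induces a compact
composition operator. -/
lemma compact_of_moments {φ : ℂ → ℂ} (hφ : IsSchur φ) (hφ0 : φ 0 = 0) (hinj : InjOn φ uD)
    (hK : ∀ ε : ℝ, 0 < ε → ∃ N : ℕ, ∀ k ≥ N, ∫⁻ z in uD, ‖φ z‖ₑ ^ k * ‖deriv φ z‖ₑ ^ 2 ∂nA
      ≤ ENNReal.ofReal ε * ENNReal.ofReal (1 / ((k : ℝ) + 2) ^ 2)) :
    IsCompactOpOn MemDStar eDNormSq (compOp φ) := by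
  have hcontr : ∀ f, MemDStar f → eDNormSq (compOp φ f) ≤ eDNormSq f := by
    intro f hf
    rw [eDNormSq_eq, eDNormSq_eq]
    simp only [compOp, hφ0]
    refine add_le_add le_rfl ?_
    calc ∫⁻ z in uD, ENNReal.ofReal (‖deriv (fun z => f (φ z)) z‖ ^ 2) ∂nA
        = ∫⁻ z in uD, ENNReal.ofReal (‖deriv φ z‖ ^ 2) * ENNReal.ofReal (‖deriv f (φ z)‖ ^ 2) ∂nA := by
          refine setLIntegral_congr_fun isOpen_uD.measurableSet fun z hz => ?_
          have h1 := (hφ.1.differentiableAt (isOpen_uD.mem_nhds hz)).hasDerivAt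
          have h2 := (hf.1.1.differentiableAt (isOpen_uD.mem_nhds (hφ.2 hz))).hasDerivAt
          have h3 : deriv (fun z => f (φ z)) z = deriv f (φ z) * deriv φ z := (h2.comp z h1).deriv
          simp only [h3]
          rw [← ENNReal.ofReal_mul (by positivity), norm_mul, mul_pow, mul_comm]
      _ = ∫⁻ w in φ '' uD, ENNReal.ofReal (‖deriv f w‖ ^ 2) ∂nA :=
          (lintegral_image_holo isOpen_uD hφ.1 hinj (fun w => ENNReal.ofReal (‖deriv f w‖ ^ 2))).symm
      _ ≤ ∫⁻ w in uD, ENNReal.ofReal (‖deriv f w‖ ^ 2) ∂nA :=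
          lintegral_mono_set hφ.2.image_subset
  refine ⟨⟨fun f hf => ⟨⟨hf.1.1.comp hφ.1 hφ.2, (hcontr f hf).trans_lt hf.1.2⟩, ?_⟩, ?_⟩, ?_⟩
  · simp [compOp, hφ0, hf.2]
  · refine ne_top_of_le_ne_top ENNReal.one_ne_top (sInf_le fun f hf => ?_)
    simpa using hcontr f hf
  · rw [ENNReal.tendsto_atTop_zero]
    intro ε hε
    obtain ⟨e, he0, he⟩ : ∃ e : ℝ, 0 < e ∧ ENNReal.ofReal e ≤ ε := by
      obtain ⟨q, hq0, hq⟩ := ENNReal.lt_iff_exists_nnreal_btwn.1 hε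
      exact ⟨q, by exact_mod_cast hq0, by simpa using hq.le⟩
    obtain ⟨N, hN⟩ := hK (e ^ 2) (by positivity)
    obtain ⟨R, hR, hRf⟩ := exists_finite_rank φ N
    refine ⟨N + 1, fun n hn => le_trans (sInf_le ⟨R, hR.trans_lt ?_, rfl⟩) (le_trans ?_ he)⟩
    · exact_mod_cast hn
    · refine sInf_le fun f hf => ?_
      simp only [hRf f hf.1.1, compOp]
      rw [← ENNReal.ofReal_pow he0.le]
      exact truncation_bound hφ hφ0 hN hf

/-! ### The auxiliary map `g(L) = L / log (B + L)` on a strip -/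

/-- The constant `B`, chosen so that `log |B + L| > 10` on the strip `stripS`. -/
def cB : ℝ := 1 + Real.exp 10

/-- A half-strip containing `-log (1 - z)` for every `z` in the disk. -/
def stripS : Set ℂ := {L | -1 < L.re ∧ |L.im| < 2}

/-- The map `L ↦ L / log (B + L)`. -/
def gL (L : ℂ) : ℂ := L / Complex.log (cB + L)

/-- The derivative of `gL` on the strip. -/
def gLd (L : ℂ) : ℂ := 1 / Complex.log (cB + L) - L / ((cB + L) * Complex.log (cB + L) ^ 2)

lemma cB_pos : 0 < cB := by unfold cB; positivity

lemma ten_lt_log {x : ℝ} (hx : -1 < x) : 10 < Real.log (cB + x) := by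
  rw [Real.lt_log_iff_exp_lt] <;> unfold cB <;> linarith [Real.exp_pos 10]

lemma cB_add_re_pos {L : ℂ} (hL : -1 < L.re) : 0 < cB + L.re := by
  unfold cB; linarith [Real.exp_pos 10]

lemma mem_slit {L : ℂ} (hL : -1 < L.re) : (cB : ℂ) + L ∈ slitPlane :=
  Or.inl (by simpa using cB_add_re_pos hL)

lemma log_le_re {L : ℂ} (hL : -1 < L.re) :
    Real.log (cB + L.re) ≤ (Complex.log (cB + L)).re := by
  rw [Complex.log_re]
  refine Real.log_le_log (cB_add_re_pos hL) ?_
  have := Complex.re_le_norm ((cB : ℂ) + L)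
  simpa using this

lemma log_le_norm {L : ℂ} (hL : -1 < L.re) :
    Real.log (cB + L.re) ≤ ‖Complex.log (cB + L)‖ :=
  (log_le_re hL).trans (Complex.re_le_norm _)

lemma norm_le_cB_add {L : ℂ} (hL : -1 < L.re) : ‖L‖ ≤ ‖(cB : ℂ) + L‖ := by
  rw [Complex.norm_def, Complex.norm_def]
  apply Real.sqrt_le_sqrt
  simp only [Complex.normSq_apply, add_re, ofReal_re, add_im, ofReal_im, zero_add]
  have hB : 2 ≤ cB := by unfold cB; linarith [Real.add_one_le_exp (10 : ℝ)]
  nlinarith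

lemma norm_second_le {L : ℂ} (hL : -1 < L.re) :
    ‖L / ((cB + L) * Complex.log (cB + L) ^ 2)‖ ≤ 1 / ‖Complex.log (cB + L)‖ ^ 2 := by
  have h1 := norm_le_cB_add hL
  have h2 : 0 < ‖(cB : ℂ) + L‖ := norm_pos_iff.2 (slitPlane_ne_zero (mem_slit hL))
  have h3 : 0 < ‖Complex.log (cB + L)‖ := by linarith [ten_lt_log hL, log_le_norm hL]
  rw [norm_div, norm_mul, norm_pow, div_le_div_iff₀ (by positivity) (by positivity)]
  nlinarith [sq_nonneg ‖Complex.log (cB + L)‖]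

lemma hasDerivAt_gL {L : ℂ} (hL : -1 < L.re) : HasDerivAt gL (gLd L) L := by
  have h0 : Complex.log (cB + L) ≠ 0 := by
    rw [← norm_pos_iff]; linarith [ten_lt_log hL, log_le_norm hL]
  have h1 : (cB : ℂ) + L ≠ 0 := slitPlane_ne_zero (mem_slit hL)
  have h2 : HasDerivAt (fun L : ℂ => Complex.log (cB + L)) (1 / (cB + L)) L :=
    ((hasDerivAt_id L).const_add (cB : ℂ)).clog (mem_slit hL)
  have h3 := (hasDerivAt_id L).div h2 h0
  refine HasDerivAt.congr_deriv h3 ?_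
  unfold gLd
  simp only [id]
  field_simp

lemma gLd_re_pos {L : ℂ} (hL : -1 < L.re) : 0 < (gLd L).re := by
  have h1 := norm_second_le hL
  have h2 := log_le_re hL
  have h3 := ten_lt_log hL
  have h4 : 0 < ‖Complex.log (cB + L)‖ := by linarith [log_le_norm hL]
  have h5 : (1 / Complex.log (cB + L)).re
      = (Complex.log (cB + L)).re / ‖Complex.log (cB + L)‖ ^ 2 := by
    rw [one_div, Complex.inv_re, Complex.normSq_eq_norm_sq]
  have h6 := (Complex.re_le_norm (L / ((cB + L) * Complex.log (cB + L) ^ 2))).trans h1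
  have h7 : 1 / ‖Complex.log (cB + L)‖ ^ 2
      < (Complex.log (cB + L)).re / ‖Complex.log (cB + L)‖ ^ 2 := by
    gcongr; linarith
  unfold gLd
  rw [Complex.sub_re, h5]
  linarith

lemma norm_gLd_le {L : ℂ} (hL : -1 < L.re) : ‖gLd L‖ ≤ 2 / Real.log (cB + L.re) := by
  have h1 := norm_second_le hL
  have h2 := log_le_norm hL
  have h3 := ten_lt_log hL
  set m := Real.log (cB + L.re)
  set n := ‖Complex.log (cB + L)‖
  have h4 : ‖1 / Complex.log (cB + L)‖ ≤ 1 / m := by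
    rw [norm_div, norm_one]
    exact one_div_le_one_div_of_le (by linarith) h2
  have h5 : 1 / n ^ 2 ≤ 1 / m :=
    one_div_le_one_div_of_le (by linarith) (by nlinarith)
  calc ‖gLd L‖ ≤ ‖1 / Complex.log (cB + L)‖ + ‖L / ((cB + L) * Complex.log (cB + L) ^ 2)‖ :=
        norm_sub_le _ _
    _ ≤ 1 / m + 1 / m := by linarith
    _ = 2 / m := by ring

lemma convex_stripS : Convex ℝ stripS := by
  have h : stripS = {L : ℂ | -1 < L.re} ∩ ({L : ℂ | L.im < 2} ∩ {L : ℂ | -2 < L.im}) := by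
    ext L; simp only [stripS, mem_ofPred_eq, mem_inter_iff, abs_lt]; tauto
  rw [h]
  exact (convex_halfSpace_re_gt _).inter ((convex_halfSpace_im_lt _).inter (convex_halfSpace_im_gt _))

/-- A holomorphic function whose derivative has positive real part on a convex set is injective
there; this is applied to `gL`. -/
lemma injOn_gL : InjOn gL stripS := by
  intro a ha b hb hab
  by_contra hne
  have hba : b - a ≠ 0 := sub_ne_zero.2 (Ne.symm hne)
  let p : ℝ → ℂ := fun t => a + t * (b - a)
  have hp : ∀ t ∈ Icc (0 : ℝ) 1, p t ∈ stripS := fun t ht => by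
    have := convex_stripS.add_smul_sub_mem ha hb ht
    simpa [p] using this
  have hd : ∀ t ∈ Icc (0 : ℝ) 1, HasDerivAt (fun t : ℝ => (gL (p t) / (b - a)).re)
      (gLd (p t)).re t := by
    intro t ht
    have h1 : HasDerivAt p (b - a) t := by
      have := ((hasDerivAt_id t).ofReal_comp.mul_const (b - a)).const_add a
      simpa [p] using this
    have h2 := ((hasDerivAt_gL (hp t ht).1).comp t h1).div_const (b - a)
    rw [mul_div_assoc, div_self hba, mul_one] at h2
    have h3 := Complex.reCLM.hasFDerivAt.comp_hasDerivAt t h2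
    exact h3
  have hmono : StrictMonoOn (fun t : ℝ => (gL (p t) / (b - a)).re) (Icc 0 1) := by
    refine strictMonoOn_of_deriv_pos (convex_Icc 0 1)
      (fun t ht => (hd t ht).continuousAt.continuousWithinAt) fun t ht => ?_
    rw [interior_Icc] at ht
    rw [(hd t (Ioo_subset_Icc_self ht)).deriv]
    exact gLd_re_pos (hp t (Ioo_subset_Icc_self ht)).1
  have := hmono (left_mem_Icc.2 zero_le_one) (right_mem_Icc.2 zero_le_one) zero_lt_one
  simp [p, hab] at this

lemma gL_ofReal {x : ℝ} (hx : -1 < x) : gL x = ((x / Real.log (cB + x) : ℝ) : ℂ) := by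
  have h : 0 < cB + x := by simpa using cB_add_re_pos (L := (x : ℂ)) (by simpa using hx)
  unfold gL
  rw [← Complex.ofReal_add, ← Complex.ofReal_log h.le, Complex.ofReal_div]

/-- Vertical oscillation of `gL`: it decays like `1 / log Re L`. -/
lemma gL_sub_le {L : ℂ} (hL : L ∈ stripS) :
    ‖gL L - gL (L.re : ℂ)‖ ≤ 4 / Real.log (cB + L.re) := by
  have hm : 0 < Real.log (cB + L.re) := by linarith [ten_lt_log hL.1]
  have hconv : Convex ℝ {w : ℂ | w.re = L.re} := by
    intro u hu v hv s t _ _ hst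
    simp only [mem_ofPred_eq] at hu hv ⊢
    simp [hu, hv, ← add_mul, hst]
  have := hconv.norm_image_sub_le_of_norm_hasDerivWithin_le (f := gL) (f' := gLd)
    (C := 2 / Real.log (cB + L.re)) (x := (L.re : ℂ)) (y := L)
    (fun w hw => (hasDerivAt_gL (by rw [show w.re = L.re from hw]; exact hL.1)).hasDerivWithinAt)
    (fun w hw => by
      have h := norm_gLd_le (L := w) (by rw [show w.re = L.re from hw]; exact hL.1)
      rwa [show w.re = L.re from hw] at h) (by simp) (by simp)
  refine this.trans ?_
  have h2 : ‖L - (L.re : ℂ)‖ ≤ 2 := by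
    have : L - (L.re : ℂ) = (L.im : ℂ) * I := by
      apply Complex.ext <;> simp
    rw [this, norm_mul, Complex.norm_I, mul_one, Complex.norm_real, Real.norm_eq_abs]
    exact hL.2.le
  calc 2 / Real.log (cB + L.re) * ‖L - (L.re : ℂ)‖ ≤ 2 / Real.log (cB + L.re) * 2 := by gcongr
    _ = _ := by ring

lemma gL_im_le {L : ℂ} (hL : L ∈ stripS) : |(gL L).im| ≤ 4 / Real.log (cB + L.re) := by
  have h := (Complex.abs_im_le_norm (gL L - gL (L.re : ℂ))).trans (gL_sub_le hL)
  rw [Complex.sub_im, gL_ofReal hL.1, Complex.ofReal_im, sub_zero] at h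
  exact h

lemma gL_im_le' {L : ℂ} (hL : L ∈ stripS) : |(gL L).im| ≤ 2 / 5 := by
  refine (gL_im_le hL).trans ?_
  have := ten_lt_log hL.1
  rw [div_le_div_iff₀ (by linarith) (by norm_num)]
  linarith

lemma gL_re_ge {L : ℂ} (hL : L ∈ stripS) : -(1 / 2) ≤ (gL L).re := by
  have h := (Complex.abs_re_le_norm (gL L - gL (L.re : ℂ))).trans (gL_sub_le hL)
  have hl := ten_lt_log hL.1
  have h4 : 4 / Real.log (cB + L.re) ≤ 2 / 5 := by
    rw [div_le_div_iff₀ (by linarith) (by norm_num)]; linarith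
  rw [Complex.sub_re, gL_ofReal hL.1, Complex.ofReal_re] at h
  have h5 : -(1 / 10) ≤ L.re / Real.log (cB + L.re) := by
    rw [le_div_iff₀ (by linarith)]; linarith [hL.1]
  linarith [(abs_le.1 h).1]

lemma norm_gL_le {L : ℂ} (hL : -1 < L.re) : ‖gL L‖ ≤ ‖L‖ / 10 := by
  unfold gL
  rw [norm_div]
  have := ten_lt_log hL
  have := log_le_norm hL
  gcongr
  linarith

/-! ### The symbol `φ` -/

/-- The conformal map of the disk into the strip, `z ↦ -log (1 - z)`. -/
def Lz (z : ℂ) : ℂ := -Complex.log (1 - z)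

/-- The map `1 - φ = exp (-g(-log (1 - z)))`. -/
def psi (z : ℂ) : ℂ := Complex.exp (-gL (Lz z))

/-- The symbol `φ`. -/
def phi (z : ℂ) : ℂ := 1 - psi z

lemma one_sub_re_pos {z : ℂ} (hz : z ∈ uD) : 0 < (1 - z).re := by
  have h : ‖z‖ < 1 := by simpa [uD] using hz
  have := Complex.re_le_norm z
  simp; linarith

lemma Lz_mem {z : ℂ} (hz : z ∈ uD) : Lz z ∈ stripS := by
  have h : ‖z‖ < 1 := by simpa [uD] using hz
  have h1 := one_sub_re_pos hz
  have h2 : 0 < ‖1 - z‖ := h1.trans_le (Complex.re_le_norm _)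
  have h3 : ‖1 - z‖ < 2 := (norm_sub_le _ _).trans_lt (by rw [norm_one]; linarith)
  constructor
  · have : Real.log ‖1 - z‖ < 1 := by
      rw [Real.log_lt_iff_lt_exp h2]
      linarith [Real.add_one_le_exp (1 : ℝ)]
    simp only [Lz, Complex.neg_re, Complex.log_re]
    linarith
  · simp only [Lz, Complex.neg_im, Complex.log_im, abs_neg]
    have := Complex.abs_arg_lt_pi_div_two_iff.2 (Or.inl h1)
    linarith [Real.pi_lt_four]

lemma hasDerivAt_Lz {z : ℂ} (hz : z ∈ uD) : HasDerivAt Lz (1 / (1 - z)) z := by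
  have := (((hasDerivAt_id z).const_sub 1).clog (Or.inl (one_sub_re_pos hz))).neg
  refine HasDerivAt.congr_deriv this ?_
  simp only [id]; ring

lemma hasDerivAt_psi {z : ℂ} (hz : z ∈ uD) :
    HasDerivAt psi (-(psi z * gLd (Lz z) / (1 - z))) z := by
  have := (((hasDerivAt_gL (Lz_mem hz).1).comp z (hasDerivAt_Lz hz)).neg).cexp
  refine HasDerivAt.congr_deriv this ?_
  simp only [psi, Pi.neg_apply, Function.comp]; ring

lemma hasDerivAt_phi {z : ℂ} (hz : z ∈ uD) :
    HasDerivAt phi (psi z * gLd (Lz z) / (1 - z)) z := by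
  exact HasDerivAt.congr_deriv ((hasDerivAt_psi hz).const_sub 1) (neg_neg _)

lemma phi_zero : phi 0 = 0 := by simp [phi, psi, gL, Lz]

lemma injOn_psi : InjOn psi uD := by
  intro a ha b hb hab
  have h1 := abs_le.1 (gL_im_le' (Lz_mem ha))
  have h2 := abs_le.1 (gL_im_le' (Lz_mem hb))
  have hpi := Real.pi_gt_three
  have h3 := Complex.exp_inj_of_neg_pi_lt_of_le_pi (x := -gL (Lz a)) (y := -gL (Lz b))
    (by simp; linarith) (by simp; linarith) (by simp; linarith) (by simp; linarith) hab
  have h4 := injOn_gL (Lz_mem ha) (Lz_mem hb) (neg_injective h3)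
  have h5 : Complex.log (1 - a) = Complex.log (1 - b) := neg_injective h4
  have h6 : ∀ z ∈ uD, (1 - z) ≠ 0 := fun z hz h => by
    have := one_sub_re_pos hz; rw [h] at this; simp at this
  have h7 : 1 - a = 1 - b := by
    rw [← Complex.exp_log (h6 a ha), h5, Complex.exp_log (h6 b hb)]
  linear_combination -h7

lemma injOn_phi : InjOn phi uD := fun a ha b hb hab =>
  injOn_psi ha hb (by unfold phi at hab; linear_combination -hab)

lemma norm_psi (z : ℂ) : ‖psi z‖ = Real.exp (-(gL (Lz z)).re) := by
  simp [psi, Complex.norm_exp]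

lemma norm_psi_lt {z : ℂ} (hz : z ∈ uD) : ‖psi z‖ < 1.7 := by
  rw [norm_psi]
  have h := gL_re_ge (Lz_mem hz)
  have h1 : Real.exp (-(gL (Lz z)).re) ≤ Real.exp (1 / 2) := Real.exp_le_exp.2 (by linarith)
  have h2 : Real.exp (1 / 2) * Real.exp (1 / 2) = Real.exp 1 := by
    rw [← Real.exp_add]; norm_num
  have h3 := Real.exp_one_lt_d9
  nlinarith [Real.exp_pos (1 / 2)]

lemma norm_phi_sq_le {z : ℂ} (hz : z ∈ uD) : ‖phi z‖ ^ 2 ≤ 1 - ‖psi z‖ / 8 := by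
  have hv := norm_psi_lt hz
  have hv0 : 0 < ‖psi z‖ := by rw [norm_psi]; positivity
  have him := gL_im_le' (Lz_mem hz)
  have hcos : 0.92 ≤ Real.cos (gL (Lz z)).im := by
    have h1 := Real.one_sub_sq_div_two_le_cos (x := (gL (Lz z)).im)
    have h2 : (gL (Lz z)).im ^ 2 ≤ (2 / 5) ^ 2 := sq_le_sq' (by linarith [(abs_le.1 him).1]) (abs_le.1 him).2
    linarith
  have hre : (psi z).re = ‖psi z‖ * Real.cos (gL (Lz z)).im := by
    rw [norm_psi]; simp [psi, Complex.exp_re]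
  have : ‖phi z‖ ^ 2 = 1 - 2 * (psi z).re + ‖psi z‖ ^ 2 := by
    rw [← Complex.normSq_eq_norm_sq, ← Complex.normSq_eq_norm_sq, phi]
    simp only [Complex.normSq_apply, Complex.sub_re, Complex.sub_im, Complex.one_re, Complex.one_im]
    ring
  rw [this, hre]
  nlinarith

lemma isSchur_phi : IsSchur phi := by
  refine ⟨fun z hz => (hasDerivAt_phi hz).differentiableAt.differentiableWithinAt, fun z hz => ?_⟩
  have hv0 : 0 < ‖psi z‖ := by rw [norm_psi]; positivity
  have := norm_phi_sq_le hz
  simp only [uD, mem_ball, dist_zero_right]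
  nlinarith [norm_nonneg (phi z)]

lemma norm_phi_pow_le {z : ℂ} (hz : z ∈ uD) (k : ℕ) :
    ‖phi z‖ ^ k ≤ Real.exp (-(k / 16 * ‖psi z‖)) := by
  have h1 : ‖phi z‖ ≤ Real.exp (-(‖psi z‖ / 16)) := by
    refine le_of_sq_le_sq ?_ (Real.exp_pos _).le
    have h2 : Real.exp (-(‖psi z‖ / 16)) ^ 2 = Real.exp (-(‖psi z‖ / 8)) := by
      rw [← Real.exp_nat_mul]; congr 1; push_cast; ring
    rw [h2]
    have := Real.add_one_le_exp (-(‖psi z‖ / 8))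
    linarith [norm_phi_sq_le hz]
  calc ‖phi z‖ ^ k ≤ Real.exp (-(‖psi z‖ / 16)) ^ k := by gcongr
    _ = _ := by rw [← Real.exp_nat_mul]; congr 1; ring

/-- Near the boundary point `1`, the image `φ(D)` lies in arbitrarily thin Stolz angles. -/
lemma psi_arg_small {ε : ℝ} (hε : 0 < ε) : ∃ η > 0, ∀ z ∈ uD, ‖psi z‖ < η → |(psi z).arg| ≤ ε := by
  refine ⟨Real.exp (-((Real.exp (4 / ε) + 3) / 10)), Real.exp_pos _, fun z hz h => ?_⟩
  have hL := Lz_mem hz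
  rw [norm_psi, Real.exp_lt_exp] at h
  have h1 : (gL (Lz z)).re ≤ ‖Lz z‖ / 10 := (Complex.re_le_norm _).trans (norm_gL_le hL.1)
  have h2 := Complex.norm_le_abs_re_add_abs_im (Lz z)
  have h3 : |(Lz z).re| ≤ (Lz z).re + 2 := abs_le.2 ⟨by linarith [hL.1], by linarith⟩
  have h4 : Real.exp (4 / ε) < cB + (Lz z).re := by
    have : 3 < cB := by unfold cB; linarith [Real.add_one_le_exp (10 : ℝ)]
    linarith [hL.2]
  have h5 : 4 / ε ≤ Real.log (cB + (Lz z).re) := by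
    rw [Real.le_log_iff_exp_le ((Real.exp_pos _).trans h4)]; exact h4.le
  have h6 := abs_le.1 (gL_im_le' hL)
  have h7 : (psi z).arg = -(gL (Lz z)).im := by
    have hpi := Real.pi_gt_three
    rw [psi, Complex.arg_exp, (toIocMod_eq_self _).2]
    · simp
    · constructor
      · simp; linarith
      · simp; linarith
  rw [h7, abs_neg]
  refine (gL_im_le hL).trans ?_
  have hm := ten_lt_log hL.1
  rw [div_le_iff₀ hε] at h5
  rw [div_le_iff₀ (by linarith)]
  linarith

/-! ### Smallness of the moments of `φ` -/

lemma lintegral_radial_exp {a : ℝ} (ha : 0 < a) :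
    ∫⁻ r in Ioi (0 : ℝ), ENNReal.ofReal r * ENNReal.ofReal (Real.exp (-(a * r)))
      = ENNReal.ofReal (1 / a ^ 2) := by
  have h1 := Real.integral_rpow_mul_exp_neg_mul_Ioi (a := 2) (r := a) (by norm_num) ha
  have h2 : IntegrableOn (fun r : ℝ => r ^ ((2 : ℝ) - 1) * Real.exp (-(a * r))) (Ioi 0) := by
    have := integrableOn_rpow_mul_exp_neg_mul_rpow (p := 1) (s := 2 - 1) (b := a) (by norm_num)
      one_pos ha
    simpa using this
  have h3 : (1 / a) ^ (2 : ℝ) * Real.Gamma 2 = 1 / a ^ 2 := by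
    rw [Real.Gamma_two, mul_one, Real.rpow_two]; ring
  rw [← h3, ← h1, ofReal_integral_eq_lintegral_ofReal h2]
  · refine setLIntegral_congr_fun measurableSet_Ioi fun r hr => ?_
    have hr' : (0 : ℝ) < r := hr
    rw [← ENNReal.ofReal_mul hr'.le]
    norm_num
  · refine (ae_restrict_iff' measurableSet_Ioi).2 (Eventually.of_forall fun r hr => ?_)
    have hr' : (0 : ℝ) < r := hr
    simp only [Pi.zero_apply]
    positivity

/-- The integral of `exp (-a |ζ|)` over the sector `|arg ζ| ≤ ε` is at most `2ε / (π a²)`. -/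
lemma lintegral_sector_le {a ε : ℝ} (ha : 0 < a) (hε : 0 < ε) :
    ∫⁻ w in {w : ℂ | |w.arg| ≤ ε}, ENNReal.ofReal (Real.exp (-(a * ‖w‖))) ∂nA
      ≤ ENNReal.ofReal (2 * ε / (Real.pi * a ^ 2)) := by
  have hms : MeasurableSet {w : ℂ | |w.arg| ≤ ε} := measurableSet_le (by fun_prop) (by fun_prop)
  rw [← lintegral_indicator hms]
  have hmeas : Measurable ({w : ℂ | |w.arg| ≤ ε}.indicator
      fun w => ENNReal.ofReal (Real.exp (-(a * ‖w‖)))) :=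
    Measurable.indicator (by fun_prop) hms
  rw [lintegral_polar hmeas]
  have hinner : ∀ r ∈ Ioi (0 : ℝ), ENNReal.ofReal r * ∫⁻ t in Ioo (-Real.pi) Real.pi,
      ({w : ℂ | |w.arg| ≤ ε}.indicator
        (fun w => ENNReal.ofReal (Real.exp (-(a * ‖w‖))))) (r * Complex.exp (t * I))
      ≤ ENNReal.ofReal (2 * ε) * (ENNReal.ofReal r * ENNReal.ofReal (Real.exp (-(a * r)))) := by
    intro r hr
    have hr' : (0 : ℝ) < r := hr
    have : ∫⁻ t in Ioo (-Real.pi) Real.pi, ({w : ℂ | |w.arg| ≤ ε}.indicator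
        (fun w => ENNReal.ofReal (Real.exp (-(a * ‖w‖))))) (r * Complex.exp (t * I))
        ≤ ∫⁻ t : ℝ, (Icc (-ε) ε).indicator (fun _ => ENNReal.ofReal (Real.exp (-(a * r)))) t := by
      refine le_trans ?_ (setLIntegral_le_lintegral (Ioo (-Real.pi) Real.pi) _)
      refine setLIntegral_mono' measurableSet_Ioo fun t ht => ?_
      have harg : (r * Complex.exp (t * I) : ℂ).arg = t := by
        rw [Complex.exp_mul_I]
        exact Complex.arg_mul_cos_add_sin_mul_I hr' ⟨ht.1, ht.2.le⟩
      have hn : ‖(r * Complex.exp (t * I) : ℂ)‖ = r := by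
        rw [norm_mul, Complex.norm_exp_ofReal_mul_I, mul_one, Complex.norm_real,
          Real.norm_of_nonneg hr'.le]
      by_cases h : |t| ≤ ε
      · rw [indicator_of_mem (by simpa [harg] using h), indicator_of_mem (by
          simpa [abs_le] using h), hn]
      · rw [indicator_of_notMem (by simpa [harg] using h)]; exact zero_le
    calc _ ≤ ENNReal.ofReal r * (ENNReal.ofReal (Real.exp (-(a * r))) * ENNReal.ofReal (2 * ε)) := by
          refine mul_le_mul' le_rfl (this.trans (le_of_eq ?_))
          rw [lintegral_indicator measurableSet_Icc, setLIntegral_const, Real.volume_Icc]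
          congr 2; ring
      _ = _ := by ring
  calc _ ≤ (ENNReal.ofReal Real.pi)⁻¹ * ∫⁻ r in Ioi (0 : ℝ), ENNReal.ofReal (2 * ε) *
        (ENNReal.ofReal r * ENNReal.ofReal (Real.exp (-(a * r)))) :=
        mul_le_mul' le_rfl (setLIntegral_mono' measurableSet_Ioi hinner)
    _ = ENNReal.ofReal (2 * ε / (Real.pi * a ^ 2)) := by
        rw [lintegral_const_mul _ (by fun_prop), lintegral_radial_exp ha,
          ← ENNReal.ofReal_inv_of_pos Real.pi_pos, ← ENNReal.ofReal_mul (by positivity),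
          ← ENNReal.ofReal_mul (by positivity)]
        congr 1
        field_simp

lemma nA_ball_two : nA (ball (0 : ℂ) 2) = ENNReal.ofReal 4 := by
  have hpi := Real.pi_pos
  rw [nA, Measure.smul_apply, Complex.volume_ball, smul_eq_mul,
    ← ENNReal.ofReal_inv_of_pos hpi]
  have h : (NNReal.pi : ℝ≥0∞) = ENNReal.ofReal Real.pi := by
    rw [ENNReal.ofReal, ENNReal.coe_inj]
    exact NNReal.eq (by simp [Real.coe_toNNReal _ hpi.le])
  rw [h, ← ENNReal.ofReal_pow (by norm_num), ← ENNReal.ofReal_mul (by positivity),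
    ← ENNReal.ofReal_mul (by positivity)]
  congr 1
  field_simp
  norm_num

/-- The image of `1 - φ` splits into a thin sector and a part away from the origin, on which
`|φ|^k` is exponentially small. -/
lemma moment_bound {ε : ℝ} (hε : 0 < ε) : ∃ η > 0, ∀ k : ℕ, 1 ≤ k →
    ∫⁻ z in uD, ‖phi z‖ₑ ^ k * ‖deriv phi z‖ₑ ^ 2 ∂nA
      ≤ ENNReal.ofReal (2 * ε / (Real.pi * ((k : ℝ) / 16) ^ 2) + Real.exp (-(k / 16 * η)) * 4) := by
  obtain ⟨η, hη, harg⟩ := psi_arg_small hε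
  refine ⟨η, hη, fun k hk => ?_⟩
  have hk' : (0 : ℝ) < k / 16 := by
    have : (0 : ℝ) < k := by exact_mod_cast hk
    positivity
  set h : ℂ → ℝ≥0∞ := fun w => ENNReal.ofReal (Real.exp (-((k : ℝ) / 16 * ‖w‖))) with hh
  have hd : DifferentiableOn ℂ psi uD := fun z hz =>
    (hasDerivAt_psi hz).differentiableAt.differentiableWithinAt
  calc ∫⁻ z in uD, ‖phi z‖ₑ ^ k * ‖deriv phi z‖ₑ ^ 2 ∂nA
      ≤ ∫⁻ z in uD, ENNReal.ofReal (‖deriv psi z‖ ^ 2) * h (psi z) ∂nA := by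
        refine setLIntegral_mono' isOpen_uD.measurableSet fun z hz => ?_
        have e : ‖deriv phi z‖ = ‖deriv psi z‖ := by
          rw [(hasDerivAt_phi hz).deriv, (hasDerivAt_psi hz).deriv, norm_neg]
        rw [← ofReal_norm (phi z), ← ofReal_norm (deriv phi z),
          ← ENNReal.ofReal_pow (norm_nonneg _), ← ENNReal.ofReal_pow (norm_nonneg _), e, mul_comm]
        exact mul_le_mul' le_rfl (ENNReal.ofReal_le_ofReal (norm_phi_pow_le hz k))
    _ = ∫⁻ w in psi '' uD, h w ∂nA := (lintegral_image_holo isOpen_uD hd injOn_psi h).symm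
    _ ≤ ∫⁻ w in {w : ℂ | |w.arg| ≤ ε} ∪ (ball 0 2 \ ball 0 η), h w ∂nA := by
        refine lintegral_mono_set ?_
        rintro _ ⟨z, hz, rfl⟩
        by_cases hlt : ‖psi z‖ < η
        · exact Or.inl (harg z hz hlt)
        · refine Or.inr ⟨?_, ?_⟩
          · rw [mem_ball, dist_zero_right]; linarith [norm_psi_lt hz]
          · rwa [mem_ball, dist_zero_right]
    _ ≤ (∫⁻ w in {w : ℂ | |w.arg| ≤ ε}, h w ∂nA) + ∫⁻ w in ball 0 2 \ ball 0 η, h w ∂nA :=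
        lintegral_union_le _ _ _
    _ ≤ ENNReal.ofReal (2 * ε / (Real.pi * ((k : ℝ) / 16) ^ 2))
        + ENNReal.ofReal (Real.exp (-(k / 16 * η)) * 4) := by
        refine add_le_add (lintegral_sector_le hk' hε) ?_
        calc ∫⁻ w in ball 0 2 \ ball 0 η, h w ∂nA
            ≤ ∫⁻ _ in ball (0 : ℂ) 2 \ ball 0 η, ENNReal.ofReal (Real.exp (-(k / 16 * η))) ∂nA := by
              refine setLIntegral_mono' (measurableSet_ball.diff measurableSet_ball) fun w hw => ?_
              have : η ≤ ‖w‖ := by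
                have := hw.2
                rwa [mem_ball, dist_zero_right, not_lt] at this
              refine ENNReal.ofReal_le_ofReal (Real.exp_le_exp.2 ?_)
              have := mul_le_mul_of_nonneg_left this hk'.le
              linarith
          _ ≤ ENNReal.ofReal (Real.exp (-(k / 16 * η))) * nA (ball (0 : ℂ) 2) := by
              rw [setLIntegral_const]
              exact mul_le_mul' le_rfl (measure_mono sdiff_subset)
          _ = _ := by rw [nA_ball_two, ENNReal.ofReal_mul (Real.exp_pos _).le]
    _ = _ := (ENNReal.ofReal_add (by positivity) (by positivity)).symm

lemma moments_small (ε : ℝ) (hε : 0 < ε) : ∃ N : ℕ, ∀ k ≥ N,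
    ∫⁻ z in uD, ‖phi z‖ₑ ^ k * ‖deriv phi z‖ₑ ^ 2 ∂nA
      ≤ ENNReal.ofReal ε * ENNReal.ofReal (1 / ((k : ℝ) + 2) ^ 2) := by
  obtain ⟨η, hη, hb⟩ := moment_bound (ε := ε / 2000) (by positivity)
  have hlim := tendsto_pow_const_mul_const_pow_of_abs_lt_one 2 (r := Real.exp (-(η / 16))) (by
    rw [abs_of_pos (Real.exp_pos _), Real.exp_lt_one_iff]; linarith)
  have hev := hlim.eventually (gt_mem_nhds (show (0 : ℝ) < ε / 100 by positivity))
  obtain ⟨N, hN⟩ := eventually_atTop.1 hev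
  refine ⟨max N 2, fun k hk => ?_⟩
  have hk1 := hN k (le_trans (le_max_left _ _) hk)
  have hk2 : (2 : ℝ) ≤ k := by exact_mod_cast (le_trans (le_max_right _ _) hk)
  refine (hb k (le_trans (by norm_num) (le_trans (le_max_right _ _) hk))).trans ?_
  rw [← ENNReal.ofReal_mul hε.le]
  refine ENNReal.ofReal_le_ofReal ?_
  have he : Real.exp (-((k : ℝ) / 16 * η)) = Real.exp (-(η / 16)) ^ k := by
    rw [← Real.exp_nat_mul]; congr 1; ring
  rw [he]
  set q := Real.exp (-(η / 16)) ^ k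
  have hq : 0 < q := by positivity
  have h4 : ((k : ℝ) + 2) ^ 2 ≤ 4 * (k : ℝ) ^ 2 := by nlinarith
  have h5 : 2 * (ε / 2000) / (Real.pi * ((k : ℝ) / 16) ^ 2) ≤ ε / 2 * (1 / ((k : ℝ) + 2) ^ 2) := by
    have hpi := Real.pi_gt_three
    have e : ε / 2 * (1 / ((k : ℝ) + 2) ^ 2) = ε / (2 * ((k : ℝ) + 2) ^ 2) := by
      field_simp
    have e2 : 2 * (ε / 2000) / (Real.pi * ((k : ℝ) / 16) ^ 2)
        = ε / (Real.pi * k ^ 2 * (1000 / 256)) := by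
      field_simp; norm_num
    rw [e, e2]
    refine div_le_div_of_nonneg_left hε.le (by positivity) ?_
    nlinarith [mul_le_mul_of_nonneg_right hpi.le (sq_nonneg (k : ℝ))]
  have h6 : q * 4 ≤ ε / 2 * (1 / ((k : ℝ) + 2) ^ 2) := by
    rw [mul_one_div, le_div_iff₀ (by positivity)]
    nlinarith [mul_le_mul_of_nonneg_left h4 hq.le]
  linarith

lemma compact_phi : IsCompactOpOn MemDStar eDNormSq (compOp phi) :=
  compact_of_moments isSchur_phi phi_zero injOn_phi moments_small

/-! ### Test functions built from reproducing kernels -/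

/-- The geometric weight `4^{-(j+1)}`. -/
def geo (j : ℕ) : ℝ := (1 / 4) ^ (j + 1)

lemma geo_pos (j : ℕ) : 0 < geo j := by unfold geo; positivity

lemma sum_geo_sq_le (n : ℕ) : ∑ i : Fin n, geo i ^ 2 ≤ 1 / 15 := by
  rw [Fin.sum_univ_eq_sum_range (fun i => geo i ^ 2) n]
  have h : ∀ n, ∑ i ∈ Finset.range n, geo i ^ 2 = 1 / 15 - (1 / 15) * (1 / 16) ^ n := by
    intro n
    induction n with
    | zero => simp
    | succ k ih =>
      rw [Finset.sum_range_succ, ih]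
      have : geo k ^ 2 = (1 / 16) * (1 / 16) ^ k := by
        unfold geo; rw [← pow_mul, mul_comm, pow_mul, pow_succ]; norm_num; ring
      rw [this, pow_succ]; ring
  rw [h]
  have : (0 : ℝ) < (1 / 16) ^ n := by positivity
  linarith

lemma geo_cauchy {n : ℕ} (a : Fin n → ℝ) :
    (∑ i : Fin n, geo i * a i) ^ 2 ≤ (1 / 15) * ∑ i, a i ^ 2 := by
  refine (Finset.sum_mul_sq_le_sq_mul_sq Finset.univ (fun i : Fin n => geo i) a).trans ?_
  exact mul_le_mul_of_nonneg_right (sum_geo_sq_le n) (Finset.sum_nonneg fun i _ => sq_nonneg _)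

/-- A nearly diagonal matrix has bounded quadratic form. -/
lemma gram_upper {n : ℕ} {M : Fin n → Fin n → ℝ} (hd : ∀ i, M i i ≤ 1)
    (ho : ∀ i j, i ≠ j → M i j ≤ geo i * geo j) (a : Fin n → ℝ) (ha : ∀ i, 0 ≤ a i) :
    ∑ i, ∑ j, M i j * a i * a j ≤ 2 * ∑ i, a i ^ 2 := by
  have h1 : ∀ i j, M i j * a i * a j ≤ (if i = j then a i ^ 2 else 0) + (geo i * a i) * (geo j * a j) := by
    intro i j
    have hg : 0 ≤ (geo i * a i) * (geo j * a j) :=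
      mul_nonneg (mul_nonneg (geo_pos _).le (ha i)) (mul_nonneg (geo_pos _).le (ha j))
    split_ifs with h
    · subst h
      nlinarith [mul_le_mul_of_nonneg_right (hd i) (sq_nonneg (a i))]
    · nlinarith [mul_le_mul_of_nonneg_right (ho i j h) (mul_nonneg (ha i) (ha j))]
  calc ∑ i, ∑ j, M i j * a i * a j
      ≤ ∑ i, ∑ j, ((if i = j then a i ^ 2 else 0) + (geo i * a i) * (geo j * a j)) :=
        Finset.sum_le_sum fun i _ => Finset.sum_le_sum fun j _ => h1 i j
    _ = ∑ i, a i ^ 2 + (∑ i : Fin n, geo i * a i) ^ 2 := by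
        simp only [Finset.sum_add_distrib]
        congr 1
        · simp
        · rw [sq, Finset.sum_mul_sum]
    _ ≤ 2 * ∑ i, a i ^ 2 := by
        have := geo_cauchy a
        have h0 : 0 ≤ ∑ i, a i ^ 2 := Finset.sum_nonneg fun i _ => sq_nonneg _
        linarith

/-- A nearly diagonal matrix is bounded below. -/
lemma gram_lower {n : ℕ} {M : Fin n → Fin n → ℝ} (hd : ∀ i, 1 / 4 ≤ M i i)
    (h0 : ∀ i j, 0 ≤ M i j)
    (ho : ∀ i j, i ≠ j → M i j ≤ geo i * geo j) (c : Fin n → ℂ) :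
    (1 / 64) * ∑ i, ‖c i‖ ^ 2 ≤ ∑ i, ‖∑ j, (M i j : ℂ) * c j‖ ^ 2 := by
  set S := ∑ j : Fin n, geo j * ‖c j‖ with hS
  have hSnn : 0 ≤ S := Finset.sum_nonneg fun j _ => mul_nonneg (geo_pos _).le (norm_nonneg _)
  have hS2 : S ^ 2 ≤ (1 / 15) * ∑ i, ‖c i‖ ^ 2 := geo_cauchy fun i => ‖c i‖
  have key : ∀ i, ‖c i‖ ^ 2 / 16 ≤ 2 * ‖∑ j, (M i j : ℂ) * c j‖ ^ 2 + 2 * (geo i ^ 2 * S ^ 2) := by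
    intro i
    have hsplit := Finset.add_sum_erase Finset.univ (fun j => (M i j : ℂ) * c j) (Finset.mem_univ i)
    set u := ∑ j, (M i j : ℂ) * c j
    set e := ∑ j ∈ Finset.univ.erase i, (M i j : ℂ) * c j
    have he : ‖e‖ ≤ geo i * S := by
      calc ‖e‖ ≤ ∑ j ∈ Finset.univ.erase i, ‖(M i j : ℂ) * c j‖ := norm_sum_le _ _
        _ ≤ ∑ j ∈ Finset.univ.erase i, geo i * (geo j * ‖c j‖) := by
            refine Finset.sum_le_sum fun j hj => ?_
            rw [norm_mul, Complex.norm_real, Real.norm_of_nonneg (h0 i j), ← mul_assoc]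
            exact mul_le_mul_of_nonneg_right (ho i j (Finset.ne_of_mem_erase hj).symm)
              (norm_nonneg _)
        _ ≤ ∑ j : Fin n, geo i * (geo j * ‖c j‖) :=
            Finset.sum_le_sum_of_subset_of_nonneg (Finset.subset_univ _) fun j _ _ =>
              mul_nonneg (geo_pos _).le (mul_nonneg (geo_pos _).le (norm_nonneg _))
        _ = geo i * S := by rw [hS, Finset.mul_sum]
    have h1 : ‖c i‖ / 4 ≤ ‖u‖ + ‖e‖ := by
      have h2 : (M i i : ℂ) * c i = u - e := by rw [← hsplit]; ring
      have h3 : M i i * ‖c i‖ ≤ ‖u‖ + ‖e‖ := by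
        rw [← Real.norm_of_nonneg (h0 i i), ← Complex.norm_real, ← norm_mul, h2]
        exact norm_sub_le _ _
      nlinarith [mul_le_mul_of_nonneg_right (hd i) (norm_nonneg (c i))]
    have h4 : ‖c i‖ / 4 ≤ ‖u‖ + geo i * S := h1.trans (by linarith)
    have h5 : (‖c i‖ / 4) ^ 2 ≤ (‖u‖ + geo i * S) ^ 2 := by
      have := norm_nonneg (c i)
      gcongr
    nlinarith [sq_nonneg (‖u‖ - geo i * S)]
  have hsum := Finset.sum_le_sum fun i (_ : i ∈ Finset.univ) => key i
  rw [Finset.sum_add_distrib, ← Finset.mul_sum, ← Finset.mul_sum, ← Finset.sum_mul,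
    ← Finset.sum_div] at hsum
  have hg := mul_le_mul_of_nonneg_right (sum_geo_sq_le n) (sq_nonneg S)
  have hc0 : 0 ≤ ∑ i, ‖c i‖ ^ 2 := Finset.sum_nonneg fun i _ => sq_nonneg _
  linarith

/-- The normalized kernel-type function `w ↦ x w / (1 - (1 - x) w)`. -/
def kerF (x : ℝ) (w : ℂ) : ℂ := x * w / (1 - ((1 - x : ℝ) : ℂ) * w)

/-- The Gram matrix entries `x y / (1 - (1 - x)(1 - y))²` of the functions `kerF`. -/
def gramM (x y : ℝ) : ℝ := x * y / (1 - (1 - x) * (1 - y)) ^ 2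

lemma one_sub_ne {x : ℝ} (hx0 : 0 < x) (hx1 : x < 1) {w : ℂ} (hw : w ∈ uD) :
    1 - ((1 - x : ℝ) : ℂ) * w ≠ 0 := by
  have hw' : ‖w‖ < 1 := by simpa [uD] using hw
  intro h
  have h1 : ((1 - x : ℝ) : ℂ) * w = 1 := by linear_combination -h
  have h2 : (1 - x) * ‖w‖ = 1 := by
    rw [← Real.norm_of_nonneg (show 0 ≤ 1 - x by linarith), ← Complex.norm_real, ← norm_mul, h1,
      norm_one]
  nlinarith [norm_nonneg w]

lemma hasDerivAt_kerF {x : ℝ} (hx0 : 0 < x) (hx1 : x < 1) {w : ℂ} (hw : w ∈ uD) :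
    HasDerivAt (kerF x) (x / (1 - ((1 - x : ℝ) : ℂ) * w) ^ 2) w := by
  have hne := one_sub_ne hx0 hx1 hw
  have h1 := ((hasDerivAt_id w).const_mul (x : ℂ)).div
    (((hasDerivAt_id w).const_mul ((1 - x : ℝ) : ℂ)).const_sub 1) hne
  refine HasDerivAt.congr_deriv h1 ?_
  congr 1
  simp only [id]; ring

lemma hasSum_kerF_deriv {x : ℝ} (hx0 : 0 < x) (hx1 : x < 1) {w : ℂ} (hw : w ∈ uD) :
    HasSum (fun n : ℕ => ((n + 1 : ℝ) * (x * (1 - x) ^ n) : ℝ) * w ^ n)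
      (x / (1 - ((1 - x : ℝ) : ℂ) * w) ^ 2) := by
  have hw' : ‖w‖ < 1 := by simpa [uD] using hw
  have hn : ‖((1 - x : ℝ) : ℂ) * w‖ < 1 := by
    rw [norm_mul, Complex.norm_real, Real.norm_of_nonneg (by linarith)]
    nlinarith [norm_nonneg w]
  have h := (hasSum_choose_mul_geometric_of_norm_lt_one 1 hn).mul_left (x : ℂ)
  rw [mul_one_div] at h
  refine h.congr_fun fun n => ?_
  simp only [Nat.choose_one_right]
  push_cast
  rw [mul_pow]; ring

lemma hasSum_gramM {x y : ℝ} (hx0 : 0 < x) (hx1 : x < 1) (hy0 : 0 < y) (hy1 : y < 1) :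
    HasSum (fun n : ℕ => (n + 1 : ℝ) * (x * (1 - x) ^ n) * (y * (1 - y) ^ n)) (gramM x y) := by
  have hn : ‖(1 - x) * (1 - y)‖ < 1 := by
    rw [Real.norm_of_nonneg (mul_nonneg (by linarith) (by linarith))]
    nlinarith
  have h := (hasSum_choose_mul_geometric_of_norm_lt_one 1 hn).mul_left (x * y)
  rw [mul_one_div] at h
  refine h.congr_fun fun n => ?_
  simp only [Nat.choose_one_right]
  push_cast
  rw [mul_pow]; ring

/-- Upper bound for the Dirichlet norm of a combination of test functions by the Gram form. -/
lemma eDNormSq_kerF_le {n : ℕ} {x : Fin n → ℝ} (hx0 : ∀ i, 0 < x i) (hx1 : ∀ i, x i < 1)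
    (c : Fin n → ℂ) :
    eDNormSq (fun w => ∑ j, c j * kerF (x j) w)
      ≤ ENNReal.ofReal (∑ i, ∑ j, gramM (x i) (x j) * ‖c i‖ * ‖c j‖) := by
  have hder : ∀ w ∈ uD, HasDerivAt (fun w => ∑ j, c j * kerF (x j) w)
      (∑ j, c j * ((x j : ℂ) / (1 - ((1 - x j : ℝ) : ℂ) * w) ^ 2)) w := fun w hw =>
    HasDerivAt.fun_sum fun j _ => (hasDerivAt_kerF (hx0 j) (hx1 j) hw).const_mul (c j)
  have hdiff : DifferentiableOn ℂ (fun w => ∑ j, c j * kerF (x j) w) uD := fun w hw =>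
    (hder w hw).differentiableAt.differentiableWithinAt
  set b : ℕ → ℂ := fun m => ∑ j, c j * ((m + 1 : ℝ) * (x j * (1 - x j) ^ m) : ℝ) with hb
  have hsum : ∀ w ∈ uD, HasSum (fun m => b m * w ^ m)
      (deriv (fun w => ∑ j, c j * kerF (x j) w) w) := by
    intro w hw
    rw [(hder w hw).deriv]
    have := hasSum_sum fun j (_ : j ∈ Finset.univ) =>
      (hasSum_kerF_deriv (hx0 j) (hx1 j) hw).mul_left (c j)
    refine this.congr_fun fun m => ?_
    simp only [hb, Finset.sum_mul, mul_assoc]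
  have hpars := disk_parseval (hdiff.deriv isOpen_uD).continuousOn hsum
  rw [eDNormSq_eq, hpars]
  have hzero : (∑ j, c j * kerF (x j) 0) = 0 := by simp [kerF]
  rw [hzero, norm_zero, zero_pow two_ne_zero, ENNReal.ofReal_zero, zero_add]
  have hS : HasSum (fun m : ℕ => ∑ i, ∑ j,
      ((m + 1 : ℝ) * (x i * (1 - x i) ^ m) * (x j * (1 - x j) ^ m)) * ‖c i‖ * ‖c j‖)
      (∑ i, ∑ j, gramM (x i) (x j) * ‖c i‖ * ‖c j‖) :=
    hasSum_sum fun i _ => hasSum_sum fun j _ =>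
      ((hasSum_gramM (hx0 i) (hx1 i) (hx0 j) (hx1 j)).mul_right _).mul_right _
  have hxn : ∀ i (m : ℕ), 0 ≤ x i * (1 - x i) ^ m := fun i m =>
    mul_nonneg (hx0 i).le (pow_nonneg (by linarith [hx1 i]) m)
  rw [← hS.tsum_eq, ENNReal.ofReal_tsum_of_nonneg (fun m => Finset.sum_nonneg fun i _ =>
    Finset.sum_nonneg fun j _ => mul_nonneg (mul_nonneg (mul_nonneg
      (mul_nonneg (by positivity) (hxn i m)) (hxn j m)) (norm_nonneg _)) (norm_nonneg _)) hS.summable]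
  refine ENNReal.tsum_le_tsum fun m => ENNReal.ofReal_le_ofReal ?_
  have h1 : ‖b m‖ ≤ (m + 1 : ℝ) * ∑ j, (x j * (1 - x j) ^ m) * ‖c j‖ := by
    rw [Finset.mul_sum]
    refine (norm_sum_le _ _).trans (Finset.sum_le_sum fun j _ => ?_)
    rw [norm_mul, Complex.norm_real, Real.norm_of_nonneg (mul_nonneg (by positivity) (hxn j m))]
    apply le_of_eq; ring
  have h2 : ‖b m‖ ^ 2 ≤ ((m + 1 : ℝ) * ∑ j, (x j * (1 - x j) ^ m) * ‖c j‖) ^ 2 := by gcongr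
  rw [div_le_iff₀ (by positivity)]
  refine h2.trans (le_of_eq ?_)
  rw [mul_pow, sq (∑ j, _), Finset.sum_mul_sum, Finset.mul_sum, Finset.sum_mul]
  refine Finset.sum_congr rfl fun i _ => ?_
  rw [Finset.mul_sum, Finset.sum_mul]
  refine Finset.sum_congr rfl fun j _ => ?_
  ring

lemma gramM_diag_le {x : ℝ} (hx0 : 0 < x) (hx1 : x < 1) : gramM x x ≤ 1 := by
  unfold gramM
  have : 0 < 1 - (1 - x) * (1 - x) := by nlinarith
  rw [div_le_one (by positivity)]
  have : x ≤ 1 - (1 - x) * (1 - x) := by nlinarith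
  nlinarith

lemma gramM_diag_ge {x : ℝ} (hx0 : 0 < x) (hx1 : x < 1) : 1 / 4 ≤ gramM x x := by
  unfold gramM
  have : 0 < 1 - (1 - x) * (1 - x) := by nlinarith
  rw [div_le_div_iff₀ (by norm_num) (by positivity)]
  have : 1 - (1 - x) * (1 - x) ≤ 2 * x := by nlinarith
  nlinarith

lemma gramM_comm (x y : ℝ) : gramM x y = gramM y x := by
  unfold gramM; rw [mul_comm x y, mul_comm (1 - x)]

lemma gramM_nonneg {x y : ℝ} (hx0 : 0 < x) (hy0 : 0 < y) : 0 ≤ gramM x y := by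
  unfold gramM; positivity

lemma gramM_le_div {x y : ℝ} (hx0 : 0 < x) (hx1 : x < 1) (hy0 : 0 < y) :
    gramM x y ≤ y / x := by
  unfold gramM
  have h : x ≤ 1 - (1 - x) * (1 - y) := by nlinarith
  have h2 : 0 < 1 - (1 - x) * (1 - y) := hx0.trans_le h
  rw [div_le_div_iff₀ (by positivity) hx0]
  have : x ^ 2 ≤ (1 - (1 - x) * (1 - y)) ^ 2 := by gcongr
  nlinarith

/-! ### The interpolation points -/

/-- The values of `-log (1 - z)` at the chosen points of the disk; they satisfy
`B + pL j = B (j + 2)⁴`. -/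
def pL (j : ℕ) : ℝ := cB * (((j : ℝ) + 2) ^ 4 - 1)

/-- The distance `1 - z_j` of the point `z_j` to the boundary point `1`. -/
def pd (j : ℕ) : ℝ := Real.exp (-pL j)

/-- The distance `1 - φ(z_j)`. -/
def px (j : ℕ) : ℝ := Real.exp (-(pL j / Real.log (cB + pL j)))

/-- The points `z_j = 1 - exp (-pL j)`. -/
def pz (j : ℕ) : ℂ := ((1 - pd j : ℝ) : ℂ)

lemma cB_gt : 100 < cB := by
  have h1 : (2 : ℝ) ≤ Real.exp 1 := by linarith [Real.add_one_le_exp (1 : ℝ)]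
  have h2 : Real.exp 10 = Real.exp 1 ^ 10 := by rw [← Real.exp_nat_mul]; norm_num
  have h3 : (2 : ℝ) ^ 10 ≤ Real.exp 1 ^ 10 := by gcongr
  unfold cB
  rw [h2]
  norm_num at h3
  linarith

lemma pL_pos (j : ℕ) : 0 < pL j := by
  unfold pL
  have h : (1 : ℝ) < ((j : ℝ) + 2) ^ 4 := one_lt_pow₀ (by linarith [(j.cast_nonneg : (0 : ℝ) ≤ j)]) (by norm_num)
  exact mul_pos cB_pos (by linarith)

lemma pL_mono {i j : ℕ} (h : i ≤ j) : pL i ≤ pL j := by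
  unfold pL
  have := cB_pos
  have : (i : ℝ) ≤ j := by exact_mod_cast h
  gcongr

lemma pL_gap {i j : ℕ} (h : i < j) : 4 * cB * ((j : ℝ) + 1) ^ 3 ≤ pL j - pL i := by
  have hij : (i : ℝ) + 1 ≤ j := by exact_mod_cast h
  have hi : (0 : ℝ) ≤ i := i.cast_nonneg
  have hB := cB_pos
  have h1 : ((i : ℝ) + 2) ^ 4 ≤ ((j : ℝ) + 1) ^ 4 :=
    pow_le_pow_left₀ (by linarith) (by linarith) 4
  have h2 : 4 * ((j : ℝ) + 1) ^ 3 ≤ ((j : ℝ) + 2) ^ 4 - ((j : ℝ) + 1) ^ 4 := by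
    have hj : (0 : ℝ) ≤ j := j.cast_nonneg
    nlinarith [sq_nonneg ((j : ℝ) + 1)]
  unfold pL
  nlinarith [mul_le_mul_of_nonneg_left (h2.trans (sub_le_sub_left h1 _)) hB.le]

lemma log_pL (j : ℕ) : Real.log (cB + pL j) ≤ 11 + 4 * Real.log ((j : ℝ) + 2) := by
  have hB := cB_pos
  have h : cB + pL j = cB * ((j : ℝ) + 2) ^ 4 := by unfold pL; ring
  rw [h, Real.log_mul hB.ne' (by positivity), Real.log_pow]
  have : Real.log cB ≤ 11 := by
    rw [Real.log_le_iff_le_exp hB]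
    have h1 : Real.exp 11 = Real.exp 10 * Real.exp 1 := by rw [← Real.exp_add]; norm_num
    have h2 : (2 : ℝ) ≤ Real.exp 1 := by linarith [Real.add_one_le_exp (1 : ℝ)]
    have h3 := cB_gt
    unfold cB at h3 ⊢
    rw [h1]
    nlinarith
  push_cast
  linarith

/-- Lower bound for the increments of `x ↦ x / log (B + x)`. -/
lemma real_g_gap {a b : ℝ} (ha : 0 ≤ a) (hab : a ≤ b) :
    (b - a) / (2 * Real.log (cB + b)) ≤ b / Real.log (cB + b) - a / Real.log (cB + a) := by
  have hB := cB_pos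
  have hla := ten_lt_log (x := a) (by linarith)
  have hlb := ten_lt_log (x := b) (by linarith)
  have hlog : Real.log (cB + b) - Real.log (cB + a) ≤ (b - a) / (cB + a) := by
    rw [← Real.log_div (by linarith) (by linarith)]
    refine (Real.log_le_sub_one_of_pos (div_pos (by linarith) (by linarith))).trans (le_of_eq ?_)
    have : cB + a ≠ 0 := by linarith
    field_simp
    ring
  have h2 : a * (Real.log (cB + b) - Real.log (cB + a)) ≤ b - a := by
    refine (mul_le_mul_of_nonneg_left hlog ha).trans ?_
    rw [mul_div_assoc', div_le_iff₀ (by linarith)]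
    nlinarith
  set la := Real.log (cB + a)
  set lb := Real.log (cB + b)
  rw [div_sub_div _ _ (by linarith) (by linarith), div_le_div_iff₀ (by linarith) (by nlinarith)]
  have h3 : (b - a) * la / 2 ≤ b * la - lb * a := by nlinarith
  nlinarith [mul_le_mul_of_nonneg_left h3 (show 0 ≤ 2 * lb by linarith)]

/-- The points `φ(z_j)` approach `1` super-geometrically. -/
lemma px_ratio {i j : ℕ} (h : i < j) : px j / px i ≤ geo i * geo j := by
  have hj1 : (1 : ℝ) ≤ j := by exact_mod_cast (by omega : 1 ≤ j)
  have h1 := real_g_gap (pL_pos i).le (pL_mono h.le)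
  have hB := cB_gt
  have hl := ten_lt_log (x := pL j) (by linarith [pL_pos j])
  have hl2 := log_pL j
  have hl3 : Real.log ((j : ℝ) + 2) ≤ j + 1 := by
    have := Real.log_le_sub_one_of_pos (show (0 : ℝ) < j + 2 by linarith)
    linarith
  have h2 : 4 * ((j : ℝ) + 1) ≤ (pL j - pL i) / (2 * Real.log (cB + pL j)) := by
    rw [le_div_iff₀ (by linarith)]
    refine le_trans ?_ (pL_gap h)
    have h4 : 2 * Real.log (cB + pL j) ≤ 30 * ((j : ℝ) + 1) := by linarith
    have h5 : 4 * ((j : ℝ) + 1) * (2 * Real.log (cB + pL j)) ≤ 4 * ((j : ℝ) + 1) * (30 * (j + 1)) :=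
      mul_le_mul_of_nonneg_left h4 (by linarith)
    have h6 : 30 * ((j : ℝ) + 1) ^ 2 ≤ cB * ((j : ℝ) + 1) ^ 3 := by
      have : (30 : ℝ) * 1 ≤ cB * ((j : ℝ) + 1) := by nlinarith
      nlinarith [mul_le_mul_of_nonneg_right this (sq_nonneg ((j : ℝ) + 1))]
    nlinarith
  have h3 : px j / px i ≤ Real.exp (-(4 * ((j : ℝ) + 1))) := by
    unfold px
    rw [← Real.exp_sub]
    exact Real.exp_le_exp.2 (by linarith)
  refine h3.trans ?_
  have h4 : Real.exp (-(4 * ((j : ℝ) + 1))) = Real.exp (-4) ^ (j + 1) := by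
    rw [← Real.exp_nat_mul]; congr 1; push_cast; ring
  have h5 : Real.exp (-4) ≤ 1 / 16 := by
    rw [Real.exp_neg, one_div]
    refine inv_anti₀ (by norm_num) ?_
    have e : Real.exp 4 = Real.exp 1 ^ 4 := by rw [← Real.exp_nat_mul]; norm_num
    have h1 : (2 : ℝ) ≤ Real.exp 1 := by linarith [Real.add_one_le_exp (1 : ℝ)]
    have h3 : (2 : ℝ) ^ 4 ≤ Real.exp 1 ^ 4 := by gcongr
    rw [e]; norm_num at h3 ⊢; exact h3
  rw [h4]
  calc Real.exp (-4) ^ (j + 1) ≤ (1 / 16) ^ (j + 1) := by gcongr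
    _ = (1 / 4) ^ (j + 1) * (1 / 4) ^ (j + 1) := by rw [← mul_pow]; norm_num
    _ ≤ geo i * geo j := by
        unfold geo
        refine mul_le_mul_of_nonneg_right ?_ (by positivity)
        exact pow_le_pow_of_le_one (by norm_num) (by norm_num) (by omega)

lemma px_pos (j : ℕ) : 0 < px j := Real.exp_pos _

lemma px_lt_one (j : ℕ) : px j < 1 := by
  unfold px
  rw [Real.exp_lt_one_iff, neg_lt_zero]
  exact div_pos (pL_pos j) (by linarith [ten_lt_log (x := pL j) (by linarith [pL_pos j])])

lemma gramM_off {i j : ℕ} (h : i ≠ j) : gramM (px i) (px j) ≤ geo i * geo j := by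
  rcases lt_or_gt_of_ne h with h | h
  · exact (gramM_le_div (px_pos i) (px_lt_one i) (px_pos j)).trans (px_ratio h)
  · rw [gramM_comm, mul_comm]
    exact (gramM_le_div (px_pos j) (px_lt_one j) (px_pos i)).trans (px_ratio h)

lemma pd_pos (j : ℕ) : 0 < pd j := Real.exp_pos _

lemma pd_lt_one (j : ℕ) : pd j < 1 := by
  unfold pd; rw [Real.exp_lt_one_iff]; linarith [pL_pos j]

lemma pz_mem (j : ℕ) : pz j ∈ uD := by
  simp only [uD, mem_ball, dist_zero_right, pz, Complex.norm_real]
  rw [Real.norm_of_nonneg (by linarith [pd_lt_one j])]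
  linarith [pd_pos j]

lemma Lz_pz (j : ℕ) : Lz (pz j) = pL j := by
  have : (1 : ℂ) - pz j = (pd j : ℂ) := by simp [pz]
  rw [Lz, this, ← Complex.ofReal_log (pd_pos j).le, pd, Real.log_exp]
  simp

lemma psi_pz (j : ℕ) : psi (pz j) = px j := by
  rw [psi, Lz_pz, gL_ofReal (by linarith [pL_pos j]), ← Complex.ofReal_neg, ← Complex.ofReal_exp]
  rfl

lemma phi_pz (j : ℕ) : phi (pz j) = ((1 - px j : ℝ) : ℂ) := by
  rw [phi, psi_pz]; simp

lemma ball_subset_uD (j : ℕ) : ball (pz j) (pd j / 2) ⊆ uD := by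
  refine ball_subset_ball' ?_
  rw [dist_zero_right, pz, Complex.norm_real, Real.norm_of_nonneg (by linarith [pd_lt_one j])]
  linarith [pd_pos j]

lemma pd_ratio {i j : ℕ} (h : i < j) : 3 * pd j ≤ pd i := by
  have h1 := pL_gap h
  have hB := cB_gt
  have hj : (1 : ℝ) ≤ ((j : ℝ) + 1) ^ 3 := one_le_pow₀ (by linarith [(j.cast_nonneg : (0 : ℝ) ≤ j)])
  have h2 : 2 ≤ pL j - pL i := by nlinarith
  have h3 : 3 ≤ Real.exp (pL j - pL i) := by linarith [Real.add_one_le_exp (pL j - pL i)]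
  have h4 : pd i = Real.exp (pL j - pL i) * pd j := by
    unfold pd; rw [← Real.exp_add]; congr 1; ring
  rw [h4]
  exact mul_le_mul_of_nonneg_right h3 (pd_pos j).le

lemma balls_disjoint_of_lt {i j : ℕ} (h : i < j) :
    Disjoint (ball (pz i) (pd i / 2)) (ball (pz j) (pd j / 2)) := by
  refine ball_disjoint_ball ?_
  have h1 := pd_ratio h
  have h2 : dist (pz i) (pz j) = pd i - pd j := by
    rw [dist_comm, dist_eq_norm, pz, pz, ← Complex.ofReal_sub, Complex.norm_real, Real.norm_of_nonneg]
    · ring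
    · linarith [pd_pos j]
  rw [h2]; linarith

lemma balls_disjoint {i j : ℕ} (h : i ≠ j) :
    Disjoint (ball (pz i) (pd i / 2)) (ball (pz j) (pd j / 2)) := by
  rcases lt_or_gt_of_ne h with h | h
  · exact balls_disjoint_of_lt h
  · exact (balls_disjoint_of_lt h).symm

lemma norm_gLd_ge {x : ℝ} (hx : 0 ≤ x) : 1 / (2 * Real.log (cB + x)) ≤ ‖gLd x‖ := by
  have hx' : -1 < (x : ℂ).re := by simp; linarith
  have h1 := norm_second_le hx'
  have h3 := ten_lt_log (x := x) (by linarith)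
  have h0 : 0 < cB + x := by linarith [cB_pos]
  have h4 : ‖Complex.log (cB + (x : ℂ))‖ = Real.log (cB + x) := by
    rw [← Complex.ofReal_add, ← Complex.ofReal_log h0.le, Complex.norm_real,
      Real.norm_of_nonneg (by linarith)]
  rw [h4] at h1
  have h5 : ‖1 / Complex.log (cB + (x : ℂ))‖ = 1 / Real.log (cB + x) := by
    rw [norm_div, norm_one, h4]
  have h6 := norm_sub_norm_le (1 / Complex.log (cB + (x : ℂ)))
    (x / ((cB + (x : ℂ)) * Complex.log (cB + x) ^ 2))
  have h7 : 1 / Real.log (cB + x) ^ 2 ≤ 1 / (2 * Real.log (cB + x)) :=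
    one_div_le_one_div_of_le (by linarith) (by nlinarith)
  have h8 : 1 / (2 * Real.log (cB + x)) = 1 / Real.log (cB + x) / 2 := by
    field_simp
  unfold gLd
  linarith

/-! ### Lower bound for the approximation numbers -/

/-- Lower bound for `‖f ∘ φ‖²` on the span of the test functions, from the values of
`(f ∘ φ)'` at the points `z_j`. -/
lemma eDNormSq_comp_ge (n : ℕ) (c : Fin n → ℂ) :
    ENNReal.ofReal ((1 / (2 * Real.log (cB + pL n))) ^ 2 / 256 * ∑ i, ‖c i‖ ^ 2)
      ≤ eDNormSq (fun z => ∑ j : Fin n, c j * kerF (px j) (phi z)) := by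
  set δ := 1 / (2 * Real.log (cB + pL n)) with hδ
  have hδ0 : 0 < δ := by
    have := ten_lt_log (x := pL n) (by linarith [pL_pos n])
    positivity
  set F : ℂ → ℂ := fun z => ∑ j : Fin n, c j * kerF (px j) (phi z) with hF
  have hder : ∀ z ∈ uD, HasDerivAt F ((∑ j : Fin n, c j *
      ((px j : ℂ) / (1 - ((1 - px j : ℝ) : ℂ) * phi z) ^ 2)) * (psi z * gLd (Lz z) / (1 - z))) z := by
    intro z hz
    have h1 : HasDerivAt (fun w => ∑ j : Fin n, c j * kerF (px j) w) (∑ j : Fin n, c j *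
      ((px j : ℂ) / (1 - ((1 - px j : ℝ) : ℂ) * phi z) ^ 2)) (phi z) :=
      HasDerivAt.fun_sum fun j _ =>
        (hasDerivAt_kerF (px_pos j) (px_lt_one j) (isSchur_phi.2 hz)).const_mul (c j)
    exact h1.comp z (hasDerivAt_phi hz)
  have hdiff : DifferentiableOn ℂ F uD := fun z hz =>
    (hder z hz).differentiableAt.differentiableWithinAt
  have hpt : ∀ i : Fin n, ‖∑ j : Fin n, (gramM (px i) (px j) : ℂ) * c j‖ ^ 2 * (δ ^ 2 / 4)
      ≤ (pd i / 2) ^ 2 * ‖deriv F (pz i)‖ ^ 2 := by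
    intro i
    have hpd : (pd i : ℂ) ≠ 0 := by exact_mod_cast (pd_pos i).ne'
    have e : (pd i : ℂ) * deriv F (pz i)
        = (∑ j : Fin n, (gramM (px i) (px j) : ℂ) * c j) * gLd (pL i) := by
      rw [(hder _ (pz_mem i)).deriv, psi_pz, Lz_pz, phi_pz,
        show (1 : ℂ) - pz i = (pd i : ℂ) by simp [pz], Finset.sum_mul, Finset.sum_mul,
        Finset.mul_sum]
      refine Finset.sum_congr rfl fun j _ => ?_
      rw [gramM_comm, gramM]
      push_cast
      field_simp
    have e2 : pd i * ‖deriv F (pz i)‖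
        = ‖∑ j : Fin n, (gramM (px i) (px j) : ℂ) * c j‖ * ‖gLd (pL i)‖ := by
      rw [← norm_mul, ← e, norm_mul, Complex.norm_real, Real.norm_of_nonneg (pd_pos i).le]
    have hg : δ ≤ ‖gLd (pL i)‖ := by
      refine le_trans ?_ (norm_gLd_ge (pL_pos i).le)
      have h1 := ten_lt_log (x := pL i) (by linarith [pL_pos i])
      have h2 : pL i ≤ pL n := pL_mono i.2.le
      have h3 : Real.log (cB + pL i) ≤ Real.log (cB + pL n) :=
        Real.log_le_log (by linarith [cB_pos, pL_pos i]) (by linarith)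
      exact one_div_le_one_div_of_le (by linarith) (by linarith)
    have hg2 : δ ^ 2 ≤ ‖gLd (pL i)‖ ^ 2 := by gcongr
    calc _ ≤ ‖∑ j : Fin n, (gramM (px i) (px j) : ℂ) * c j‖ ^ 2 * (‖gLd (pL i)‖ ^ 2 / 4) := by
          gcongr
      _ = (‖∑ j : Fin n, (gramM (px i) (px j) : ℂ) * c j‖ * ‖gLd (pL i)‖) ^ 2 / 4 := by ring
      _ = _ := by rw [← e2]; ring
  have hlow := gram_lower (M := fun i j : Fin n => gramM (px i) (px j))
    (fun i => gramM_diag_ge (px_pos i) (px_lt_one i))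
    (fun i j => gramM_nonneg (px_pos i) (px_pos j))
    (fun i j hij => gramM_off (fun h => hij (Fin.ext h))) c
  calc ENNReal.ofReal (δ ^ 2 / 256 * ∑ i, ‖c i‖ ^ 2)
      ≤ ENNReal.ofReal (∑ i : Fin n, (pd i / 2) ^ 2 * ‖deriv F (pz i)‖ ^ 2) := by
        refine ENNReal.ofReal_le_ofReal ?_
        refine le_trans ?_ (Finset.sum_le_sum fun i _ => hpt i)
        rw [← Finset.sum_mul]
        nlinarith [mul_le_mul_of_nonneg_right hlow (show 0 ≤ δ ^ 2 / 4 by positivity)]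
    _ = ∑ i : Fin n, ENNReal.ofReal ((pd i / 2) ^ 2 * ‖deriv F (pz i)‖ ^ 2) :=
        ENNReal.ofReal_sum_of_nonneg fun i _ => by positivity
    _ ≤ ∑ i : Fin n, ∫⁻ z in ball (pz i) (pd i / 2), ENNReal.ofReal (‖deriv F z‖ ^ 2) ∂nA :=
        Finset.sum_le_sum fun i _ => area_mean (half_pos (pd_pos i))
          ((hdiff.deriv isOpen_uD).mono (ball_subset_uD i))
    _ = ∫⁻ z in ⋃ i : Fin n, ball (pz i) (pd i / 2), ENNReal.ofReal (‖deriv F z‖ ^ 2) ∂nA := by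
        rw [lintegral_iUnion (fun i => measurableSet_ball)
          (fun i j hij => balls_disjoint (fun h => hij (Fin.ext h))), tsum_fintype]
    _ ≤ ∫⁻ z in uD, ENNReal.ofReal (‖deriv F z‖ ^ 2) ∂nA :=
        lintegral_mono_set (iUnion_subset fun i => ball_subset_uD i)
    _ ≤ eDNormSq F := by rw [eDNormSq_eq]; exact le_add_self

/-- An operator of rank less than `n` kills some combination of the `n` test functions, on which
`C_φ` is bounded below. -/
lemma approxNum_ge (n : ℕ) : ENNReal.ofReal (1 / (2 * Real.log (cB + pL n)) / 32)
    ≤ eApproxNum MemDStar eDNormSq (compOp phi) n := by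
  set δ := 1 / (2 * Real.log (cB + pL n)) with hδ
  have hδ0 : 0 < δ := by
    have := ten_lt_log (x := pL n) (by linarith [pL_pos n])
    positivity
  refine le_sInf ?_
  rintro _ ⟨R, hR, rfl⟩
  refine le_sInf fun C hC => ?_
  -- a combination of the `n` test functions annihilated by `R`, by counting dimensions
  let T : (Fin n → ℂ) →ₗ[ℂ] (ℂ → ℂ) :=
    Fintype.linearCombination ℂ (fun j : Fin n => kerF (px j))
  obtain ⟨c, hc0, hc⟩ : ∃ c : Fin n → ℂ, c ≠ 0 ∧ R (T c) = 0 := by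
    by_contra! hcon
    have hinj : Function.Injective (R.rangeRestrict ∘ₗ T) := by
      rw [← LinearMap.ker_eq_bot, LinearMap.ker_eq_bot']
      intro c hc
      by_contra hne
      exact hcon c hne (congrArg Subtype.val hc)
    have := LinearMap.rank_le_of_injective _ hinj
    rw [rank_fin_fun] at this
    exact absurd (this.trans_lt hR) (lt_irrefl _)
  have hT : T c = fun w => ∑ j : Fin n, c j * kerF (px j) w := by
    funext w
    simp [T, Fintype.linearCombination_apply]
  set s := ∑ i, ‖c i‖ ^ 2 with hs
  have hs0 : 0 < s := by
    obtain ⟨i, hi⟩ := Function.ne_iff.1 hc0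
    have hi' : c i ≠ 0 := hi
    exact Finset.sum_pos' (fun i _ => by positivity) ⟨i, Finset.mem_univ i, by positivity⟩
  have hup : eDNormSq (T c) ≤ ENNReal.ofReal (2 * s) := by
    rw [hT]
    refine (eDNormSq_kerF_le (fun i => px_pos i) (fun i => px_lt_one i) c).trans ?_
    exact ENNReal.ofReal_le_ofReal (gram_upper
      (M := fun i j : Fin n => gramM (px i) (px j))
      (fun i => gramM_diag_le (px_pos i) (px_lt_one i))
      (fun i j hij => gramM_off (fun h => hij (Fin.ext h))) _ fun i => norm_nonneg _)
  have hmem : MemDStar (T c) := by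
    refine ⟨⟨?_, hup.trans_lt ENNReal.ofReal_lt_top⟩, ?_⟩
    · rw [hT]
      exact fun w hw => (HasDerivAt.fun_sum fun (j : Fin n) _ =>
        (hasDerivAt_kerF (px_pos j) (px_lt_one j) hw).const_mul
          (c j)).differentiableAt.differentiableWithinAt
    · simp [hT, kerF]
  have h1 := hC (T c) hmem
  have h2 : (fun z => compOp phi (T c) z - R (T c) z)
      = fun z => ∑ j : Fin n, c j * kerF (px j) (phi z) := by
    rw [hc, hT]; funext z; simp [compOp]
  simp only [h2] at h1
  by_contra! hlt
  have h3 := (eDNormSq_comp_ge n c).trans (h1.trans (mul_le_mul'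
    (pow_le_pow_left₀ zero_le hlt.le 2) hup))
  rw [← ENNReal.ofReal_pow (by positivity), ← ENNReal.ofReal_mul (by positivity),
    ENNReal.ofReal_le_ofReal_iff (by positivity)] at h3
  have : 0 < δ ^ 2 * s := by positivity
  nlinarith

/-- The series `∑ (κ / log n)^p` diverges for every `p`. -/
lemma not_summable_log (p : ℝ) :
    ¬ Summable fun n : ℕ => (1 / (1280 * Real.log ((n : ℝ) + 3))) ^ p := by
  intro hsum
  have ho : (fun x : ℝ => Real.log x ^ p) =o[atTop] fun x : ℝ => x ^ (1 : ℝ) :=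
    isLittleO_log_rpow_rpow_atTop p one_pos
  have hb := ho.bound (c := ((1280 : ℝ) ^ p)⁻¹) (by positivity)
  have htend : Tendsto (fun n : ℕ => (n : ℝ) + 3) atTop atTop :=
    tendsto_atTop_add_const_right _ _ tendsto_natCast_atTop_atTop
  have hev := htend.eventually hb
  have hharm : Summable fun n : ℕ => 1 / ((n : ℝ) + 3) := by
    refine Summable.of_norm_bounded_eventually_nat hsum ?_
    filter_upwards [hev] with n hn
    have hlog : 0 < Real.log ((n : ℝ) + 3) :=
      Real.log_pos (by linarith [(n.cast_nonneg : (0 : ℝ) ≤ n)])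
    rw [Real.rpow_one, Real.norm_of_nonneg (by positivity), Real.norm_of_nonneg (by positivity),
      inv_mul_eq_div, le_div_iff₀ (by positivity), mul_comm, ← Real.mul_rpow (by norm_num) hlog.le] at hn
    rw [Real.norm_of_nonneg (by positivity), Real.div_rpow zero_le_one (by positivity),
      Real.one_rpow]
    exact one_div_le_one_div_of_le (by positivity) hn
  have := (summable_nat_add_iff (f := fun n : ℕ => 1 / (n : ℝ)) 3).1 (by simpa using hharm)
  exact Real.not_summable_one_div_natCast this

lemma approxNum_ge' (n : ℕ) : ENNReal.ofReal (1 / (1280 * Real.log ((n : ℝ) + 3)))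
    ≤ eApproxNum MemDStar eDNormSq (compOp phi) (n + 1) := by
  refine le_trans (ENNReal.ofReal_le_ofReal ?_) (approxNum_ge (n + 1))
  have h1 := log_pL (n + 1)
  have h2 := ten_lt_log (x := pL (n + 1)) (by linarith [pL_pos (n + 1)])
  have e : ((n + 1 : ℕ) : ℝ) + 2 = n + 3 := by push_cast; ring
  rw [e] at h1
  have h3 : 1 ≤ Real.log ((n : ℝ) + 3) := by
    have hn : (0 : ℝ) ≤ n := n.cast_nonneg
    rw [Real.le_log_iff_exp_le (by positivity)]
    linarith [Real.exp_one_lt_d9]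
  rw [div_div]
  exact one_div_le_one_div_of_le (by linarith) (by linarith)

lemma not_schatten_phi (p : ℝ) (hp : 0 < p) : ¬ MemSchattenD p phi := by
  rintro ⟨-, hsum⟩
  have hlog : ∀ n : ℕ, 0 < Real.log ((n : ℝ) + 3) := fun n =>
    Real.log_pos (by linarith [(n.cast_nonneg : (0 : ℝ) ≤ n)])
  have hle : ∑' n : ℕ, ENNReal.ofReal ((1 / (1280 * Real.log ((n : ℝ) + 3))) ^ p)
      ≤ ∑' n : ℕ, (eApproxNum MemDStar eDNormSq (compOp phi) (n + 1)) ^ p := by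
    refine ENNReal.tsum_le_tsum fun n => ?_
    have := hlog n
    rw [← ENNReal.ofReal_rpow_of_pos (by positivity)]
    exact ENNReal.rpow_le_rpow (approxNum_ge' n) hp.le
  have h2 := ENNReal.summable_toReal (ne_top_of_le_ne_top hsum hle)
  refine not_summable_log p (h2.congr fun n => ?_)
  have := hlog n
  exact ENNReal.toReal_ofReal (by positivity)

/- STATEMENT 15 -/
theorem stmt15 :
    ∃ φ : ℂ → ℂ, IsSchur φ ∧ φ 0 = 0 ∧
      IsCompactOpOn MemDStar eDNormSq (compOp φ) ∧
      ∀ p : ℝ, 0 < p → ¬ MemSchattenD p φ := by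
  exact ⟨phi, isSchur_phi, phi_zero, compact_phi, not_schatten_phi⟩

end
end

section
/- Let χ be the cusp map: with a = 1 − (2/π) log(√2 − 1), define for z ∈ D: χ₀(z) = (w − i)/(−i w + 1) where w = ((z − i)/(iz − 1))^{1/2} (principal branch of the square root), χ₁(z) = log χ₀(z) (principal branch of the logarithm), χ₂(z) = −(2/π) χ₁(z) + 1, χ₃(z) = a/χ₂(z), and χ(z) = 1 − χ₃(z). Then χ is a univalent Schur function with χ(0) = 0, χ ∈ 𝒟_*, and C_χ belongs to the Schatten class S_p(𝒟_*) for every p > 0. -/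
/-!
Write `χ = ω ∘ χ₂`, where `ω(s) = 1 - a/s` (`cuspOm`) maps the half-plane `H = {Re s > a/2}`
(`cuspH`) injectively into the disk, and `χ₂` maps the disk injectively into the half-strip
`{Re s > 1, |Im s| < 1}`, which lies inside `H` because `1 < a ≤ 33/20` (`cuspA_bounds`).
Injectivity of `χ₂` comes from an explicit left inverse (`cuspInv`). Hence `χ` is a univalent
self-map of the disk, and the change of variables formula (`lintegral_deriv_comp`) shows that
composition with `χ` does not increase the Dirichlet integral (`comp_energy`). Applied to the
identity function, this gives `χ ∈ 𝒟_*`.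

For the approximation numbers, let `f ∈ 𝒟_*` and `F = f ∘ ω`. The change of variables gives
`∫_H |F′|² dA ≤ ‖f‖²`, and the area mean value inequality (`sub_mean`) turns this into the
pointwise bound `|F′(s)| ≤ ‖f‖ / (Re s - a/2)` (`pull_pointwise`). Cut the half-strip into the
dyadic pieces `2^k < Re s < 2^(k+1)`, of area at most `2 · 2^k`. The `k`-th piece lies in the disc
of centre `16 · 2^k` and radius `15.04 · 2^k`, while `F′ = O(‖f‖ / 2^k)` on the concentric disc of
radius `15.1 · 2^k`. The Taylor polynomial of `F′` with `K` terms at this centre therefore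
approximates `F′` on the piece with error `O(θ^K ‖f‖ / 2^k)`, `θ = 15.04 / 15.1` (`piece_fine`). On
the pieces with `k ≥ K`, approximating `F′` by `0` costs only `O(‖f‖² 2^(-k))` in energy
(`piece_crude`). Integrating the Taylor polynomials on the first `K` pieces yields an operator
`cuspR K` of rank at most `K²` with `‖C_χ - cuspR K‖ = O(θ^K)` (`cusp_energy_le`). Hence
`a_n(C_χ) = O(θ^√n)`, which is `p`-summable for every `p > 0`.

The approximant `cuspR K f` is analytic on each piece and jumps across the seams `Re χ₂ = 2^k`.
The definition of `eApproxNum` admits such operators, and the seams are null sets for `nA`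
(`nA_cuspSeam`), so they do not contribute to the integral of the squared derivative. (Orthogonal
projection of the piecewise derivative onto the analytic functions in `L²(D)` would turn
`cuspR K` into an operator on `𝒟_*` of no larger rank and no larger error.)
-/

open Complex MeasureTheory Metric Set Filter Topology
open scoped ENNReal NNReal

noncomputable section

/- STATEMENT 16: the cusp map -/
def cuspA : ℝ := 1 - 2 / Real.pi * Real.log (Real.sqrt 2 - 1)

def cuspχ₀ (z : ℂ) : ℂ :=
  (((z - Complex.I) / (Complex.I * z - 1)) ^ ((1 : ℂ) / 2) - Complex.I) /
    (-Complex.I * ((z - Complex.I) / (Complex.I * z - 1)) ^ ((1 : ℂ) / 2) + 1)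

def cuspχ₁ (z : ℂ) : ℂ := Complex.log (cuspχ₀ z)

def cuspχ₂ (z : ℂ) : ℂ := -(((2 / Real.pi : ℝ)) : ℂ) * cuspχ₁ z + 1

def cuspχ₃ (z : ℂ) : ℂ := ((cuspA : ℝ) : ℂ) / cuspχ₂ z

def cuspχ (z : ℂ) : ℂ := 1 - cuspχ₃ z

/-! ### Change of variables and the area mean value inequality -/

instance nA_isAddHaar : Measure.IsAddHaarMeasure nA :=
  Measure.IsAddHaarMeasure.smul volume (by simp) (by simp [Real.pi_pos])

/-- The real Jacobian of multiplication by `d` is `|d|²`. -/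
lemma abs_det_restrictScalars_smulRight (d : ℂ) :
    |((ContinuousLinearMap.toSpanSingleton ℂ d).restrictScalars ℝ).det| = ‖d‖ ^ 2 := by
  have : ((ContinuousLinearMap.toSpanSingleton ℂ d).restrictScalars ℝ).det = ‖d‖ ^ 2 := by
    simp [ContinuousLinearMap.det, LinearMap.det_restrictScalars, Algebra.norm_complex_apply,
      Complex.normSq_eq_norm_sq]
  rw [this, abs_of_nonneg (by positivity)]

/-- Change of variables for an injective analytic map. -/
lemma lintegral_image_analytic {φ : ℂ → ℂ} {U : Set ℂ} (hU : IsOpen U)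
    (hφ : DifferentiableOn ℂ φ U) (inj : InjOn φ U) {Z : Set ℂ} (hZ : MeasurableSet Z) (hZU : Z ⊆ U)
    (G : ℂ → ℝ≥0∞) :
    ∫⁻ w in φ '' Z, G w ∂nA = ∫⁻ z in Z, ENNReal.ofReal (‖deriv φ z‖ ^ 2) * G (φ z) ∂nA := by
  have hd : ∀ z ∈ Z, HasFDerivWithinAt φ
      ((ContinuousLinearMap.toSpanSingleton ℂ (deriv φ z)).restrictScalars ℝ) Z z := by
    intro z hz
    have := ((hφ.differentiableAt (hU.mem_nhds (hZU hz))).hasDerivAt).hasFDerivAt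
    exact (this.restrictScalars ℝ).hasFDerivWithinAt
  rw [lintegral_image_eq_lintegral_abs_det_fderiv_mul nA hZ hd (inj.mono hZU)]
  simp only [abs_det_restrictScalars_smulRight]

/-- Conformal invariance of the Dirichlet integral under an injective analytic map. -/
lemma lintegral_deriv_comp {φ g : ℂ → ℂ} {U V : Set ℂ} (hU : IsOpen U) (hV : IsOpen V)
    (hφ : DifferentiableOn ℂ φ U) (inj : InjOn φ U) (hg : DifferentiableOn ℂ g V)
    (hm : MapsTo φ U V) :
    ∫⁻ z in U, ENNReal.ofReal (‖deriv (fun z => g (φ z)) z‖ ^ 2) ∂nA =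
     ∫⁻ w in φ '' U, ENNReal.ofReal (‖deriv g w‖ ^ 2) ∂nA := by
  rw [lintegral_image_analytic hU hφ inj hU.measurableSet le_rfl]
  refine setLIntegral_congr_fun hU.measurableSet fun z hz => ?_
  have h1 := (hφ.differentiableAt (hU.mem_nhds hz)).hasDerivAt
  have h2 := (hg.differentiableAt (hV.mem_nhds (hm hz))).hasDerivAt
  have h3 : deriv (fun z => g (φ z)) z = deriv g (φ z) * deriv φ z := (h2.comp z h1).deriv
  simp only [h3]
  rw [← ENNReal.ofReal_mul (by positivity), norm_mul]
  congr 1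
  ring

/-- The value `h(c)²` is the circle average of the analytic function `h²`. -/
lemma circle_mean_le {h : ℂ → ℂ} {c : ℂ} {R r : ℝ} (hd : DifferentiableOn ℂ h (ball c R))
    (hr : 0 < r) (hrR : r < R) :
    ENNReal.ofReal (2 * Real.pi * ‖h c‖ ^ 2) ≤
     ∫⁻ θ in Ioo (-Real.pi) Real.pi, ENNReal.ofReal (‖h (circleMap c r θ)‖ ^ 2) := by
  have hsub : closedBall c |r| ⊆ ball c R := by
    rw [abs_of_pos hr]; exact closedBall_subset_ball hrR
  have hd2 : DifferentiableOn ℂ (fun z => h z ^ 2) (closedBall c |r|) := (hd.mono hsub).pow 2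
  have h1 : Real.circleAverage (fun z => h z ^ 2) c r = h c ^ 2 :=
    DiffContOnCl.circleAverage (hd2.diffContOnCl_ball le_rfl)
  rw [Real.circleAverage_eq_integral_add (-Real.pi),
    intervalIntegral.integral_comp_add_right (fun θ => h (circleMap c r θ) ^ 2)] at h1
  have h2 : (∫ θ in (-Real.pi)..Real.pi, h (circleMap c r θ) ^ 2) = (2 * Real.pi) * h c ^ 2 := by
    rw [← h1]
    have e1 : (0 : ℝ) + -Real.pi = -Real.pi := by ring
    have e2 : 2 * Real.pi + -Real.pi = Real.pi := by ring
    rw [e1, e2]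
    have : (Real.pi : ℂ) ≠ 0 := by exact_mod_cast Real.pi_ne_zero
    simp
    field_simp
  rw [intervalIntegral.integral_of_le (by linarith [Real.pi_pos]), integral_Ioc_eq_integral_Ioo] at h2
  calc ENNReal.ofReal (2 * Real.pi * ‖h c‖ ^ 2)
      = ‖(2 * Real.pi) * h c ^ 2‖ₑ := by
        rw [← ofReal_norm]; simp [abs_of_pos Real.pi_pos]
    _ ≤ ∫⁻ θ in Ioo (-Real.pi) Real.pi, ‖h (circleMap c r θ) ^ 2‖ₑ := by
        rw [← h2]; exact enorm_integral_le_lintegral_enorm _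
    _ = _ := by
        refine lintegral_congr fun θ => ?_
        rw [← ofReal_norm, norm_pow]

/-- Area mean value inequality `|h(c)|² R² ≤ ∫_{B(c,R)} |h|² dA`: integrate `circle_mean_le` against
`r dr` in polar coordinates. -/
lemma sub_mean {h : ℂ → ℂ} {c : ℂ} {R : ℝ} (hR : 0 < R) (hd : DifferentiableOn ℂ h (ball c R)) :
    ENNReal.ofReal (‖h c‖ ^ 2 * R ^ 2) ≤
     ∫⁻ z in ball c R, ENNReal.ofReal (‖h z‖ ^ 2) ∂nA := by
  set G : ℂ → ℝ≥0∞ := (ball c R).indicator fun z => ENNReal.ofReal (‖h z‖ ^ 2) with hG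
  have hGm : Measurable G := by
    classical
    rw [hG, ← Set.piecewise_eq_indicator]
    refine ContinuousOn.measurable_piecewise ?_ continuousOn_const measurableSet_ball
    exact ENNReal.continuous_ofReal.comp_continuousOn (hd.continuousOn.norm.pow 2)
  have key : ENNReal.ofReal (Real.pi * (‖h c‖ ^ 2 * R ^ 2)) ≤ ∫⁻ z, G z := by
    rw [← lintegral_add_left_eq_self G c, ← Complex.lintegral_comp_polarCoord_symm]
    have hpc : ∀ p : ℝ × ℝ, c + Complex.polarCoord.symm p = circleMap c p.1 p.2 := by
      intro p
      simp [circleMap, Complex.polarCoord_symm_apply, Complex.exp_mul_I]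
    simp only [hpc, smul_eq_mul]
    have hcm : Measurable fun p : ℝ × ℝ => circleMap c p.1 p.2 := by
      unfold circleMap; fun_prop
    rw [polarCoord_target, Measure.volume_eq_prod, ← Measure.prod_restrict,
      lintegral_prod (fun p : ℝ × ℝ => ENNReal.ofReal p.1 * G (circleMap c p.1 p.2))
        (((ENNReal.measurable_ofReal.comp measurable_fst).mul (hGm.comp hcm)).aemeasurable)]
    have hle : ∀ r ∈ Ioo 0 R, ENNReal.ofReal (r * (2 * Real.pi * ‖h c‖ ^ 2)) ≤
       ∫⁻ θ in Ioo (-Real.pi) Real.pi, ENNReal.ofReal r * G (circleMap c r θ) := by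
      intro r hr
      rw [lintegral_const_mul' _ _ (by simp), ENNReal.ofReal_mul hr.1.le]
      gcongr
      refine (circle_mean_le hd hr.1 hr.2).trans (le_of_eq ?_)
      refine lintegral_congr fun θ => ?_
      rw [hG, indicator_of_mem]
      simp [abs_of_pos hr.1, hr.2, dist_eq_norm]
    calc ENNReal.ofReal (Real.pi * (‖h c‖ ^ 2 * R ^ 2))
        = ∫⁻ r in Ioo 0 R, ENNReal.ofReal (r * (2 * Real.pi * ‖h c‖ ^ 2)) := by
          rw [← ofReal_integral_eq_lintegral_ofReal]
          · rw [← integral_Ioc_eq_integral_Ioo, ← intervalIntegral.integral_of_le hR.le]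
            rw [intervalIntegral.integral_mul_const, integral_id]
            congr 1; ring
          · refine Integrable.mono_measure (ν := volume.restrict (Icc 0 R)) ?_
              (Measure.restrict_mono Ioo_subset_Icc_self le_rfl)
            exact (by fun_prop : Continuous fun r : ℝ => r * (2 * Real.pi * ‖h c‖ ^ 2)).continuousOn.integrableOn_Icc
          · filter_upwards [ae_restrict_mem measurableSet_Ioo] with r hr
            have := hr.1.le
            have := Real.pi_pos
            simp only [Pi.zero_apply]; positivity
      _ ≤ ∫⁻ r in Ioo 0 R, ∫⁻ θ in Ioo (-Real.pi) Real.pi, ENNReal.ofReal r * G (circleMap c r θ) :=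
          setLIntegral_mono' measurableSet_Ioo hle
      _ ≤ _ := lintegral_mono_set Ioo_subset_Ioi_self
  rw [hG, lintegral_indicator measurableSet_ball] at key
  rw [nA, Measure.restrict_smul, lintegral_smul_measure, smul_eq_mul]
  rw [ENNReal.ofReal_mul Real.pi_pos.le] at key
  rw [← ENNReal.mul_le_mul_iff_right (a := ENNReal.ofReal Real.pi) (by simp [Real.pi_pos]) (by simp), ← mul_assoc,
    ENNReal.mul_inv_cancel (by simp [Real.pi_pos]) (by simp), one_mul]
  exact key

/-! ### The map `χ₂` from the disk into the half-strip -/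

lemma mem_uD_iff {z : ℂ} : z ∈ uD ↔ z.re ^ 2 + z.im ^ 2 < 1 := by
  rw [uD, mem_ball_zero_iff, ← sq_lt_one_iff₀ (norm_nonneg z), ← Complex.normSq_eq_norm_sq,
    Complex.normSq_apply]
  constructor <;> intro h <;> nlinarith

/-- The first step `z ↦ (z - i)/(iz - 1)`, mapping `D` onto the upper half-plane. -/
def cuspU (z : ℂ) : ℂ := (z - I) / (I * z - 1)

/-- The second step: the principal square root of `cuspU`, in the first quadrant. -/
def cuspW (z : ℂ) : ℂ := cuspU z ^ ((1 : ℂ) / 2)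

lemma cuspχ₀_eq (z : ℂ) : cuspχ₀ z = (cuspW z - I) / (-I * cuspW z + 1) := rfl

lemma cuspU_den {z : ℂ} (hz : z ∈ uD) : I * z - 1 ≠ 0 := by
  intro h
  have h1 := congrArg Complex.re h
  have h2 := congrArg Complex.im h
  simp at h1 h2
  have := mem_uD_iff.1 hz
  nlinarith

lemma cuspU_im {z : ℂ} (hz : z ∈ uD) : 0 < (cuspU z).im := by
  have h0 := Complex.normSq_pos.2 (cuspU_den hz)
  have := mem_uD_iff.1 hz
  rw [cuspU, Complex.div_im, ← sub_div]
  refine div_pos ?_ h0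
  simp
  nlinarith

lemma cuspU_slit {z : ℂ} (hz : z ∈ uD) : cuspU z ∈ slitPlane :=
  Complex.mem_slitPlane_iff.2 (Or.inr (cuspU_im hz).ne')

lemma cuspW_sq (z : ℂ) : cuspW z ^ 2 = cuspU z := by
  rw [cuspW, one_div]
  exact_mod_cast Complex.cpow_nat_inv_pow (cuspU z) (n := 2) two_ne_zero

lemma cuspW_pos {z : ℂ} (hz : z ∈ uD) : 0 < (cuspW z).re ∧ 0 < (cuspW z).im := by
  have h := cuspU_im hz
  have hre : 0 < (cuspW z).re := by
    have hne : cuspU z ≠ 0 := slitPlane_ne_zero (cuspU_slit hz)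
    rw [cuspW, Complex.cpow_def_of_ne_zero hne, Complex.exp_re]
    refine mul_pos (Real.exp_pos _) (Real.cos_pos_of_mem_Ioo ?_)
    have h1 := Complex.arg_le_pi (cuspU z)
    have h2 := Complex.neg_pi_lt_arg (cuspU z)
    have h3 : Complex.arg (cuspU z) ≠ Real.pi := slitPlane_arg_ne_pi (cuspU_slit hz)
    have h4 := lt_of_le_of_ne h1 h3
    have e : (Complex.log (cuspU z) * (1 / 2)).im = Complex.arg (cuspU z) / 2 := by
      simp [Complex.mul_im, Complex.log_im]; ring
    rw [e]
    constructor <;> linarith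
  refine ⟨hre, ?_⟩
  have h2 := congrArg Complex.im (cuspW_sq z)
  rw [pow_two, Complex.mul_im] at h2
  by_contra hn
  push Not at hn
  nlinarith [mul_nonneg hre.le (neg_nonneg.2 hn)]

lemma cuspχ₀_den {z : ℂ} (hz : z ∈ uD) : -I * cuspW z + 1 ≠ 0 := by
  intro h
  have h1 := congrArg Complex.re h
  simp at h1
  linarith [(cuspW_pos hz).2]

lemma cuspχ₀_re {z : ℂ} (hz : z ∈ uD) : 0 < (cuspχ₀ z).re := by
  have h0 := Complex.normSq_pos.2 (cuspχ₀_den hz)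
  obtain ⟨h1, h2⟩ := cuspW_pos hz
  rw [cuspχ₀_eq, Complex.div_re, ← add_div]
  refine div_pos ?_ h0
  simp
  nlinarith

lemma cuspχ₀_norm {z : ℂ} (hz : z ∈ uD) : ‖cuspχ₀ z‖ < 1 := by
  have h0 := norm_pos_iff.2 (cuspχ₀_den hz)
  obtain ⟨h1, h2⟩ := cuspW_pos hz
  rw [cuspχ₀_eq, norm_div, div_lt_one h0]
  refine lt_of_pow_lt_pow_left₀ 2 h0.le ?_
  rw [← Complex.normSq_eq_norm_sq, ← Complex.normSq_eq_norm_sq, Complex.normSq_apply,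
    Complex.normSq_apply]
  simp
  nlinarith

lemma cuspχ₀_slit {z : ℂ} (hz : z ∈ uD) : cuspχ₀ z ∈ slitPlane :=
  Complex.mem_slitPlane_iff.2 (Or.inl (cuspχ₀_re hz))

lemma cuspχ₂_re {z : ℂ} (hz : z ∈ uD) : 1 < (cuspχ₂ z).re := by
  have h := cuspχ₀_norm hz
  have h0 : 0 < ‖cuspχ₀ z‖ := norm_pos_iff.2 (slitPlane_ne_zero (cuspχ₀_slit hz))
  have hl := Real.log_neg h0 h
  have e : (cuspχ₂ z).re = 1 - 2 / Real.pi * Real.log ‖cuspχ₀ z‖ := by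
    rw [cuspχ₂, cuspχ₁, Complex.add_re, ← Complex.ofReal_neg, Complex.re_ofReal_mul,
      Complex.log_re, Complex.one_re]
    ring
  rw [e]
  have : 0 < 2 / Real.pi := by positivity
  nlinarith

lemma cuspχ₂_im {z : ℂ} (hz : z ∈ uD) : |(cuspχ₂ z).im| < 1 := by
  have h := abs_arg_lt_pi_div_two_iff.2 (Or.inl (cuspχ₀_re hz))
  have e : (cuspχ₂ z).im = -(2 / Real.pi) * arg (cuspχ₀ z) := by
    rw [cuspχ₂, cuspχ₁, Complex.add_im, ← Complex.ofReal_neg, Complex.im_ofReal_mul,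
      Complex.log_im, Complex.one_im]
    ring
  have hp := Real.pi_pos
  rw [e, abs_mul, abs_neg, abs_of_pos (by positivity), div_mul_eq_mul_div, div_lt_one hp]
  linarith

lemma cuspχ₂_diff : DifferentiableOn ℂ cuspχ₂ uD := by
  intro z hz
  refine DifferentiableAt.differentiableWithinAt ?_
  have hU : DifferentiableAt ℂ cuspU z := by
    have := cuspU_den hz
    unfold cuspU
    fun_prop (disch := assumption)
  have hW : DifferentiableAt ℂ cuspW z := hU.cpow_const (cuspU_slit hz)
  have h0 : DifferentiableAt ℂ cuspχ₀ z := by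
    have := cuspχ₀_den hz
    have e : cuspχ₀ = fun z => (cuspW z - I) / (-I * cuspW z + 1) := rfl
    rw [e]
    fun_prop (disch := assumption)
  have h1 : DifferentiableAt ℂ cuspχ₁ z := h0.clog (cuspχ₀_slit hz)
  unfold cuspχ₂
  fun_prop

/-- The explicit inverse of `cuspχ₂`. -/
def cuspInv (s : ℂ) : ℂ :=
  (((exp ((1 - s) * (Real.pi / 2)) + I) / (1 + I * exp ((1 - s) * (Real.pi / 2)))) ^ 2 - I) /
    (I * ((exp ((1 - s) * (Real.pi / 2)) + I) / (1 + I * exp ((1 - s) * (Real.pi / 2)))) ^ 2 - 1)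

lemma cuspχ₂_exp {z : ℂ} (hz : z ∈ uD) :
    exp ((1 - cuspχ₂ z) * (Real.pi / 2)) = cuspχ₀ z := by
  have e : (1 - cuspχ₂ z) * (Real.pi / 2) = cuspχ₁ z := by
    rw [cuspχ₂]
    have : (Real.pi : ℂ) ≠ 0 := by exact_mod_cast Real.pi_ne_zero
    push_cast
    field_simp
    ring
  rw [e, cuspχ₁, exp_log (slitPlane_ne_zero (cuspχ₀_slit hz))]

lemma one_add_I_mul_cuspχ₀_ne {z : ℂ} (hz : z ∈ uD) : 1 + I * cuspχ₀ z ≠ 0 := by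
  intro h
  have h1 : I * cuspχ₀ z = -1 := by linear_combination h
  have h2 := congrArg norm h1
  simp at h2
  linarith [cuspχ₀_norm hz]

lemma cuspW_eq {z : ℂ} (hz : z ∈ uD) : (cuspχ₀ z + I) / (1 + I * cuspχ₀ z) = cuspW z := by
  rw [div_eq_iff (one_add_I_mul_cuspχ₀_ne hz)]
  have h : cuspχ₀ z * (-I * cuspW z + 1) = cuspW z - I := div_mul_cancel₀ _ (cuspχ₀_den hz)
  linear_combination h

lemma I_mul_cuspU_ne {z : ℂ} (hz : z ∈ uD) : I * cuspU z - 1 ≠ 0 := by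
  intro h
  have h1 := congrArg Complex.re h
  simp at h1
  linarith [cuspU_im hz]

lemma cuspInv_left {z : ℂ} (hz : z ∈ uD) : cuspInv (cuspχ₂ z) = z := by
  rw [cuspInv, cuspχ₂_exp hz, cuspW_eq hz, cuspW_sq, div_eq_iff (I_mul_cuspU_ne hz)]
  have h : cuspU z * (I * z - 1) = z - I := div_mul_cancel₀ _ (cuspU_den hz)
  linear_combination -h

lemma cuspχ₂_injOn : InjOn cuspχ₂ uD :=
  LeftInvOn.injOn (f₁' := cuspInv) fun _ hz => cuspInv_left hz

/-- The left inverse `cuspInv` is differentiable at `χ₂ z`, so the chain rule forbids `χ₂′(z) = 0`. -/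
lemma cuspχ₂_deriv_ne {z : ℂ} (hz : z ∈ uD) : deriv cuspχ₂ z ≠ 0 := by
  intro h0
  have h1 := (cuspχ₂_diff.differentiableAt (isOpen_uD.mem_nhds hz)).hasDerivAt
  rw [h0] at h1
  have h2 : DifferentiableAt ℂ cuspInv (cuspχ₂ z) := by
    have a1 := one_add_I_mul_cuspχ₀_ne hz
    have a2 := I_mul_cuspU_ne hz
    rw [← cuspW_sq, ← cuspW_eq hz, ← cuspχ₂_exp hz] at a2
    rw [← cuspχ₂_exp hz] at a1
    unfold cuspInv
    fun_prop (disch := assumption)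
  have h3 := h2.hasDerivAt.comp z h1
  rw [mul_zero] at h3
  have h4 : HasDerivAt (fun z : ℂ => z) 0 z := by
    refine h3.congr_of_eventuallyEq ?_
    filter_upwards [isOpen_uD.mem_nhds hz] with x hx
    exact (cuspInv_left hx).symm
  exact zero_ne_one (h4.unique (hasDerivAt_id z))

/-- The constant `a` is the value of `χ₂` at the origin; this is why `χ(0) = 0`. -/
lemma cuspχ₂_zero : cuspχ₂ 0 = (cuspA : ℂ) := by
  have h0 : (0 : ℂ) ∈ uD := by simp [uD]
  have hU : cuspU 0 = I := by simp [cuspU]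
  have hs : (0 : ℝ) < √2 - 1 := by
    have : (1 : ℝ) < √2 := Real.lt_sqrt_of_sq_lt (by norm_num)
    linarith
  have h2 : (√2 : ℝ) ^ 2 = 2 := Real.sq_sqrt (by norm_num)
  have hW : cuspW 0 = ((√2 / 2 : ℝ) : ℂ) * (1 + I) := by
    have hp := cuspW_pos h0
    have hq := cuspW_sq 0
    rw [hU] at hq
    have e1 := congrArg Complex.re hq
    have e2 := congrArg Complex.im hq
    simp only [pow_two, Complex.mul_re, Complex.mul_im, Complex.I_re, Complex.I_im] at e1 e2
    have e3 : (cuspW 0).re = (cuspW 0).im := by nlinarith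
    have e4 : (cuspW 0).re = √2 / 2 := by
      rw [← e3] at e2
      have : (0 : ℝ) < √2 := by linarith
      nlinarith
    apply Complex.ext
    · simp [e4]
    · simp [← e3, e4]
  have hχ : cuspχ₀ 0 = ((√2 - 1 : ℝ) : ℂ) := by
    have hd := cuspχ₀_den h0
    rw [cuspχ₀_eq, div_eq_iff hd, hW]
    have h2' : ((√2 : ℝ) : ℂ) ^ 2 = 2 := by exact_mod_cast h2
    apply Complex.ext
    · simp; nlinarith
    · simp; nlinarith
  rw [cuspχ₂, cuspχ₁, hχ, ← Complex.ofReal_log hs.le, cuspA]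
  push_cast
  ring

/-- The bound `a/2 ≤ 33/40 < 1` leaves room between the strip `Re s > 1` and the boundary of the
half-plane `Re s > a/2`. -/
lemma cuspA_bounds : 1 < cuspA ∧ cuspA ≤ 33 / 20 := by
  have h1 : (1 : ℝ) < √2 := Real.lt_sqrt_of_sq_lt (by norm_num)
  have h2 : (√2 : ℝ) < 1.5 := (Real.sqrt_lt' (by norm_num)).2 (by norm_num)
  have h3 : (√2 : ℝ) ^ 2 = 2 := Real.sq_sqrt (by norm_num)
  have hlog : Real.log (√2 - 1) = -Real.log (√2 + 1) := by
    rw [← Real.log_inv]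
    congr 1
    field_simp
    nlinarith
  have hub : Real.log (√2 + 1) ≤ 1 := by
    rw [Real.log_le_iff_le_exp (by linarith)]
    linarith [Real.exp_one_gt_d9]
  have hlb : 0 < Real.log (√2 + 1) := Real.log_pos (by linarith)
  have hpi := Real.pi_gt_d2
  have hp : 0 < 2 / Real.pi := by positivity
  have hp2 : 2 / Real.pi ≤ 13 / 20 := by rw [div_le_div_iff₀ Real.pi_pos (by norm_num)]; linarith
  rw [cuspA, hlog]
  constructor <;> nlinarith

/-! ### Pull-back to the half-plane and Taylor approximation -/

/-- The Dirichlet integral `∫_D |f′|² dA`. -/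
def eEn (f : ℂ → ℂ) : ℝ≥0∞ := ∫⁻ z in uD, ENNReal.ofReal (‖deriv f z‖ ^ 2) ∂nA

lemma eDNormSq_eq_s16 (f : ℂ → ℂ) : eDNormSq f = ENNReal.ofReal (‖f 0‖ ^ 2) + eEn f := by
  simp [eDNormSq, eDNormSqW, eEn]

/-- The half-plane `Re s > a/2`, mapped conformally onto `D` by `cuspOm`. -/
def cuspH : Set ℂ := {s | cuspA / 2 < s.re}

/-- The Möbius map `s ↦ 1 - a/s`. -/
def cuspOm (s : ℂ) : ℂ := 1 - (cuspA : ℂ) / s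

lemma isOpen_cuspH : IsOpen cuspH := isOpen_lt continuous_const Complex.continuous_re

lemma cuspH_ne {s : ℂ} (hs : s ∈ cuspH) : s ≠ 0 := by
  rintro rfl
  have : cuspA / 2 < 0 := hs
  linarith [cuspA_bounds.1]

lemma cuspOm_diff : DifferentiableOn ℂ cuspOm cuspH := by
  intro s hs
  have := cuspH_ne hs
  refine DifferentiableAt.differentiableWithinAt ?_
  unfold cuspOm
  fun_prop (disch := assumption)

lemma cuspOm_maps : MapsTo cuspOm cuspH uD := by
  intro s hs
  have h0 := cuspH_ne hs
  have h1 : cuspA / 2 < s.re := hs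
  have e : cuspOm s = (s - cuspA) / s := by rw [cuspOm]; field_simp
  rw [uD, mem_ball_zero_iff, e, norm_div, div_lt_one (norm_pos_iff.2 h0)]
  refine lt_of_pow_lt_pow_left₀ 2 (norm_nonneg _) ?_
  rw [← Complex.normSq_eq_norm_sq, ← Complex.normSq_eq_norm_sq, Complex.normSq_apply,
    Complex.normSq_apply]
  simp
  nlinarith [cuspA_bounds.1]

lemma cuspOm_inj : InjOn cuspOm cuspH := by
  intro s hs t ht h
  have h1 := cuspH_ne hs
  have h2 := cuspH_ne ht
  have ha : (cuspA : ℂ) ≠ 0 := by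
    have := cuspA_bounds.1
    exact_mod_cast (by linarith : cuspA ≠ 0)
  simp only [cuspOm, sub_right_inj] at h
  exact (mul_left_cancel₀ ha ((div_eq_div_iff h1 h2).1 h)).symm

lemma cuspχ₂_mem {z : ℂ} (hz : z ∈ uD) : cuspχ₂ z ∈ cuspH := by
  have h1 := cuspχ₂_re hz
  have h2 := cuspA_bounds.2
  change cuspA / 2 < _
  linarith

lemma cuspχ_eq : cuspχ = fun z => cuspOm (cuspχ₂ z) := rfl

lemma pull_diff {f : ℂ → ℂ} (hf : DifferentiableOn ℂ f uD) :
    DifferentiableOn ℂ (fun s => f (cuspOm s)) cuspH :=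
  hf.comp cuspOm_diff cuspOm_maps

lemma pull_energy {f : ℂ → ℂ} (hf : DifferentiableOn ℂ f uD) :
    ∫⁻ s in cuspH, ENNReal.ofReal (‖deriv (fun s => f (cuspOm s)) s‖ ^ 2) ∂nA
    ≤ eEn f := by
  rw [lintegral_deriv_comp isOpen_cuspH isOpen_uD cuspOm_diff cuspOm_inj hf cuspOm_maps]
  exact lintegral_mono_set cuspOm_maps.image_subset

/-- `C_χ` is a contraction for the Dirichlet integral, because `χ` is univalent. -/
lemma comp_energy {f : ℂ → ℂ} (hf : DifferentiableOn ℂ f uD) :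
    eEn (fun z => f (cuspχ z)) ≤ eEn f := by
  refine le_trans ?_ (pull_energy hf)
  have := lintegral_deriv_comp (g := fun s => f (cuspOm s)) isOpen_uD isOpen_cuspH cuspχ₂_diff
    cuspχ₂_injOn (pull_diff hf) (fun _ hz => cuspχ₂_mem hz)
  rw [eEn]
  exact this.trans_le (lintegral_mono_set (MapsTo.image_subset fun _ hz => cuspχ₂_mem hz))

lemma pull_deriv_diff {f : ℂ → ℂ} (hf : DifferentiableOn ℂ f uD) :
    DifferentiableOn ℂ (deriv fun s => f (cuspOm s)) cuspH :=
  (pull_diff hf).deriv isOpen_cuspH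

/-- Pointwise growth of `(f ∘ ω)′` in the half-plane, from the area mean value inequality on the
disc of radius `r` about `s`. -/
lemma pull_pointwise {f : ℂ → ℂ} (hf : DifferentiableOn ℂ f uD) {E : ℝ}
    (hE0 : 0 ≤ E) (hE : eEn f ≤ ENNReal.ofReal (E ^ 2)) {s : ℂ}
    {r : ℝ} (hr : 0 < r) (hs : cuspA / 2 + r ≤ s.re) :
    ‖deriv (fun s => f (cuspOm s)) s‖ ≤ E / r := by
  have hsub : ball s r ⊆ cuspH := by
    intro t ht
    rw [mem_ball, dist_eq_norm] at ht
    have := Complex.abs_re_le_norm (t - s)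
    rw [Complex.sub_re] at this
    have := (abs_lt.1 (this.trans_lt ht)).1
    change cuspA / 2 < _
    linarith
  have h := sub_mean hr ((pull_deriv_diff hf).mono hsub)
  have h2 := (h.trans (lintegral_mono_set hsub)).trans ((pull_energy hf).trans hE)
  rw [ENNReal.ofReal_le_ofReal_iff (by positivity), ← mul_pow] at h2
  rw [le_div_iff₀ hr]
  exact le_of_sq_le_sq h2 hE0

/-- Taylor polynomial of `h` at `X`, with `m` terms. -/
def taylorP (h : ℂ → ℂ) (X : ℂ) (m : ℕ) (s : ℂ) : ℂ :=
  ∑ j ∈ Finset.range m, ((j.factorial : ℂ)⁻¹ * iteratedDeriv j h X) * (s - X) ^ j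

/-- Cauchy estimates on the disc of radius `ρ` bound the `n`-th Taylor term by `M θ^n`. -/
lemma taylor_remainder {h : ℂ → ℂ} {X s : ℂ} {ρ M θ : ℝ} (hρ : 0 < ρ)
    (hd : DifferentiableOn ℂ h (closedBall X ρ)) (hM : ∀ t ∈ closedBall X ρ, ‖h t‖ ≤ M)
    (hθ : 0 < θ) (hθ1 : θ < 1) (hs : ‖s - X‖ ≤ θ * ρ) (m : ℕ) :
    ‖h s - taylorP h X m s‖ ≤ M * θ ^ m / (1 - θ) := by
  have hsb : s ∈ ball X ρ := by
    rw [mem_ball, dist_eq_norm]; nlinarith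
  have hsum := Complex.hasSum_taylorSeries_on_ball (hd.mono ball_subset_closedBall) hsb
  set a : ℕ → ℂ := fun n => (n.factorial : ℂ)⁻¹ • (s - X) ^ n • iteratedDeriv n h X with ha
  have hM0 : 0 ≤ M := (norm_nonneg _).trans (hM X (mem_closedBall_self hρ.le))
  have hbound : ∀ n, ‖a n‖ ≤ M * θ ^ n := by
    intro n
    have h1 := Complex.norm_iteratedDeriv_le_of_forall_mem_sphere_norm_le n hρ
      (hd.diffContOnCl_ball le_rfl) (fun t ht => hM t (sphere_subset_closedBall ht))
    have hfac : (0 : ℝ) < n.factorial := by exact_mod_cast n.factorial_pos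
    calc ‖a n‖ = (n.factorial : ℝ)⁻¹ * (‖s - X‖ ^ n * ‖iteratedDeriv n h X‖) := by
          simp [ha]
      _ ≤ (n.factorial : ℝ)⁻¹ * ((θ * ρ) ^ n * (n.factorial * M / ρ ^ n)) := by gcongr
      _ = M * θ ^ n := by rw [mul_pow]; field_simp
  have hT : taylorP h X m s = ∑ j ∈ Finset.range m, a j := by
    refine Finset.sum_congr rfl fun j _ => ?_
    simp only [ha, smul_eq_mul]; ring
  have htail : HasSum (fun n => a (n + m)) (h s - taylorP h X m s) := by
    rw [hT]
    exact (hasSum_nat_add_iff' m).2 hsum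
  have hgeo : HasSum (fun n => M * θ ^ m * θ ^ n) (M * θ ^ m * (1 - θ)⁻¹) :=
    (hasSum_geometric_of_lt_one hθ.le hθ1).mul_left _
  rw [← htail.tsum_eq, div_eq_mul_inv]
  refine tsum_of_norm_bounded hgeo fun n => (hbound _).trans (le_of_eq ?_)
  rw [pow_add]; ring

lemma nA_rect_le {S : Set ℂ} {N : ℝ} (hN : 0 < N)
    (hS : ∀ s ∈ S, N ≤ s.re ∧ s.re ≤ 2 * N ∧ |s.im| ≤ 1) : nA S ≤ ENNReal.ofReal (2 * N) := by
  have hsub : S ⊆ Complex.measurableEquivRealProd ⁻¹' (Icc N (2 * N) ×ˢ Icc (-1 : ℝ) 1) := by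
    intro s hs
    obtain ⟨h1, h2, h3⟩ := hS s hs
    rw [abs_le] at h3
    simp [h1, h2, h3]
  have h1 : volume S ≤ ENNReal.ofReal (2 * N) := by
    refine (measure_mono hsub).trans (le_of_eq ?_)
    rw [Complex.volume_preserving_equiv_real_prod.measure_preimage_equiv, Measure.volume_eq_prod,
      Measure.prod_prod, Real.volume_Icc, Real.volume_Icc, ← ENNReal.ofReal_mul (by linarith)]
    congr 1; ring
  have h2 : (ENNReal.ofReal Real.pi)⁻¹ ≤ 1 := by
    rw [ENNReal.inv_le_one]
    exact ENNReal.one_le_ofReal.2 (by linarith [Real.pi_gt_three])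
  calc nA S = (ENNReal.ofReal Real.pi)⁻¹ * volume S := rfl
    _ ≤ 1 * ENNReal.ofReal (2 * N) := by gcongr
    _ = _ := one_mul _

/-- The contraction ratio of the Taylor approximation. -/
def cuspTh : ℝ := 1504 / 1510

/-- On a dyadic piece with `Re s ≥ N`, the derivative `(f ∘ ω)′` is `O(‖f‖ / N)`. -/
lemma piece_crude {f : ℂ → ℂ} (hf : DifferentiableOn ℂ f uD) {E : ℝ} (hE0 : 0 ≤ E)
    (hE : eEn f ≤ ENNReal.ofReal (E ^ 2)) {N : ℝ} (hN : 1 ≤ N) {s : ℂ} (h1 : N ≤ s.re) :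
    ‖deriv (fun s => f (cuspOm s)) s‖ ≤ 4000 * E / N := by
  have := pull_pointwise hf hE0 hE (s := s) (r := N / 10) (by positivity)
    (by linarith [cuspA_bounds.2])
  refine this.trans ?_
  rw [div_div_eq_mul_div]
  exact div_le_div_of_nonneg_right (by linarith) (by linarith)

/-- Geometric Taylor approximation of `(f ∘ ω)′` on the rectangle `N ≤ Re s ≤ 2N`, `|Im s| ≤ 1`. The
rectangle lies within `15.04 N` of the centre `16 N`: its farthest points are `N ± i`, at distance
`√(225 N² + 1) ≤ √226 N`. On the disc of radius `15.1 N` one still has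
`Re s ≥ 0.9 N ≥ a/2 + 3N/40`. -/
lemma piece_fine {f : ℂ → ℂ} (hf : DifferentiableOn ℂ f uD) {E : ℝ} (hE0 : 0 ≤ E)
    (hE : eEn f ≤ ENNReal.ofReal (E ^ 2)) {N : ℝ} (hN : 1 ≤ N) {s : ℂ} (h1 : N ≤ s.re)
    (h2 : s.re ≤ 2 * N) (h3 : |s.im| ≤ 1) (m : ℕ) :
    ‖deriv (fun s => f (cuspOm s)) s -
      taylorP (deriv fun s => f (cuspOm s)) ((16 * N : ℝ) : ℂ) m s‖ ≤ 4000 * E / N * cuspTh ^ m := by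
  have hA := cuspA_bounds.2
  have hre : ∀ t ∈ closedBall ((16 * N : ℝ) : ℂ) (15.1 * N), cuspA / 2 + N * (3 / 40) ≤ t.re := by
    intro t ht
    rw [mem_closedBall, dist_eq_norm] at ht
    have h := Complex.abs_re_le_norm (t - ((16 * N : ℝ) : ℂ))
    rw [Complex.sub_re, Complex.ofReal_re] at h
    have := (abs_le.1 (h.trans ht)).1
    linarith
  have hsub : closedBall ((16 * N : ℝ) : ℂ) (15.1 * N) ⊆ cuspH := by
    intro t ht
    have := hre t ht
    change cuspA / 2 < _
    linarith
  have hd : ‖s - ((16 * N : ℝ) : ℂ)‖ ≤ cuspTh * (15.1 * N) := by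
    have e : cuspTh * (15.1 * N) = 15.04 * N := by rw [cuspTh]; ring
    rw [e]
    refine le_of_sq_le_sq ?_ (by positivity)
    rw [← Complex.normSq_eq_norm_sq, Complex.normSq_apply]
    rw [Complex.sub_re, Complex.sub_im, Complex.ofReal_re, Complex.ofReal_im]
    have := sq_le_one_iff_abs_le_one (s.im) |>.2 h3
    nlinarith
  have := taylor_remainder (by positivity) ((pull_deriv_diff hf).mono hsub)
    (fun t ht => pull_pointwise hf hE0 hE (by positivity) (hre t ht))
    (θ := cuspTh) (by norm_num [cuspTh]) (by norm_num [cuspTh]) hd m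
  refine this.trans ?_
  have e : E / (N * (3 / 40)) * cuspTh ^ m / (1 - cuspTh) =
      (40 / 3 * (1510 / 6)) * (E / N * cuspTh ^ m) := by
    rw [show (1 : ℝ) - cuspTh = 6 / 1510 by norm_num [cuspTh]]
    field_simp
  have hth : 0 < cuspTh := by norm_num [cuspTh]
  have e2 : 4000 * E / N * cuspTh ^ m = 4000 * (E / N * cuspTh ^ m) := by ring
  rw [e, e2]
  gcongr
  norm_num

/-! ### Dyadic decomposition of the disk -/

/-- The `k`-th dyadic piece of the disk, `2^k < Re χ₂ < 2^(k+1)`. -/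
def cuspPiece (k : ℕ) : Set ℂ := uD ∩ cuspχ₂ ⁻¹' (Complex.re ⁻¹' Ioo (2 ^ k) (2 ^ (k + 1)))

lemma isOpen_cuspPiece (k : ℕ) : IsOpen (cuspPiece k) :=
  cuspχ₂_diff.continuousOn.isOpen_inter_preimage isOpen_uD
    (isOpen_Ioo.preimage Complex.continuous_re)

lemma cuspPiece_disjoint {k l : ℕ} {z : ℂ} (hk : z ∈ cuspPiece k) (hl : z ∈ cuspPiece l) :
    k = l := by
  have h1 : (2 : ℝ) ^ k < 2 ^ (l + 1) := hk.2.1.trans hl.2.2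
  have h2 : (2 : ℝ) ^ l < 2 ^ (k + 1) := hl.2.1.trans hk.2.2
  rw [pow_lt_pow_iff_right₀ (by norm_num)] at h1 h2
  omega

/-- The part of the disk lying on a dividing line `Re χ₂ = 2^k`. -/
def cuspSeam (k : ℕ) : Set ℂ := uD ∩ cuspχ₂ ⁻¹' (Complex.re ⁻¹' {(2 : ℝ) ^ k})

lemma nA_line (x : ℝ) : nA (Complex.re ⁻¹' {x}) = 0 := by
  have h : volume (Complex.re ⁻¹' {x}) = 0 := by
    have e : (Complex.re ⁻¹' {x}) = Complex.measurableEquivRealProd ⁻¹' ({x} ×ˢ univ) := by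
      ext s; simp
    rw [e, Complex.volume_preserving_equiv_real_prod.measure_preimage_equiv,
      Measure.volume_eq_prod, Measure.prod_prod]
    simp
  calc nA (Complex.re ⁻¹' {x}) = (ENNReal.ofReal Real.pi)⁻¹ * volume (Complex.re ⁻¹' {x}) := rfl
    _ = 0 := by rw [h, mul_zero]

/-- A seam is null: its image under `χ₂` lies on a vertical line, and the Jacobian `|χ₂′|²` does not
vanish. -/
lemma nA_cuspSeam (k : ℕ) : nA (cuspSeam k) = 0 := by
  have hm : MeasurableSet (cuspSeam k) := by
    have : cuspSeam k = uD \ (uD ∩ cuspχ₂ ⁻¹' (Complex.re ⁻¹' {(2 : ℝ) ^ k}ᶜ)) := by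
      ext z; simp [cuspSeam]
    rw [this]
    exact isOpen_uD.measurableSet.diff (cuspχ₂_diff.continuousOn.isOpen_inter_preimage isOpen_uD
      (isOpen_compl_singleton.preimage Complex.continuous_re)).measurableSet
  have h := lintegral_image_analytic isOpen_uD cuspχ₂_diff cuspχ₂_injOn hm inter_subset_left
    (fun _ => 1)
  have h0 : nA (cuspχ₂ '' cuspSeam k) = 0 :=
    measure_mono_null (by rintro _ ⟨z, hz, rfl⟩; exact hz.2) (nA_line (2 ^ k))
  rw [setLIntegral_one, h0] at h
  simp only [mul_one] at h
  by_contra hne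
  refine (ne_of_gt ?_) h.symm
  have hmeas : Measurable fun z => ENNReal.ofReal (‖deriv cuspχ₂ z‖ ^ 2) :=
    ((measurable_deriv cuspχ₂).norm.pow_const 2).ennreal_ofReal
  rw [setLIntegral_pos_iff hmeas]
  have : Function.support (fun z => ENNReal.ofReal (‖deriv cuspχ₂ z‖ ^ 2)) ∩ cuspSeam k
      = cuspSeam k := by
    refine inter_eq_right.2 fun z hz => ?_
    have := cuspχ₂_deriv_ne hz.1
    simp only [Function.mem_support, ne_eq, ENNReal.ofReal_eq_zero, not_le]
    positivity
  rw [this]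
  exact pos_iff_ne_zero.2 hne

lemma uD_subset_pieces : uD ⊆ (⋃ k, cuspPiece k) ∪ ⋃ k, cuspSeam k := by
  intro z hz
  obtain ⟨k, h1, h2⟩ := exists_nat_pow_near (cuspχ₂_re hz).le (one_lt_two (α := ℝ))
  rcases h1.lt_or_eq with h | h
  · exact Or.inl (mem_iUnion.2 ⟨k, hz, h, h2⟩)
  · exact Or.inr (mem_iUnion.2 ⟨k, hz, h.symm⟩)

lemma lintegral_uD_le (G : ℂ → ℝ≥0∞) :
    ∫⁻ z in uD, G z ∂nA ≤ ∑' k, ∫⁻ z in cuspPiece k, G z ∂nA := by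
  have hnull : nA (⋃ k, cuspSeam k) = 0 := measure_iUnion_null nA_cuspSeam
  calc ∫⁻ z in uD, G z ∂nA
      ≤ ∫⁻ z in (⋃ k, cuspPiece k) ∪ ⋃ k, cuspSeam k, G z ∂nA :=
        lintegral_mono_set uD_subset_pieces
    _ ≤ ∫⁻ z in ⋃ k, cuspPiece k, G z ∂nA + ∫⁻ z in ⋃ k, cuspSeam k, G z ∂nA :=
        lintegral_union_le _ _ _
    _ = ∫⁻ z in ⋃ k, cuspPiece k, G z ∂nA := by
        rw [setLIntegral_measure_zero _ _ hnull, add_zero]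
    _ ≤ _ := lintegral_iUnion_le _ _

/-- Transfer to the strip: if `Q′` approximates `(f ∘ ω)′` within `B` on the `k`-th dyadic rectangle,
then `f ∘ χ - Q ∘ χ₂` has energy at most `B²` times the area of the rectangle on the `k`-th piece. -/
lemma piece_integral {f : ℂ → ℂ} (hf : DifferentiableOn ℂ f uD) {k : ℕ} {Q G : ℂ → ℂ}
    (hQ : Differentiable ℂ Q) (hG : ∀ z ∈ cuspPiece k, G z = Q (cuspχ₂ z)) {B : ℝ}
    (hB : ∀ s : ℂ, (2 : ℝ) ^ k ≤ s.re → s.re ≤ 2 * 2 ^ k → |s.im| ≤ 1 →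
      ‖deriv (fun s => f (cuspOm s)) s - deriv Q s‖ ≤ B) :
    ∫⁻ z in cuspPiece k, ENNReal.ofReal (‖deriv (fun z => f (cuspχ z) - G z) z‖ ^ 2) ∂nA ≤
      ENNReal.ofReal (B ^ 2 * (2 * 2 ^ k)) := by
  have hstrip : ∀ s ∈ cuspχ₂ '' cuspPiece k,
      (2 : ℝ) ^ k ≤ s.re ∧ s.re ≤ 2 * 2 ^ k ∧ |s.im| ≤ 1 := by
    rintro _ ⟨z, hz, rfl⟩
    have := hz.2.2
    rw [pow_succ'] at this
    exact ⟨hz.2.1.le, this.le, (cuspχ₂_im hz.1).le⟩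
  have hsubD : cuspPiece k ⊆ uD := inter_subset_left
  have hg : DifferentiableOn ℂ (fun s => f (cuspOm s) - Q s) cuspH :=
    (pull_diff hf).sub hQ.differentiableOn
  calc ∫⁻ z in cuspPiece k, ENNReal.ofReal (‖deriv (fun z => f (cuspχ z) - G z) z‖ ^ 2) ∂nA
      = ∫⁻ z in cuspPiece k, ENNReal.ofReal
          (‖deriv (fun z => f (cuspOm (cuspχ₂ z)) - Q (cuspχ₂ z)) z‖ ^ 2) ∂nA := by
        refine setLIntegral_congr_fun (isOpen_cuspPiece k).measurableSet fun z hz => ?_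
        have : (fun z => f (cuspχ z) - G z) =ᶠ[𝓝 z]
            fun z => f (cuspOm (cuspχ₂ z)) - Q (cuspχ₂ z) := by
          filter_upwards [(isOpen_cuspPiece k).mem_nhds hz] with y hy
          rw [hG y hy, cuspχ_eq]
        simp only [this.deriv_eq]
    _ = ∫⁻ s in cuspχ₂ '' cuspPiece k,
          ENNReal.ofReal (‖deriv (fun s => f (cuspOm s) - Q s) s‖ ^ 2) ∂nA :=
        lintegral_deriv_comp (g := fun s => f (cuspOm s) - Q s) (isOpen_cuspPiece k) isOpen_cuspH
          (cuspχ₂_diff.mono hsubD) (cuspχ₂_injOn.mono hsubD) hg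
          (fun z hz => cuspχ₂_mem (hsubD hz))
    _ ≤ ∫⁻ s in cuspχ₂ '' cuspPiece k, ENNReal.ofReal (B ^ 2) ∂nA := by
        refine setLIntegral_mono measurable_const fun s hs => ?_
        have hsH : s ∈ cuspH := by
          obtain ⟨z, hz, rfl⟩ := hs
          exact cuspχ₂_mem (hsubD hz)
        obtain ⟨a1, a2, a3⟩ := hstrip s hs
        have hd : deriv (fun s => f (cuspOm s) - Q s) s =
            deriv (fun s => f (cuspOm s)) s - deriv Q s :=
          deriv_fun_sub ((pull_diff hf).differentiableAt (isOpen_cuspH.mem_nhds hsH)) (hQ s)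
        rw [hd]
        have := hB s a1 a2 a3
        gcongr
    _ = ENNReal.ofReal (B ^ 2) * nA (cuspχ₂ '' cuspPiece k) := setLIntegral_const _ _
    _ ≤ ENNReal.ofReal (B ^ 2) * ENNReal.ofReal (2 * 2 ^ k) := by
        gcongr
        exact nA_rect_le (by positivity) hstrip
    _ = _ := (ENNReal.ofReal_mul (by positivity)).symm

/-- Taking a Taylor coefficient is linear on the functions analytic in the disk; it is extended
linearly to all functions `ℂ → ℂ`, the domain of the approximating operators in `eApproxNum`. -/
lemma exists_taylor_functional {X : ℂ} (hX : X ∈ cuspH) (j : ℕ) :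
    ∃ ℓ : (ℂ → ℂ) →ₗ[ℂ] ℂ, ∀ f, DifferentiableOn ℂ f uD →
      ℓ f = (j.factorial : ℂ)⁻¹ * iteratedDeriv j (deriv fun s => f (cuspOm s)) X := by
  let V : Submodule ℂ (ℂ → ℂ) :=
    { carrier := {f | DifferentiableOn ℂ f uD}
      add_mem' := fun ha hb => DifferentiableOn.add ha hb
      zero_mem' := differentiableOn_const 0
      smul_mem' := fun c _ ha => DifferentiableOn.const_smul ha c }
  have hc : ∀ f ∈ V, ContDiffAt ℂ ((j + 1 : ℕ) : WithTop ℕ∞) (fun s => f (cuspOm s)) X :=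
    fun f hf => (((pull_diff hf).analyticAt (isOpen_cuspH.mem_nhds hX)).contDiffAt)
  let ℓ₀ : V →ₗ[ℂ] ℂ :=
    { toFun := fun f => (j.factorial : ℂ)⁻¹ * iteratedDeriv (j + 1) (fun s => f.1 (cuspOm s)) X
      map_add' := by
        intro f g
        have := iteratedDeriv_fun_add (hc f.1 f.2) (hc g.1 g.2)
        simp only [Submodule.coe_add, Pi.add_apply]
        rw [this, mul_add]
      map_smul' := by
        intro c f
        have := iteratedDeriv_fun_const_smul (hc f.1 f.2) c
        simp only [SetLike.val_smul, Pi.smul_apply, RingHom.id_apply]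
        rw [this]
        simp only [smul_eq_mul]
        ring }
  obtain ⟨ℓ, hℓ⟩ := ℓ₀.exists_extend
  refine ⟨ℓ, fun f hf => ?_⟩
  have := LinearMap.congr_fun hℓ ⟨f, hf⟩
  rw [← iteratedDeriv_succ']
  exact this

/-! ### The finite rank approximants and the Schatten class -/

lemma cuspNode_mem (k : ℕ) : ((16 * 2 ^ k : ℝ) : ℂ) ∈ cuspH := by
  change cuspA / 2 < _
  rw [Complex.ofReal_re]
  have := one_le_pow₀ (one_le_two (α := ℝ)) (n := k)
  linarith [cuspA_bounds.2]

/-- The functional `f ↦ j`-th Taylor coefficient of `(f ∘ ω)′` at the node `16·2^k`. -/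
def cuspFun (k j : ℕ) : (ℂ → ℂ) →ₗ[ℂ] ℂ :=
  (exists_taylor_functional (cuspNode_mem k) j).choose

lemma cuspFun_eq (k j : ℕ) {f : ℂ → ℂ} (hf : DifferentiableOn ℂ f uD) :
    cuspFun k j f = (j.factorial : ℂ)⁻¹ *
      iteratedDeriv j (deriv fun s => f (cuspOm s)) ((16 * 2 ^ k : ℝ) : ℂ) :=
  (exists_taylor_functional (cuspNode_mem k) j).choose_spec f hf

/-- Antiderivative of `(s - X)^j`, vanishing at `s = a`. -/
def cuspMono (k j : ℕ) (s : ℂ) : ℂ :=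
  ((s - ((16 * 2 ^ k : ℝ) : ℂ)) ^ (j + 1) - ((cuspA : ℂ) - ((16 * 2 ^ k : ℝ) : ℂ)) ^ (j + 1)) /
    ((j : ℂ) + 1)

lemma cuspMono_hasDerivAt (k j : ℕ) (s : ℂ) :
    HasDerivAt (cuspMono k j) ((s - ((16 * 2 ^ k : ℝ) : ℂ)) ^ j) s := by
  have h := ((((hasDerivAt_id s).sub_const ((16 * 2 ^ k : ℝ) : ℂ)).pow (j + 1)).sub_const
    (((cuspA : ℂ) - ((16 * 2 ^ k : ℝ) : ℂ)) ^ (j + 1))).div_const ((j : ℂ) + 1)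
  have hj : (j : ℂ) + 1 ≠ 0 := by exact_mod_cast j.succ_ne_zero
  convert! h using 1
  simp
  field_simp

/-- `cuspMono k j ∘ χ₂`, cut off to the `k`-th piece. -/
def cuspBasis (k j : ℕ) : ℂ → ℂ := (cuspPiece k).indicator fun z => cuspMono k j (cuspχ₂ z)

/-- The constant of integration in `cuspMono` is chosen for this normalization. -/
lemma cuspBasis_zero (k j : ℕ) : cuspBasis k j 0 = 0 := by
  rw [cuspBasis]
  refine indicator_apply_eq_zero.2 fun _ => ?_
  rw [cuspχ₂_zero, cuspMono, sub_self, zero_div]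

/-- The finite rank approximant of `C_χ`: `K` Taylor coefficients on each of `K` pieces. -/
def cuspR (K : ℕ) : (ℂ → ℂ) →ₗ[ℂ] (ℂ → ℂ) :=
  ∑ k ∈ Finset.range K, ∑ j ∈ Finset.range K, (cuspFun k j).smulRight (cuspBasis k j)

lemma cuspR_apply (K : ℕ) (f : ℂ → ℂ) (z : ℂ) : cuspR K f z =
    ∑ k ∈ Finset.range K, ∑ j ∈ Finset.range K, cuspFun k j f * cuspBasis k j z := by
  simp [cuspR, LinearMap.sum_apply, Finset.sum_apply]

lemma cuspR_rank (K : ℕ) : Module.rank ℂ (LinearMap.range (cuspR K)) ≤ ((K * K : ℕ) : Cardinal) := by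
  classical
  set S : Finset (ℂ → ℂ) :=
    (Finset.range K ×ˢ Finset.range K).image fun p => cuspBasis p.1 p.2 with hS
  have hsub : LinearMap.range (cuspR K) ≤ Submodule.span ℂ (S : Set (ℂ → ℂ)) := by
    rintro _ ⟨f, rfl⟩
    rw [cuspR, LinearMap.sum_apply]
    refine Submodule.sum_mem _ fun k hk => ?_
    rw [LinearMap.sum_apply]
    refine Submodule.sum_mem _ fun j hj => ?_
    rw [LinearMap.smulRight_apply]
    refine Submodule.smul_mem _ _ (Submodule.subset_span ?_)
    exact Finset.mem_coe.2 (Finset.mem_image.2 ⟨(k, j), Finset.mem_product.2 ⟨hk, hj⟩, rfl⟩)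
  refine (Submodule.rank_mono hsub).trans ((rank_span_finset_le S).trans ?_)
  have : S.card ≤ K * K := by
    refine Finset.card_image_le.trans ?_
    simp
  exact_mod_cast this

/-- Local polynomial form of `cuspR K f` on the `k`-th piece. -/
def cuspQ (K k : ℕ) (f : ℂ → ℂ) (s : ℂ) : ℂ :=
  if k < K then ∑ j ∈ Finset.range K, cuspFun k j f * cuspMono k j s else 0

lemma cuspR_on_piece (K : ℕ) {k : ℕ} (f : ℂ → ℂ) {z : ℂ} (hz : z ∈ cuspPiece k) :
    cuspR K f z = cuspQ K k f (cuspχ₂ z) := by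
  rw [cuspR_apply, cuspQ]
  have hoff : ∀ l, l ≠ k → ∑ j ∈ Finset.range K, cuspFun l j f * cuspBasis l j z = 0 := by
    intro l hl
    refine Finset.sum_eq_zero fun j _ => ?_
    rw [cuspBasis, indicator_of_notMem, mul_zero]
    exact fun h => hl (cuspPiece_disjoint h hz)
  split_ifs with h
  · rw [Finset.sum_eq_single_of_mem k (Finset.mem_range.2 h) fun l _ hl => hoff l hl]
    refine Finset.sum_congr rfl fun j _ => ?_
    rw [cuspBasis, indicator_of_mem hz]
  · refine Finset.sum_eq_zero fun l hl => hoff l ?_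
    rintro rfl
    exact h (Finset.mem_range.1 hl)

lemma cuspQ_hasDerivAt (K k : ℕ) {f : ℂ → ℂ} (hf : DifferentiableOn ℂ f uD) (s : ℂ) :
    HasDerivAt (cuspQ K k f)
      (if k < K then taylorP (deriv fun s => f (cuspOm s)) ((16 * 2 ^ k : ℝ) : ℂ) K s else 0) s := by
  unfold cuspQ
  split_ifs
  · rw [taylorP]
    refine HasDerivAt.fun_sum fun j _ => ?_
    rw [← cuspFun_eq k j hf]
    exact (cuspMono_hasDerivAt k j s).const_mul _
  · exact hasDerivAt_const s 0

/-- The error estimate for `cuspR K`: each piece contributes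
`O(θ^(2K) (3/4)^k ‖f‖²)`, and the pieces are summed as a geometric series. -/
lemma cusp_energy_le {f : ℂ → ℂ} (hf : DifferentiableOn ℂ f uD) {E : ℝ} (hE0 : 0 ≤ E)
    (hE : eEn f ≤ ENNReal.ofReal (E ^ 2)) (K : ℕ) :
    eEn (fun z => f (cuspχ z) - cuspR K f z) ≤
      ENNReal.ofReal ((12000 * cuspTh ^ K) ^ 2 * E ^ 2) := by
  have hth : 0 < cuspTh := by norm_num [cuspTh]
  have hth2 : (2 / 3 : ℝ) ≤ cuspTh ^ 2 := by norm_num [cuspTh]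
  have hth3 : cuspTh ^ 2 ≤ 1 := by norm_num [cuspTh]
  have hpiece : ∀ k, ∫⁻ z in cuspPiece k,
      ENNReal.ofReal (‖deriv (fun z => f (cuspχ z) - cuspR K f z) z‖ ^ 2) ∂nA ≤
      ENNReal.ofReal (2 * 4000 ^ 2 * E ^ 2 * (cuspTh ^ 2) ^ K * (3 / 4) ^ k) := by
    intro k
    have hN : (1 : ℝ) ≤ 2 ^ k := one_le_pow₀ one_le_two
    have hN0 : (0 : ℝ) < 2 ^ k := by positivity
    have hdQ : Differentiable ℂ (cuspQ K k f) := fun s =>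
      (cuspQ_hasDerivAt K k hf s).differentiableAt
    by_cases hk : k < K
    · refine (piece_integral hf hdQ (fun z hz => cuspR_on_piece K f hz)
        (B := 4000 * E / 2 ^ k * cuspTh ^ K) fun s a1 a2 a3 => ?_).trans ?_
      · rw [(cuspQ_hasDerivAt K k hf s).deriv, if_pos hk]
        exact piece_fine hf hE0 hE hN a1 a2 a3 K
      · refine ENNReal.ofReal_le_ofReal ?_
        have e : (4000 * E / 2 ^ k * cuspTh ^ K) ^ 2 * (2 * 2 ^ k) =
            2 * 4000 ^ 2 * E ^ 2 * (cuspTh ^ 2) ^ K * ((2 ^ k)⁻¹) := by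
          field_simp
          rw [← pow_mul, ← pow_mul, mul_comm K 2]
        rw [e]
        gcongr
        rw [inv_le_iff_one_le_mul₀ hN0, ← mul_pow]
        exact one_le_pow₀ (by norm_num)
    -- For `k ≥ K` the factor `2^(-k) = (2/3)^k (3/4)^k` splits, and `(2/3)^k ≤ θ^(2K)`
    -- because `2/3 ≤ θ² ≤ 1`.
    · refine (piece_integral hf hdQ (fun z hz => cuspR_on_piece K f hz)
        (B := 4000 * E / 2 ^ k) fun s a1 a2 a3 => ?_).trans ?_
      · rw [(cuspQ_hasDerivAt K k hf s).deriv, if_neg hk, sub_zero]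
        exact piece_crude hf hE0 hE hN a1
      · refine ENNReal.ofReal_le_ofReal ?_
        have e : (4000 * E / 2 ^ k) ^ 2 * (2 * 2 ^ k) =
            2 * 4000 ^ 2 * E ^ 2 * ((2 / 3 : ℝ) ^ k) * (3 / 4) ^ k := by
          have : (3 / 4 : ℝ) ^ k = ((2 / 3 : ℝ) ^ k)⁻¹ * (2 ^ k)⁻¹ := by
            rw [← mul_inv, ← mul_pow, ← inv_pow]; norm_num
          rw [this]
          field_simp
        rw [e]
        have : (2 / 3 : ℝ) ^ k ≤ (cuspTh ^ 2) ^ K :=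
          (pow_le_pow_left₀ (by norm_num) hth2 k).trans
            (pow_le_pow_of_le_one (by positivity) hth3 (not_lt.1 hk))
        gcongr
  rw [eEn]
  refine (lintegral_uD_le _).trans ((ENNReal.tsum_le_tsum hpiece).trans ?_)
  have hsum : HasSum (fun k : ℕ => 2 * 4000 ^ 2 * E ^ 2 * (cuspTh ^ 2) ^ K * (3 / 4 : ℝ) ^ k)
      (2 * 4000 ^ 2 * E ^ 2 * (cuspTh ^ 2) ^ K * (1 - 3 / 4)⁻¹) :=
    (hasSum_geometric_of_lt_one (by norm_num) (by norm_num)).mul_left _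
  rw [← ENNReal.ofReal_tsum_of_nonneg (fun k => by positivity) hsum.summable, hsum.tsum_eq]
  refine ENNReal.ofReal_le_ofReal ?_
  have h0 : 0 ≤ E ^ 2 * (cuspTh ^ 2) ^ K := by positivity
  have e : (12000 * cuspTh ^ K) ^ 2 * E ^ 2 = 12000 ^ 2 * (E ^ 2 * (cuspTh ^ 2) ^ K) := by
    rw [← pow_mul, mul_comm 2 K, pow_mul]; ring
  rw [e]
  nlinarith

lemma memDStar_iff {f : ℂ → ℂ} :
    MemDStar f ↔ DifferentiableOn ℂ f uD ∧ eDNormSq f < ⊤ ∧ f 0 = 0 := by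
  rw [MemDStar, MemDWStar, MemDW, and_assoc]; rfl

lemma eDNormSq_of_zero {f : ℂ → ℂ} (h : f 0 = 0) : eDNormSq f = eEn f := by
  rw [eDNormSq_eq_s16, h]; simp

lemma cuspχ_zero : cuspχ 0 = 0 := by
  have ha : (cuspA : ℂ) ≠ 0 := by
    have := cuspA_bounds.1
    exact_mod_cast (by linarith : cuspA ≠ 0)
  rw [cuspχ_eq]
  simp only [cuspχ₂_zero, cuspOm, div_self ha, sub_self]

lemma cuspχ_diff : DifferentiableOn ℂ cuspχ uD :=
  cuspOm_diff.comp cuspχ₂_diff fun _ hz => cuspχ₂_mem hz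

lemma cuspχ_maps : MapsTo cuspχ uD uD := fun _ hz => cuspOm_maps (cuspχ₂_mem hz)

lemma memDStar_comp {f : ℂ → ℂ} (hf : MemDStar f) : MemDStar (compOp cuspχ f) := by
  obtain ⟨h1, h2, h3⟩ := memDStar_iff.1 hf
  have h0 : compOp cuspχ f 0 = 0 := by rw [compOp, cuspχ_zero, h3]
  refine memDStar_iff.2 ⟨h1.comp cuspχ_diff cuspχ_maps, ?_, h0⟩
  rw [eDNormSq_of_zero h0]
  rw [eDNormSq_of_zero h3] at h2
  exact (comp_energy h1).trans_lt h2

lemma memDStar_id : MemDStar (fun z => z) := by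
  refine memDStar_iff.2 ⟨differentiableOn_id, ?_, rfl⟩
  rw [eDNormSq_of_zero rfl]
  simp only [eEn, deriv_id'', norm_one, one_pow, ENNReal.ofReal_one, setLIntegral_one]
  exact measure_ball_lt_top

lemma cusp_bounded : IsBoundedOpOn MemDStar eDNormSq (compOp cuspχ) := by
  refine ⟨fun f hf => memDStar_comp hf, ne_top_of_le_ne_top ENNReal.one_ne_top (sInf_le ?_)⟩
  intro f hf
  obtain ⟨h1, h2, h3⟩ := memDStar_iff.1 hf
  have h0 : compOp cuspχ f 0 = 0 := by rw [compOp, cuspχ_zero, h3]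
  rw [eDNormSq_of_zero h0, eDNormSq_of_zero h3, one_pow, one_mul]
  exact comp_energy h1

lemma cusp_approxNum {K n : ℕ} (hn : K * K < n) :
    eApproxNum MemDStar eDNormSq (compOp cuspχ) n ≤ ENNReal.ofReal (12000 * cuspTh ^ K) := by
  have hth : 0 < cuspTh := by norm_num [cuspTh]
  refine sInf_le_of_le ⟨cuspR K, (cuspR_rank K).trans_lt (by exact_mod_cast hn), rfl⟩ (sInf_le ?_)
  intro f hf
  obtain ⟨h1, h2, h3⟩ := memDStar_iff.1 hf
  have h0 : compOp cuspχ f 0 - cuspR K f 0 = 0 := by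
    rw [compOp, cuspχ_zero, h3, cuspR_apply]
    simp [cuspBasis_zero]
  rw [eDNormSq_of_zero h3] at h2 ⊢
  rw [eDNormSq_of_zero h0]
  have hE : eEn f = ENNReal.ofReal (√(eEn f).toReal ^ 2) := by
    rw [Real.sq_sqrt ENNReal.toReal_nonneg, ENNReal.ofReal_toReal h2.ne]
  refine (cusp_energy_le h1 (Real.sqrt_nonneg _) hE.le K).trans (le_of_eq ?_)
  rw [ENNReal.ofReal_mul (by positivity), ← hE, ENNReal.ofReal_pow (by positivity)]

/-- The sequence `x^⌊√n⌋` decays faster than `n⁻²`, since `m⁴ x^m` is bounded. -/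
lemma cusp_decay {x : ℝ} (hx0 : 0 < x) (hx : x < 1) :
    ∃ B : ℝ, 0 ≤ B ∧ ∀ n : ℕ, x ^ Nat.sqrt n ≤ B * (1 / ((n : ℝ) + 1) ^ 2) := by
  have ht : Tendsto (fun n : ℕ => (n : ℝ) ^ 4 * x ^ n) atTop (𝓝 0) :=
    tendsto_pow_const_mul_const_pow_of_lt_one 4 hx0.le hx
  obtain ⟨B, hB⟩ := ht.bddAbove_range
  have hB' : ∀ n : ℕ, (n : ℝ) ^ 4 * x ^ n ≤ B := fun n => hB ⟨n, rfl⟩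
  have hB0 : 0 ≤ B := by simpa using hB' 0
  refine ⟨B / x, by positivity, fun n => ?_⟩
  have h1 := hB' (Nat.sqrt n + 1)
  have h2 : (n : ℝ) + 1 ≤ ((Nat.sqrt n + 1 : ℕ) : ℝ) ^ 2 := by
    have := Nat.lt_succ_sqrt n
    have h : n + 1 ≤ (Nat.sqrt n + 1) ^ 2 := by rw [pow_two]; exact this
    exact_mod_cast h
  have h3 : ((n : ℝ) + 1) ^ 2 ≤ ((Nat.sqrt n + 1 : ℕ) : ℝ) ^ 4 := by
    calc ((n : ℝ) + 1) ^ 2 ≤ (((Nat.sqrt n + 1 : ℕ) : ℝ) ^ 2) ^ 2 := by gcongr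
      _ = _ := by ring
  rw [mul_one_div, le_div_iff₀ (by positivity), le_div_iff₀ hx0]
  calc x ^ Nat.sqrt n * ((n : ℝ) + 1) ^ 2 * x = ((n : ℝ) + 1) ^ 2 * x ^ (Nat.sqrt n + 1) := by ring
    _ ≤ ((Nat.sqrt n + 1 : ℕ) : ℝ) ^ 4 * x ^ (Nat.sqrt n + 1) := by gcongr
    _ ≤ B := h1

lemma cusp_schatten {p : ℝ} (hp : 0 < p) : MemSchattenD p cuspχ := by
  refine ⟨cusp_bounded, ?_⟩
  have hth : 0 < cuspTh := by norm_num [cuspTh]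
  have hth1 : cuspTh < 1 := by norm_num [cuspTh]
  obtain ⟨B, hB0, hB⟩ := cusp_decay (Real.rpow_pos_of_pos hth p) (Real.rpow_lt_one hth.le hth1 hp)
  have hterm : ∀ n : ℕ, eApproxNum MemDStar eDNormSq (compOp cuspχ) (n + 1) ^ p ≤
      ENNReal.ofReal (12000 ^ p * (B * (1 / ((n : ℝ) + 1) ^ 2))) := by
    intro n
    have h1 := cusp_approxNum (K := Nat.sqrt n) (n := n + 1) (Nat.lt_succ_of_le (Nat.sqrt_le n))
    refine (ENNReal.rpow_le_rpow h1 hp.le).trans ?_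
    rw [ENNReal.ofReal_rpow_of_nonneg (by positivity) hp.le]
    refine ENNReal.ofReal_le_ofReal ?_
    rw [Real.mul_rpow (by norm_num) (by positivity), ← Real.rpow_natCast, ← Real.rpow_mul hth.le,
      mul_comm (_ : ℝ) p, Real.rpow_mul hth.le, Real.rpow_natCast]
    gcongr
    exact hB n
  have hs : Summable fun n : ℕ => 12000 ^ p * (B * (1 / ((n : ℝ) + 1) ^ 2)) := by
    refine ((?_ : Summable fun n : ℕ => 1 / ((n : ℝ) + 1) ^ 2).mul_left _).mul_left _
    have := (summable_nat_add_iff 1).2 (Real.summable_one_div_nat_pow.2 one_lt_two)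
    simpa using this
  refine ne_top_of_le_ne_top ?_ (ENNReal.tsum_le_tsum hterm)
  rw [← ENNReal.ofReal_tsum_of_nonneg (fun n => by positivity) hs]
  exact ENNReal.ofReal_ne_top

theorem stmt16 :
    IsSchur cuspχ ∧ cuspχ 0 = 0 ∧ Set.InjOn cuspχ uD ∧ MemDStar cuspχ ∧
      ∀ p : ℝ, 0 < p → MemSchattenD p cuspχ :=
  ⟨⟨cuspχ_diff, cuspχ_maps⟩, cuspχ_zero,
    cuspOm_inj.comp cuspχ₂_injOn fun _ hz => cuspχ₂_mem hz,
    memDStar_comp memDStar_id, fun _ hp => cusp_schatten hp⟩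

end
end
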